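/- arXiv:1911.10308 — 2 statements merged into one kernel-verified Lean document; each statement's English description precedes it below -/
import Mathlib

section
/- There exists an absolute constant C > 0 such that the following holds for every odd prime p. Let R be a finite set of points in 𝔽_p³ and S a finite set of planes in 𝔽_p³ with |R| ≤ |S| and |R| ≤ p². Let k be a positive integer such that no line in 𝔽_p³ contains more than k points of R. Then the number of incidences I(R,S) = |{(r,s) ∈ R × S : r ∈ s}| satisfies I(R,S) ≤ C (|R|^{1/2}|S| + k|S|). -/
open Finset

/-- The solution set in `𝔽_p³` of the plane with coefficient vector `s = ((a,b,c),d)`,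
namely `{(x,y,z) : a*x + b*y + c*z = d}`. -/
def planeSet {p : ℕ} (s : (ZMod p × ZMod p × ZMod p) × ZMod p) :
    Set (ZMod p × ZMod p × ZMod p) :=
  {v | s.1.1 * v.1 + s.1.2.1 * v.2.1 + s.1.2.2 * v.2.2 = s.2}

namespace Rud

open MvPolynomial

/-- Chain rule for a derivation applied to a polynomial expression. -/
lemma chain {F B : Type*} [Field F] [CommRing B] [Algebra F B] (D : Derivation F B B)
    (x : Fin 3 → B) (g : MvPolynomial (Fin 3) F) :
    D (aeval x g) = aeval x (pderiv 0 g) * D (x 0) + aeval x (pderiv 1 g) * D (x 1)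
      + aeval x (pderiv 2 g) * D (x 2) := by
  induction g using MvPolynomial.induction_on with
  | C a => simp
  | add p q hp hq => simp only [map_add, hp, hq]; ring
  | mul_X p i hp =>
    simp only [map_mul, aeval_X, Derivation.leibniz, hp, smul_eq_mul, map_add, pderiv_X]
    fin_cases i <;> simp <;> ring

/-- Coefficientwise extension of a derivation to polynomials. -/
noncomputable def coefDer {F A : Type*} [Field F] [CommRing A] [Algebra F A]
    (D : Derivation F A A) : Derivation F (Polynomial A) (Polynomial A) :=
  (PolynomialModule.equivPolynomialSelf (R := A)).toLinearMap.compDer D.mapCoeffs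

lemma coefDer_coeff {F A : Type*} [Field F] [CommRing A] [Algebra F A]
    (D : Derivation F A A) (q : Polynomial A) (j : ℕ) :
    (coefDer D q).coeff j = D (q.coeff j) := by
  rfl

lemma coefDer_C {F A : Type*} [Field F] [CommRing A] [Algebra F A]
    (D : Derivation F A A) (a : A) : coefDer D (Polynomial.C a) = Polynomial.C (D a) := by
  ext j
  rw [coefDer_coeff, Polynomial.coeff_C, Polynomial.coeff_C]
  split_ifs <;> simp

lemma coefDer_X {F A : Type*} [Field F] [CommRing A] [Algebra F A]
    (D : Derivation F A A) : coefDer D (Polynomial.X) = 0 := by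
  ext j
  rw [coefDer_coeff, Polynomial.coeff_X]
  split_ifs <;> simp

/-- The tangential derivation `f_z ∂_v - f_v ∂_z`. -/
noncomputable def Del {F : Type*} [Field F] (f : MvPolynomial (Fin 3) F) :
    Derivation F (MvPolynomial (Fin 3) F) (MvPolynomial (Fin 3) F) :=
  (pderiv 0 f) • pderiv 2 - (pderiv 2 f) • pderiv 0

lemma Del_apply {F : Type*} [Field F] (f g : MvPolynomial (Fin 3) F) :
    Del f g = pderiv 0 f * pderiv 2 g - pderiv 2 f * pderiv 0 g := by
  simp [Del]

/-- The second-order obstruction. -/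
noncomputable def GG {F : Type*} [Field F] (f : MvPolynomial (Fin 3) F) :
    MvPolynomial (Fin 3) F :=
  pderiv 0 f * Del f (pderiv 2 f) - pderiv 2 f * Del f (pderiv 0 f)

lemma Del_dvd {F : Type*} [Field F] (f g : MvPolynomial (Fin 3) F) (h : f ∣ g) :
    f ∣ Del f g := by
  obtain ⟨q, rfl⟩ := h
  have : Del f f = 0 := by rw [Del_apply]; ring
  rw [Derivation.leibniz, this]
  simp

/-- moved polynomial -/
noncomputable def Phi {F : Type*} [Field F] (f : MvPolynomial (Fin 3) F) :
    Polynomial (MvPolynomial (Fin 3) F) :=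
  aeval ![Polynomial.C (X 0) - Polynomial.X * Polynomial.C (pderiv 2 f), Polynomial.C (X 1),
    Polynomial.C (X 2) + Polynomial.X * Polynomial.C (pderiv 0 f)] f

lemma Phi_natDegree {F : Type*} [Field F] (f : MvPolynomial (Fin 3) F) :
    (Phi f).natDegree ≤ f.totalDegree := by
  have h := aeval_natDegree_le (m := f.totalDegree) (n := 1)
    (MvPolynomial.map (algebraMap F (MvPolynomial (Fin 3) F)) f)
    (by
      rw [totalDegree, totalDegree]
      exact Finset.sup_mono (support_map_subset _ _))
    ![Polynomial.C (X 0) - Polynomial.X * Polynomial.C (pderiv 2 f), Polynomial.C (X 1),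
    Polynomial.C (X 2) + Polynomial.X * Polynomial.C (pderiv 0 f)] (by
      intro i
      fin_cases i
      · simp only [Fin.zero_eta, Matrix.cons_val_zero]; compute_degree
      · simp
      · simp only [Fin.reduceFinMk, Matrix.cons_val]; compute_degree)
  rw [aeval_map_algebraMap] at h
  simpa [Phi] using h

lemma Phi_eval {F L : Type*} [Field F] [CommRing L] [Algebra F L] (f : MvPolynomial (Fin 3) F)
    (ψ : MvPolynomial (Fin 3) F →ₐ[F] L) (τ : L) :
    Polynomial.eval₂ (ψ : MvPolynomial (Fin 3) F →+* L) τ (Phi f) =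
      aeval ![ψ (X 0) - τ * ψ (pderiv 2 f), ψ (X 1), ψ (X 2) + τ * ψ (pderiv 0 f)] f := by
  have h := comp_aeval_apply (Polynomial.eval₂AlgHom ψ τ (fun a => Commute.all _ _))
    (f := ![Polynomial.C (X 0) - Polynomial.X * Polynomial.C (pderiv 2 f), Polynomial.C (X 1),
      Polynomial.C (X 2) + Polynomial.X * Polynomial.C (pderiv 0 f)]) f
  have e : (fun i => (Polynomial.eval₂AlgHom ψ τ (fun a => Commute.all _ _))
      ((![Polynomial.C (X 0) - Polynomial.X * Polynomial.C (pderiv 2 f), Polynomial.C (X 1),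
      Polynomial.C (X 2) + Polynomial.X * Polynomial.C (pderiv 0 f)] : Fin 3 → _) i)) =
      ![ψ (X 0) - τ * ψ (pderiv 2 f), ψ (X 1), ψ (X 2) + τ * ψ (pderiv 0 f)] := by
    funext i
    fin_cases i <;> simp [Polynomial.eval₂AlgHom_apply, Polynomial.eval₂_sub, Polynomial.eval₂_add,
      Polynomial.eval₂_mul] <;> ring
  rw [e] at h
  exact h

lemma Phi_coeff_zero {F : Type*} [Field F] (f : MvPolynomial (Fin 3) F) :
    (Phi f).coeff 0 = f := by
  have h := Phi_eval f (AlgHom.id F _) 0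
  have e : (![X 0, X 1, X 2] : Fin 3 → MvPolynomial (Fin 3) F) = X := by
    funext i; fin_cases i <;> rfl
  simp only [AlgHom.id_apply, zero_mul, sub_zero, add_zero, e, aeval_X_left_apply] at h
  rw [Polynomial.coeff_zero_eq_eval_zero]
  exact h

/-- If `f` divides the obstruction then `f` divides every coefficient of `Phi f`. -/
lemma Phi_dvd {F : Type*} [Field F] (p : ℕ) [Fact p.Prime] [CharP F p]
    (f : MvPolynomial (Fin 3) F) (hf : Prime f) (hz : ¬ f ∣ pderiv 0 f) (hG : f ∣ GG f)
    (hd : f.totalDegree < p) (j : ℕ) : f ∣ (Phi f).coeff j := by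
  by_cases hj : f.totalDegree < j
  · rw [Polynomial.coeff_eq_zero_of_natDegree_lt ((Phi_natDegree f).trans_lt hj)]
    exact dvd_zero _
  push Not at hj
  induction j with
  | zero => rw [Phi_coeff_zero]
  | succ j ih =>
    have ih := ih (by omega)
    set x : Fin 3 → Polynomial (MvPolynomial (Fin 3) F) :=
      ![Polynomial.C (X 0) - Polynomial.X * Polynomial.C (pderiv 2 f), Polynomial.C (X 1),
      Polynomial.C (X 2) + Polynomial.X * Polynomial.C (pderiv 0 f)] with hx
    have h1 := chain (coefDer (Del f)) x f
    have h2 := chain ((Polynomial.derivative' (R := MvPolynomial (Fin 3) F)).restrictScalars F) x f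
    have d0 : coefDer (Del f) (x 0) = Polynomial.C (Del f (X 0))
        - Polynomial.X * Polynomial.C (Del f (pderiv 2 f)) := by
      simp [hx, coefDer_C, coefDer_X]
    have d1 : coefDer (Del f) (x 1) = 0 := by
      simp [hx, coefDer_C, Del_apply]
    have d2 : coefDer (Del f) (x 2) = Polynomial.C (Del f (X 2))
        + Polynomial.X * Polynomial.C (Del f (pderiv 0 f)) := by
      simp [hx, coefDer_C, coefDer_X]
    have e0 : Del f (X 0) = - pderiv 2 f := by simp [Del_apply]
    have e2 : Del f (X 2) = pderiv 0 f := by simp [Del_apply]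
    rw [d0, d1, d2, e0, e2] at h1
    have t0 : Polynomial.derivative (x 0) = - Polynomial.C (pderiv 2 f) := by simp [hx]
    have t1 : Polynomial.derivative (x 1) = 0 := by simp [hx]
    have t2 : Polynomial.derivative (x 2) = Polynomial.C (pderiv 0 f) := by simp [hx]
    simp only [Derivation.restrictScalars_apply, Polynomial.derivative'_apply] at h2
    rw [t0, t1, t2] at h2
    have hPhi : Phi f = aeval x f := rfl
    rw [← hPhi] at h1 h2
    have key : Polynomial.C (pderiv 0 f) * coefDer (Del f) (Phi f) =
        (Polynomial.C (pderiv 0 f) + Polynomial.X * Polynomial.C (Del f (pderiv 0 f)))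
          * Polynomial.derivative (Phi f)
        - Polynomial.X * (aeval x (pderiv 0 f) * Polynomial.C (GG f)) := by
      rw [h1, h2, GG]
      simp only [map_sub, map_mul, map_neg]
      ring
    have kj := congrArg (fun q => Polynomial.coeff q j) key
    have c3 : f ∣ (Polynomial.X * (aeval x (pderiv 0 f) * Polynomial.C (GG f))).coeff j := by
      rw [← mul_assoc, Polynomial.coeff_mul_C]
      exact hG.mul_left _
    have c2 : f ∣ (Polynomial.X * Polynomial.C (Del f (pderiv 0 f))
          * Polynomial.derivative (Phi f)).coeff j := by
      have : Polynomial.X * Polynomial.C (Del f (pderiv 0 f)) * Polynomial.derivative (Phi f)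
        = Polynomial.C (Del f (pderiv 0 f)) * (Polynomial.X * Polynomial.derivative (Phi f)) := by
        ring
      rw [this, Polynomial.coeff_C_mul]
      apply Dvd.dvd.mul_left
      cases j with
      | zero => simp
      | succ i =>
        rw [Polynomial.coeff_X_mul, Polynomial.coeff_derivative]
        exact ih.mul_right _
    simp only [Polynomial.coeff_C_mul, coefDer_coeff, Polynomial.coeff_sub, add_mul,
      Polynomial.coeff_add, Polynomial.coeff_derivative] at kj
    have c1 : f ∣ pderiv 0 f * Del f ((Phi f).coeff j) := (Del_dvd _ _ ih).mul_left _
    have c4 : f ∣ pderiv 0 f * ((Phi f).coeff (j + 1) * ((j : MvPolynomial (Fin 3) F) + 1)) := by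
      rw [kj, dvd_sub_left c3, dvd_add_left c2] at c1
      exact c1
    have c5 := (hf.dvd_or_dvd c4).resolve_left hz
    refine (hf.dvd_or_dvd c5).resolve_right ?_
    intro h
    apply hf.not_isUnit
    refine isUnit_of_dvd_unit h ?_
    have : ((j : MvPolynomial (Fin 3) F) + 1) = C ((j + 1 : ℕ) : F) := by simp
    rw [this]
    refine IsUnit.map _ (IsUnit.mk0 _ ?_)
    rw [Ne, CharP.cast_eq_zero_iff F p]
    intro h
    have := Nat.le_of_dvd (by omega) h
    omega


lemma exists_val {A L : Type*} [CommRing A] [Field L] (ψ : A →+* L) (q : Ideal A) [q.IsPrime]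
    (h : ∀ x, x ∉ q → ψ x ≠ 0) : ∃ O : ValuationSubring L,
    (∀ x ∈ q, O.valuation (ψ x) < 1) ∧ ∀ x, x ∉ q → O.valuation (ψ x) = 1 := by
  let φ : Localization.AtPrime q →+* L :=
    IsLocalization.lift (M := q.primeCompl) (g := ψ) (fun y => IsUnit.mk0 _ (h y y.2))
  have hφ : ∀ x, φ (algebraMap A _ x) = ψ x := fun x => IsLocalization.lift_eq _ _
  obtain ⟨O, hO, hl⟩ := IsLocalRing.exists_factor_valuationRing φ
  have key : ∀ x : A, O.valuation (ψ x) = 1 ↔ x ∉ q := by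
    intro x
    have h1 := O.valuation_eq_one_iff ((φ.codRestrict O.toSubring hO) (algebraMap A _ x))
    have h2 : (((φ.codRestrict O.toSubring hO) (algebraMap A _ x) : O) : L) = ψ x := hφ x
    rw [h2] at h1
    rw [← h1, isUnit_map_iff, IsLocalization.AtPrime.isUnit_to_map_iff (Localization.AtPrime q) q]
    rfl
  refine ⟨O, fun x hx => ?_, fun x hx => (key x).2 hx⟩
  have h3 : O.valuation (ψ x) ≤ 1 := by
    rw [ValuationSubring.valuation_le_one_iff, ← hφ]
    exact hO _
  exact lt_of_le_of_ne h3 (fun h4 => (key x).1 h4 hx)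

lemma val_root_aux {L Γ E : Type*} [Field L] [LinearOrderedCommGroupWithZero Γ] [CommRing E]
    (v : Valuation L Γ) (κ : E →+* L) (hκ : ∀ a, a ≠ 0 → v (κ a) = 1) (x : L) (hx : v x < 1)
    (n : ℕ) : ∀ q : Polynomial E, q.natDegree ≤ n → q ≠ 0 → q.eval₂ κ x = 0 → x = 0 := by
  have hκ1 : ∀ a, v (κ a) ≤ 1 := by
    intro a
    by_cases ha : a = 0
    · simp [ha]
    · exact (hκ a ha).le
  have hle : ∀ q : Polynomial E, v (q.eval₂ κ x) ≤ 1 := by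
    intro q
    rw [Polynomial.eval₂_eq_sum, Polynomial.sum]
    apply Valuation.map_sum_le
    intro i _
    rw [map_mul, map_pow]
    exact mul_le_one' (hκ1 _) (pow_le_one' hx.le _)
  induction n with
  | zero =>
    intro q hq hq0 he
    rw [Polynomial.eq_C_of_natDegree_le_zero hq] at he hq0
    rw [Polynomial.eval₂_C] at he
    have := hκ (q.coeff 0) (by simpa using hq0)
    rw [he] at this
    simp at this
  | succ n ih =>
    intro q hq hq0 he
    have hdec := Polynomial.divX_mul_X_add q
    by_cases h0 : q.coeff 0 = 0
    · rw [h0, map_zero, add_zero] at hdec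
      have hd0 : q.divX ≠ 0 := by
        intro h; rw [h, zero_mul] at hdec; exact hq0 hdec.symm
      rw [← hdec, Polynomial.eval₂_mul_X] at he
      rcases mul_eq_zero.1 he with h | h
      · exact ih _ (by rw [Polynomial.natDegree_divX_eq_natDegree_tsub_one]; omega) hd0 h
      · exact h
    · exfalso
      rw [← hdec, Polynomial.eval₂_add, Polynomial.eval₂_mul_X, Polynomial.eval₂_C] at he
      have h1 := hκ _ h0
      rw [eq_neg_of_add_eq_zero_right he, Valuation.map_neg, map_mul] at h1
      have : v (Polynomial.eval₂ κ x q.divX) * v x < 1 :=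
        lt_of_le_of_lt (mul_le_of_le_one_left' (hle _)) hx
      exact this.ne h1

lemma val_root {L Γ E : Type*} [Field L] [LinearOrderedCommGroupWithZero Γ] [CommRing E]
    (v : Valuation L Γ) (κ : E →+* L) (hκ : ∀ a, a ≠ 0 → v (κ a) = 1) (x : L)
    (q : Polynomial E) (hq : q ≠ 0) (he : q.eval₂ κ x = 0) : x = 0 ∨ v x = 1 := by
  rcases lt_trichotomy (v x) 1 with h | h | h
  · exact Or.inl (val_root_aux v κ hκ x h _ q le_rfl hq he)
  · exact Or.inr h
  · exfalso
    have hx0 : x ≠ 0 := by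
      rintro rfl; simp at h
    have h1 : v x⁻¹ < 1 := by
      rw [map_inv₀]; exact inv_lt_one_of_one_lt₀ h
    let u : Invertible x := invertibleOfNonzero hx0
    have h2 : q.reverse.eval₂ κ x⁻¹ = 0 := by
      have := (Polynomial.eval₂_reverse_eq_zero_iff κ x q).2 he
      simpa using this
    have := val_root_aux v κ hκ x⁻¹ h1 _ q.reverse le_rfl (by simpa using hq) h2
    exact hx0 (inv_eq_zero.1 this)

lemma vsub_dvd {F : Type*} [Field F] (f : MvPolynomial (Fin 3) F) (c : F)
    (h : aeval ![X 0, X 1, C c] f = (0 : MvPolynomial (Fin 3) F)) : (X 2 - C c) ∣ f := by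
  rw [← Ideal.mem_span_singleton, ← Ideal.Quotient.eq_zero_iff_mem]
  have h1 := congrArg (Ideal.Quotient.mkₐ F (Ideal.span {(X 2 - C c : MvPolynomial (Fin 3) F)})) h
  rw [comp_aeval_apply, map_zero] at h1
  have h2 := comp_aeval_apply (f := X)
    (Ideal.Quotient.mkₐ F (Ideal.span {(X 2 - C c : MvPolynomial (Fin 3) F)})) f
  rw [aeval_X_left_apply] at h2
  rw [← Ideal.Quotient.mkₐ_eq_mk F, h2, ← h1]
  congr 2
  funext i
  fin_cases i
  · rfl
  · rfl
  · simp only [Fin.reduceFinMk, Matrix.cons_val, Ideal.Quotient.mkₐ_eq_mk]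
    rw [Ideal.Quotient.mk_eq_mk_iff_sub_mem]
    exact Ideal.mem_span_singleton_self _

lemma vsub_ne {F : Type*} [Field F] (f : MvPolynomial (Fin 3) F) (hf : Prime f)
    (hz : pderiv 0 f ≠ 0) (c : F) : aeval ![X 0, X 1, C c] f ≠ (0 : MvPolynomial (Fin 3) F) := by
  intro h
  obtain ⟨g, hg⟩ := vsub_dvd f c h
  rcases hf.irreducible.isUnit_or_isUnit hg with h1 | h1
  · have := h1.map (eval (![0, 0, c] : Fin 3 → F))
    simp at this
  · rw [MvPolynomial.isUnit_iff_eq_C_of_isReduced] at h1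
    obtain ⟨a, _, rfl⟩ := h1
    apply hz
    rw [hg]
    simp [pderiv_X]


/-- Main algebraic step: a ruled irreducible surface containing a transversal line is a cone over
that line in each slice. -/
lemma euler_aux {F L : Type*} [Field F] [Field L] [Algebra F L]
    (f : MvPolynomial (Fin 3) F) (hf : Prime f) (hz : ¬ f ∣ pderiv 0 f)
    (hPhi : ∀ j, f ∣ (Phi f).coeff j) (b g e : F)
    (hs : aeval ![Polynomial.C g * Polynomial.X + Polynomial.C e, Polynomial.X, Polynomial.C b] f
      = (0 : Polynomial F))
    (ψ : MvPolynomial (Fin 3) F →ₐ[F] L) (hψ : ∀ x, ψ x = 0 ↔ f ∣ x) :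
    f ∣ (X 2 - C b) * pderiv 2 f + (X 0 - C g * X 1 - C e) * pderiv 0 f := by
  set σ : MvPolynomial (Fin 3) F →ₐ[F] Polynomial F :=
    aeval ![Polynomial.C g * Polynomial.X + Polynomial.C e, Polynomial.X, Polynomial.C b] with hσ
  have hz0 : pderiv 0 f ≠ 0 := fun h => hz (h ▸ dvd_zero _)
  haveI hq : (RingHom.ker σ).IsPrime := RingHom.ker_isPrime _
  obtain ⟨O, hO1, hO2⟩ := exists_val (ψ : MvPolynomial (Fin 3) F →+* L) (RingHom.ker σ) (by
    intro x hx h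
    apply hx
    obtain ⟨y, rfl⟩ := (hψ x).1 h
    rw [RingHom.mem_ker, map_mul, hs, zero_mul])
  simp only [RingHom.coe_coe] at hO1 hO2
  set v := O.valuation with hv
  set κ : Polynomial F →ₐ[F] L := ψ.comp (Polynomial.aeval (X 1)) with hκdef
  have hκ : ∀ a, a ≠ 0 → v ((κ : Polynomial F →+* L) a) = 1 := by
    intro a ha
    apply hO2
    intro h
    apply ha
    rw [RingHom.mem_ker] at h
    have : σ.comp (Polynomial.aeval (X 1)) = AlgHom.id F _ := by
      ext; simp [hσ]
    have h2 := DFunLike.congr_fun this a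
    simp only [AlgHom.comp_apply, AlgHom.id_apply] at h2
    rw [← h2]; exact h
  have hPhi0 : ∀ τ : L, Polynomial.eval₂ (ψ : MvPolynomial (Fin 3) F →+* L) τ (Phi f) = 0 := by
    intro τ
    rw [Polynomial.eval₂_eq_sum, Polynomial.sum]
    apply Finset.sum_eq_zero
    intro j _
    have : ψ ((Phi f).coeff j) = 0 := (hψ _).2 (hPhi j)
    simp [this]
  have hfz : ψ (pderiv 0 f) ≠ 0 := fun h => hz ((hψ _).1 h)
  set lam := ψ (pderiv 2 f) / ψ (pderiv 0 f) with hlam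
  set V := ψ (X 2 - C b) with hV
  set Z := ψ (X 0 - C g * X 1 - C e) with hZ
  -- the algebraic elements
  have halg : ∀ c : F, (Z - (algebraMap F L c - V) * lam = 0 ∨
      v (Z - (algebraMap F L c - V) * lam) = 1) := by
    intro c
    let w : MvPolynomial (Fin 3) F →ₐ[F] Polynomial (Polynomial F) :=
      aeval ![Polynomial.X + Polynomial.C (Polynomial.C g * Polynomial.X + Polynomial.C e),
        Polynomial.C Polynomial.X, Polynomial.C (Polynomial.C (b + c))]
    apply val_root v (κ : Polynomial F →+* L) hκ _ (w f)
    · intro h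
      apply vsub_ne f hf hz0 (b + c)
      have h1 := congrArg (Polynomial.eval₂AlgHom
        (Polynomial.aeval (X 1) : Polynomial F →ₐ[F] MvPolynomial (Fin 3) F)
        (X 0 - C g * X 1 - C e) (fun a => Commute.all _ _)) h
      rw [comp_aeval_apply, map_zero] at h1
      rw [← h1]
      congr 2
      funext i
      fin_cases i
      · simp [Polynomial.eval₂AlgHom_apply, Polynomial.eval₂_add, Polynomial.eval₂_mul,
          MvPolynomial.algebraMap_eq]
      · simp [Polynomial.eval₂AlgHom_apply]
      · simp [Polynomial.eval₂AlgHom_apply, MvPolynomial.algebraMap_eq]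
    · have h1 := comp_aeval_apply (Polynomial.eval₂AlgHom κ
        (Z - (algebraMap F L c - V) * lam) (fun a => Commute.all _ _))
        (f := ![Polynomial.X + Polynomial.C (Polynomial.C g * Polynomial.X + Polynomial.C e),
        Polynomial.C Polynomial.X, Polynomial.C (Polynomial.C (b + c))]) f
      have h2 := Phi_eval f ψ ((algebraMap F L c - V) / ψ (pderiv 0 f))
      rw [hPhi0] at h2
      refine Eq.trans ?_ (h1.trans (Eq.trans ?_ h2.symm))
      · rfl
      · congr 2
        have hgC : ∀ a : F, ψ (C a) = algebraMap F L a := fun a => ψ.commutes a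
        funext i
        fin_cases i
        · simp [Polynomial.eval₂AlgHom_apply, Polynomial.eval₂_add, Polynomial.eval₂_mul, hκdef,
            hZ, hgC, hlam, MvPolynomial.algebraMap_eq]
          ring
        · simp [Polynomial.eval₂AlgHom_apply, hκdef]
        · simp [Polynomial.eval₂AlgHom_apply, hκdef, hV, hgC, MvPolynomial.algebraMap_eq]
          field_simp
          ring
  have hVv : v V < 1 := hO1 _ (by simp [RingHom.mem_ker, hσ, MvPolynomial.algebraMap_eq])
  have hZv : v Z < 1 := hO1 _ (by simp [RingHom.mem_ker, hσ, MvPolynomial.algebraMap_eq])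
  have h0 := halg 0
  have h1 := halg 1
  simp only [map_zero, map_one, zero_sub, neg_mul, sub_neg_eq_add] at h0 h1
  have h0' : v (Z + V * lam) ≤ 1 := by
    rcases h0 with h | h
    · simp [h]
    · exact h.le
  have h1' : v (Z - (1 - V) * lam) ≤ 1 := by
    rcases h1 with h | h
    · simp [h]
    · exact h.le
  have hl : v lam ≤ 1 := by
    have : lam = (Z + V * lam) - (Z - (1 - V) * lam) := by ring
    rw [this]
    exact (Valuation.map_sub _ _ _).trans (max_le h0' h1')
  have hmu : v (Z + V * lam) < 1 := by
    apply Valuation.map_add_lt _ hZv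
    rw [map_mul]
    exact lt_of_le_of_lt (mul_le_of_le_one_right' hl) hVv
  have hmu0 : Z + V * lam = 0 := h0.resolve_right hmu.ne
  rw [← hψ, map_add, map_mul, map_mul, ← hV, ← hZ]
  have : V * ψ (pderiv 2 f) + Z * ψ (pderiv 0 f) = (Z + V * lam) * ψ (pderiv 0 f) := by
    rw [hlam]; field_simp; ring
  rw [this, hmu0, zero_mul]

lemma euler {F : Type*} [Field F] (p : ℕ) [Fact p.Prime] [CharP F p]
    (f : MvPolynomial (Fin 3) F) (hf : Prime f) (hz : ¬ f ∣ pderiv 0 f) (hG : f ∣ GG f)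
    (hd : f.totalDegree < p) (b g e : F)
    (hs : aeval ![Polynomial.C g * Polynomial.X + Polynomial.C e, Polynomial.X, Polynomial.C b] f
      = (0 : Polynomial F)) :
    f ∣ (X 2 - C b) * pderiv 2 f + (X 0 - C g * X 1 - C e) * pderiv 0 f := by
  haveI : (Ideal.span {f}).IsPrime := (Ideal.span_singleton_prime hf.ne_zero).2 hf
  let ψ : MvPolynomial (Fin 3) F →ₐ[F] FractionRing (MvPolynomial (Fin 3) F ⧸ Ideal.span {f}) :=
    (IsScalarTower.toAlgHom F (MvPolynomial (Fin 3) F ⧸ Ideal.span {f}) _).comp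
      (Ideal.Quotient.mkₐ F _)
  refine euler_aux f hf hz (Phi_dvd p f hf hz hG hd) b g e hs ψ ?_
  intro x
  have : ψ x = algebraMap (MvPolynomial (Fin 3) F ⧸ Ideal.span {f}) _ (Ideal.Quotient.mk _ x) := rfl
  rw [this, FaithfulSMul.algebraMap_eq_zero_iff, Ideal.Quotient.eq_zero_iff_mem,
    Ideal.mem_span_singleton]
lemma totalDegree_aeval_le {F σ τ : Type*} [Field F] [Fintype σ] (f : MvPolynomial σ F)
    (x : σ → MvPolynomial τ F) (hx : ∀ i, (x i).totalDegree ≤ 1) :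
    (aeval x f).totalDegree ≤ f.totalDegree := by
  rw [aeval_def, eval₂_eq']
  apply totalDegree_finsetSum_le
  intro d hd
  refine (totalDegree_mul _ _).trans ?_
  have h1 : (algebraMap F (MvPolynomial τ F) (coeff d f)).totalDegree = 0 := by
    rw [MvPolynomial.algebraMap_eq]; exact totalDegree_C _
  rw [h1, zero_add]
  refine (totalDegree_finsetProd _ _).trans ?_
  refine le_trans ?_ (le_totalDegree hd)
  rw [Finsupp.sum_fintype _ _ (by simp)]
  apply Finset.sum_le_sum
  intro i _
  refine (totalDegree_pow _ _).trans ?_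
  simpa using Nat.mul_le_mul_left (d i) (hx i)

lemma usub_dvd {F : Type*} [Field F] (f : MvPolynomial (Fin 3) F) (j : Fin 3) (c : F)
    (h : aeval (fun i => if i = j then C c else X i) f = (0 : MvPolynomial (Fin 3) F)) :
    (X j - C c) ∣ f := by
  rw [← Ideal.mem_span_singleton, ← Ideal.Quotient.eq_zero_iff_mem]
  have h1 := congrArg (Ideal.Quotient.mkₐ F (Ideal.span {(X j - C c : MvPolynomial (Fin 3) F)})) h
  rw [comp_aeval_apply, map_zero] at h1
  have h2 := comp_aeval_apply (f := X)
    (Ideal.Quotient.mkₐ F (Ideal.span {(X j - C c : MvPolynomial (Fin 3) F)})) f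
  rw [aeval_X_left_apply] at h2
  rw [← Ideal.Quotient.mkₐ_eq_mk F, h2, ← h1]
  congr 2
  funext i
  by_cases hi : i = j
  · subst hi
    simp only [if_true, Ideal.Quotient.mkₐ_eq_mk]
    rw [Ideal.Quotient.mk_eq_mk_iff_sub_mem]
    exact Ideal.mem_span_singleton_self _
  · simp [hi]

/-- In the ruled case, every contained line of the first family meets every contained line
of the second family. -/
lemma ruled_meet {F : Type*} [Field F] (p : ℕ) [Fact p.Prime] [CharP F p]
    (f : MvPolynomial (Fin 3) F) (hf : Prime f) (hz : ¬ f ∣ pderiv 0 f) (hG : f ∣ GG f)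
    (hd : f.totalDegree < p) (b g e b' g' e' : F)
    (hr : aeval ![Polynomial.C g * Polynomial.X + Polynomial.C e, Polynomial.C b, Polynomial.X] f
      = (0 : Polynomial F))
    (hs : aeval ![Polynomial.C g' * Polynomial.X + Polynomial.C e', Polynomial.X,
      Polynomial.C b'] f = (0 : Polynomial F)) :
    g * b' + e = g' * b + e' := by
  have hE := euler p f hf hz hG hd b' g' e' hs
  let x : Fin 3 → MvPolynomial (Fin 3) F := ![C g * X 2 + C e + X 0, C b, X 2]
  obtain ⟨G, hGdef⟩ : ∃ G, G = aeval x f := ⟨_, rfl⟩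
  have hG0 : G ≠ 0 := by
    intro h0
    rw [hGdef] at h0
    have h1 := congrArg (aeval (![X 0 - (C g * X 2 + C e), X 1, X 2] :
      Fin 3 → MvPolynomial (Fin 3) F)) h0
    rw [comp_aeval_apply, map_zero] at h1
    have h2 : (X 1 - C b) ∣ f := by
      apply usub_dvd
      rw [← h1]
      congr 2
      funext i
      fin_cases i <;> simp [x, MvPolynomial.algebraMap_eq]
    obtain ⟨q, hq⟩ := h2
    rcases hf.irreducible.isUnit_or_isUnit hq with h1 | h1
    · have := h1.map (eval (![0, b, 0] : Fin 3 → F))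
      simp at this
    · rw [MvPolynomial.isUnit_iff_eq_C_of_isReduced] at h1
      obtain ⟨a, _, rfl⟩ := h1
      apply hz
      have : pderiv 0 f = 0 := by rw [hq]; simp [pderiv_X]
      rw [this]; exact dvd_zero _
  have hXG : (X 0 : MvPolynomial (Fin 3) F) ∣ G := by
    have h2 : (X 0 - C 0) ∣ G := by
      apply usub_dvd
      rw [hGdef, comp_aeval_apply]
      have h3 := congrArg (Polynomial.aeval (X 2 : MvPolynomial (Fin 3) F)) hr
      rw [comp_aeval_apply, map_zero] at h3
      rw [← h3]
      congr 2
      funext i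
      fin_cases i <;> simp [x, MvPolynomial.algebraMap_eq]
    simpa using h2
  have hX : Prime (X 0 : MvPolynomial (Fin 3) F) := X_prime
  obtain ⟨q, hq, hqX⟩ :=
    (FiniteMultiplicity.of_prime_left hX hG0).exists_eq_pow_mul_and_not_dvd
  generalize multiplicity (X 0) G = a at hq
  have ha0 : a ≠ 0 := by
    intro h
    rw [h, pow_zero, one_mul] at hq
    exact hqX (hq ▸ hXG)
  have hap : a < p := by
    have hq0 : q ≠ 0 := by rintro rfl; simp at hqX
    have h1 : G.totalDegree ≤ f.totalDegree := by
      rw [hGdef]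
      apply totalDegree_aeval_le
      intro i
      fin_cases i
      · simp only [x, Fin.zero_eta, Matrix.cons_val_zero]
        refine (totalDegree_add _ _).trans (max_le ((totalDegree_add _ _).trans (max_le
          ((totalDegree_mul _ _).trans ?_) ?_)) ?_) <;> simp
      · simp [x]
      · simp [x]
    rw [hq, totalDegree_mul_of_isDomain (pow_ne_zero _ hX.ne_zero) hq0, totalDegree_X_pow] at h1
    omega
  have hp0 : pderiv 0 G = aeval x (pderiv 0 f) := by
    rw [hGdef, chain]; simp [x, pderiv_X]
  have hp2 : pderiv 2 G = aeval x (pderiv 2 f) + C g * aeval x (pderiv 0 f) := by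
    rw [hGdef, chain]; simp [x, pderiv_X]; ring
  have hdiv : G ∣ (X 2 - C b') * pderiv 2 G +
      (C (g * b' + e - (g' * b + e')) + X 0) * pderiv 0 G := by
    have h1 := map_dvd (aeval x) hE
    rw [← hGdef] at h1
    convert h1 using 1
    simp only [map_add, map_mul, map_sub, aeval_X, aeval_C, hp0, hp2, MvPolynomial.algebraMap_eq, x,
      Matrix.cons_val_zero, Matrix.cons_val_one, Matrix.cons_val]
    ring
  obtain ⟨n, rfl⟩ : ∃ n, a = n + 1 := ⟨a - 1, by omega⟩
  have hG1 : pderiv 0 G = X 0 ^ n * (C ((n + 1 : ℕ) : F) * q + X 0 * pderiv 0 q) := by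
    rw [hq, Derivation.leibniz, Derivation.leibniz_pow]
    simp [pderiv_X]; ring
  have hG2 : pderiv 2 G = X 0 ^ n * (X 0 * pderiv 2 q) := by
    rw [hq, Derivation.leibniz, Derivation.leibniz_pow]
    simp [pderiv_X]; ring
  obtain ⟨c, hc⟩ := hdiv
  rw [hG1, hG2, hq] at hc
  by_contra hne
  have hc' : X 0 ^ n * (C (g * b' + e - (g' * b + e')) * C ((n + 1 : ℕ) : F) * q) =
      X 0 ^ n * (X 0 * (q * c - (X 2 - C b') * pderiv 2 q -
       C (g * b' + e - (g' * b + e')) * pderiv 0 q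
       - C ((n + 1 : ℕ) : F) * q - X 0 * pderiv 0 q)) := by
    linear_combination hc
  have hc2 := mul_left_cancel₀ (pow_ne_zero n hX.ne_zero) hc'
  apply hqX
  have hk : (g * b' + e - (g' * b + e')) * ((n + 1 : ℕ) : F) ≠ 0 := by
    refine mul_ne_zero (sub_ne_zero.2 hne) ?_
    rw [Ne, CharP.cast_eq_zero_iff F p]
    exact Nat.not_dvd_of_pos_of_lt (by omega) hap
  have hu : IsUnit (C ((g * b' + e - (g' * b + e')) * ((n + 1 : ℕ) : F)) :
      MvPolynomial (Fin 3) F) := (IsUnit.mk0 _ hk).map C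
  rw [← C_mul] at hc2
  exact (hu.dvd_mul_left).1 ⟨_, hc2⟩

/-- The line of the first family is contained in the zero set. -/
def onR {F : Type*} [Field F] (f : MvPolynomial (Fin 3) F) (r : F × F × F) : Prop :=
  aeval ![Polynomial.C r.2.1 * Polynomial.X + Polynomial.C r.2.2, Polynomial.C r.1,
    Polynomial.X] f = (0 : Polynomial F)

/-- The line of the second family is contained in the zero set. -/
def onS {F : Type*} [Field F] (f : MvPolynomial (Fin 3) F) (s : F × F × F) : Prop :=
  aeval ![Polynomial.C s.2.1 * Polynomial.X + Polynomial.C s.2.2, Polynomial.X,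
    Polynomial.C s.1] f = (0 : Polynomial F)

/-- Incidence. -/
def inc {F : Type*} [Field F] (r s : F × F × F) : Prop :=
  r.2.1 * s.1 + r.2.2 = s.2.1 * r.1 + s.2.2

lemma onR_GG {F : Type*} [Field F] (f : MvPolynomial (Fin 3) F) (r : F × F × F) (h : onR f r) :
    onR (GG f) r := by
  unfold onR at *
  set x : Fin 3 → Polynomial F := ![Polynomial.C r.2.1 * Polynomial.X + Polynomial.C r.2.2,
    Polynomial.C r.1, Polynomial.X] with hx
  have ch : ∀ g : MvPolynomial (Fin 3) F, Polynomial.derivative (aeval x g) =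
      aeval x (pderiv 0 g) * Polynomial.C r.2.1 + aeval x (pderiv 2 g) := by
    intro g
    have := chain (Polynomial.derivative' (R := F)) x g
    simp [hx] at this
    simpa [hx] using this
  have h1 := ch f
  rw [h, Polynomial.derivative_zero] at h1
  have h2 : aeval x (pderiv 2 f) = - (Polynomial.C r.2.1 * aeval x (pderiv 0 f)) := by
    linear_combination -h1
  have hDel : ∀ g, aeval x (Del f g) =
      aeval x (pderiv 0 f) * Polynomial.derivative (aeval x g) := by
    intro g
    rw [Del_apply, map_sub, map_mul, map_mul, h2, ch]
    ring
  rw [GG, map_sub, map_mul, map_mul, hDel, hDel, h2]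
  simp
  ring

lemma totalDegree_pderiv_le {F : Type*} [Field F] {σ : Type*} (i : σ) (f : MvPolynomial σ F) :
    (pderiv i f).totalDegree ≤ f.totalDegree - 1 := by
  classical
  conv_lhs => rw [f.as_sum, map_sum]
  apply totalDegree_finsetSum_le
  intro d hd
  rw [pderiv_monomial]
  by_cases h0 : d i = 0
  · simp [h0]
  refine (totalDegree_monomial_le _ _).trans ?_
  have h1 : Finsupp.degree d ≤ f.totalDegree := le_totalDegree hd
  have h2 : (d - Finsupp.single i 1) + Finsupp.single i 1 = d := by
    apply tsub_add_cancel_of_le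
    rw [Finsupp.single_le_iff]; omega
  have h3 := congrArg Finsupp.degree h2
  rw [map_add, Finsupp.degree_single] at h3
  change Finsupp.degree (d - Finsupp.single i 1) ≤ _
  omega

lemma totalDegree_GG {F : Type*} [Field F] (f : MvPolynomial (Fin 3) F) :
    (GG f).totalDegree ≤ 3 * f.totalDegree := by
  have h0 := (totalDegree_pderiv_le 0 f).trans (Nat.sub_le _ 1)
  have h2 := (totalDegree_pderiv_le 2 f).trans (Nat.sub_le _ 1)
  have hD : ∀ g : MvPolynomial (Fin 3) F, (Del f g).totalDegree ≤ f.totalDegree + g.totalDegree := by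
    intro g
    have h0' := (totalDegree_pderiv_le 0 g).trans (Nat.sub_le _ 1)
    have h2' := (totalDegree_pderiv_le 2 g).trans (Nat.sub_le _ 1)
    rw [Del_apply]
    refine (totalDegree_sub _ _).trans (max_le ?_ ?_) <;>
    refine (totalDegree_mul _ _).trans ?_ <;> omega
  rw [GG]
  have a1 := hD (pderiv 0 f)
  have a2 := hD (pderiv 2 f)
  refine (totalDegree_sub _ _).trans (max_le ?_ ?_) <;>
  refine (totalDegree_mul _ _).trans ?_ <;> omega

lemma totalDegree_det_le {F : Type*} [Field F] {σ : Type*} (N e : ℕ)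
    (M : Matrix (Fin N) (Fin N) (MvPolynomial σ F)) (h : ∀ i j, (M i j).totalDegree ≤ e) :
    M.det.totalDegree ≤ N * e := by
  rw [Matrix.det_apply']
  apply totalDegree_finsetSum_le
  intro π _
  have h1 : (((Equiv.Perm.sign π : ℤ) : MvPolynomial σ F)).totalDegree = 0 := by
    have : (((Equiv.Perm.sign π : ℤ) : MvPolynomial σ F)) = C ((Equiv.Perm.sign π : ℤ) : F) := by
      simp
    rw [this, totalDegree_C]
  refine (totalDegree_mul _ _).trans ?_
  rw [h1, zero_add]
  refine (totalDegree_finsetProd _ _).trans ?_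
  refine (Finset.sum_le_sum (fun i _ => h (π i) i)).trans ?_
  simp

lemma aeval_finSucc {F B : Type*} [Field F] [CommRing B] [Algebra F B] {n : ℕ}
    (x : Fin (n + 1) → B) (f : MvPolynomial (Fin (n + 1)) F) :
    aeval x f = Polynomial.eval₂ ((aeval (fun i => x (Fin.succ i)) : MvPolynomial (Fin n) F →ₐ[F] B)
      : MvPolynomial (Fin n) F →+* B) (x 0) (finSuccEquiv F n f) := by
  induction f using MvPolynomial.induction_on with
  | C a => simp [finSuccEquiv_apply]
  | add p q hp hq => simp only [map_add, hp, hq, Polynomial.eval₂_add]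
  | mul_X p i hp =>
    rw [map_mul, map_mul, hp, Polynomial.eval₂_mul, aeval_X]
    congr 1
    refine Fin.cases ?_ (fun j => ?_) i
    · rw [finSuccEquiv_X_zero, Polynomial.eval₂_X]
    · rw [finSuccEquiv_X_succ, Polynomial.eval₂_C]; simp

lemma eliminate {F : Type*} [Field F] (f G : MvPolynomial (Fin 3) F) (hf : Irreducible f)
    (hd : (finSuccEquiv F 2 f).natDegree = 0 ∨ ¬ f ∣ G) (hG : G.totalDegree ≤ 3 * f.totalDegree) :
    ∃ H : MvPolynomial (Fin 2) F, H ≠ 0 ∧ H.totalDegree ≤ 12 * f.totalDegree ^ 2 ∧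
      ∀ x : Fin 3 → Polynomial F, aeval x f = 0 → aeval x G = 0 →
        aeval (fun i => x (Fin.succ i)) H = 0 := by
  by_cases h0 : (finSuccEquiv F 2 f).natDegree = 0
  · obtain ⟨H, hH⟩ := Polynomial.natDegree_eq_zero.1 h0
    refine ⟨H, ?_, ?_, ?_⟩
    · rintro rfl
      rw [Polynomial.C_0] at hH
      exact hf.ne_zero ((map_eq_zero_iff _ (finSuccEquiv F 2).injective).1 hH.symm)
    · have h1 : H = (finSuccEquiv F 2 f).coeff 0 := by rw [← hH, Polynomial.coeff_C_zero]
      by_cases hH0 : H = 0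
      · simp [hH0]
      have := totalDegree_coeff_finSuccEquiv_add_le f 0 (h1 ▸ hH0)
      rw [← h1] at this
      nlinarith
    · intro x hx _
      rw [aeval_finSucc, ← hH, Polynomial.eval₂_C] at hx
      exact hx
  · have hfG := hd.resolve_left h0
    set f' := finSuccEquiv F 2 f with hf'
    set G' := finSuccEquiv F 2 G with hG'
    have hirr : Irreducible f' := (MulEquiv.irreducible_iff (finSuccEquiv F 2)).2 hf
    have hprim : f'.IsPrimitive := hirr.isPrimitive h0
    have hndvd : ¬ f' ∣ G' := by
      intro h; exact hfG ((map_dvd_iff (finSuccEquiv F 2)).1 h)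
    let K := FractionRing (MvPolynomial (Fin 2) F)
    letI : NormalizedGCDMonoid (MvPolynomial (Fin 2) F) :=
      Classical.choice (inferInstance : Nonempty (NormalizedGCDMonoid (MvPolynomial (Fin 2) F)))
    have hirrK := (hprim.irreducible_iff_irreducible_map_fraction_map (K := K)).1 hirr
    have hndvdK := mt (hprim.dvd_iff_fraction_map_dvd_fraction_map K (q := G')).2 hndvd
    have hcop := hirrK.coprime_iff_not_dvd.2 hndvdK
    have hres := Polynomial.resultant_ne_zero _ _ hcop
    have hinj := IsFractionRing.injective (MvPolynomial (Fin 2) F) K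
    rw [Polynomial.natDegree_map_eq_of_injective hinj, Polynomial.natDegree_map_eq_of_injective hinj,
      Polynomial.resultant_map_map] at hres
    have hdf : f'.natDegree ≤ f.totalDegree := by
      rw [hf', natDegree_finSuccEquiv]; exact degreeOf_le_totalDegree _ _
    have hdG : G'.natDegree ≤ 3 * f.totalDegree := by
      rw [hG', natDegree_finSuccEquiv]; exact (degreeOf_le_totalDegree _ _).trans hG
    have hco : ∀ (g : MvPolynomial (Fin 3) F) i, ((finSuccEquiv F 2 g).coeff i).totalDegree
        ≤ g.totalDegree := by
      intro g i
      by_cases hg : (finSuccEquiv F 2 g).coeff i = 0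
      · simp [hg]
      · have := totalDegree_coeff_finSuccEquiv_add_le g i hg
        omega
    refine ⟨f'.resultant G', fun h => hres (by rw [h, map_zero]), ?_, ?_⟩
    · rw [Polynomial.resultant]
      refine (totalDegree_det_le _ (3 * f.totalDegree) _ ?_).trans ?_
      · intro i j
        rw [Polynomial.sylvester, Matrix.of_apply]
        induction j using Fin.addCases with
        | left j =>
          rw [Fin.addCases_left]
          split_ifs
          · exact (hco _ _).trans hG
          · simp
        | right j =>
          rw [Fin.addCases_right]
          split_ifs
          · exact (hco _ _).trans (by omega)
          · simp
      · nlinarith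
    · intro x hx hxG
      obtain ⟨a, b, -, -, hab⟩ := Polynomial.exists_mul_add_mul_eq_C_resultant f' G' le_rfl le_rfl
        (Or.inl h0)
      rw [aeval_finSucc] at hx hxG
      have := congrArg (Polynomial.eval₂ ((aeval (fun i => x (Fin.succ i)) :
        MvPolynomial (Fin 2) F →ₐ[F] Polynomial F) : MvPolynomial (Fin 2) F →+* Polynomial F) (x 0))
        hab
      rw [Polynomial.eval₂_add, Polynomial.eval₂_mul, Polynomial.eval₂_mul, ← hf', hx] at *
      rw [hxG, Polynomial.eval₂_C] at this
      simpa using this.symm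

lemma count_beta {F : Type*} [Field F] (H : MvPolynomial (Fin 2) F) (hH : H ≠ 0) (B : Finset F)
    (hB : ∀ b ∈ B, aeval ![Polynomial.C b, Polynomial.X] H = (0 : Polynomial F)) :
    B.card ≤ H.totalDegree := by
  classical
  set q := finSuccEquiv F 1 H with hq
  have hq0 : q ≠ 0 := fun h => hH ((map_eq_zero_iff _ (finSuccEquiv F 1).injective).1 h)
  have h1 : (B.image (C : F → MvPolynomial (Fin 1) F)) ⊆ q.roots.toFinset := by
    intro y hy
    obtain ⟨b, hb, rfl⟩ := Finset.mem_image.1 hy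
    rw [Multiset.mem_toFinset, Polynomial.mem_roots hq0, Polynomial.IsRoot]
    have h2 := congrArg (Polynomial.aeval (X 0 : MvPolynomial (Fin 1) F)) (hB b hb)
    rw [comp_aeval_apply, aeval_finSucc, map_zero] at h2
    have e : ((aeval (fun i : Fin 1 => (Polynomial.aeval (X 0 : MvPolynomial (Fin 1) F))
        ((![Polynomial.C b, Polynomial.X] : Fin 2 → Polynomial F) i.succ)) :
        MvPolynomial (Fin 1) F →ₐ[F] MvPolynomial (Fin 1) F)) = AlgHom.id F _ := by
      apply algHom_ext
      intro i
      fin_cases i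
      simp
    rw [e] at h2
    rw [← hq] at h2
    simp only [Matrix.cons_val_zero, Polynomial.aeval_C, MvPolynomial.algebraMap_eq] at h2
    exact h2
  have h2 := Finset.card_le_card h1
  rw [Finset.card_image_of_injective _ (C_injective _ _)] at h2
  refine h2.trans ((Multiset.toFinset_card_le _).trans ((Polynomial.card_roots' _).trans ?_))
  rw [hq, natDegree_finSuccEquiv]; exact degreeOf_le_totalDegree _ _
lemma not_dvd_pderiv {F : Type*} [Field F] (p : ℕ) [Fact p.Prime] [CharP F p]
    (f : MvPolynomial (Fin 3) F) (hd : f.totalDegree < p)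
    (h0 : (finSuccEquiv F 2 f).natDegree ≠ 0) : ¬ f ∣ pderiv 0 f := by
  rw [natDegree_finSuccEquiv] at h0
  have hle := degreeOf_le_totalDegree f 0
  have hz : pderiv 0 f ≠ 0 := by
    intro hz
    apply h0
    rw [← Nat.le_zero, degreeOf_le_iff]
    intro m hm
    by_contra hm0
    have h1 : m - Finsupp.single 0 1 + Finsupp.single 0 1 = m := by
      apply tsub_add_cancel_of_le
      rw [Finsupp.single_le_iff]; omega
    have h2 := coeff_pderiv (i := (0 : Fin 3)) (m := m - Finsupp.single 0 1) (p := f)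
    rw [hz, h1, coeff_zero] at h2
    rw [mem_support_iff] at hm
    have h3 := (mul_eq_zero.1 h2.symm).resolve_left hm
    have h4 : (m - Finsupp.single (0 : Fin 3) 1 : Fin 3 →₀ ℕ) 0 + 1 = m 0 := by
      simp; omega
    have h5 : ((m 0 : ℕ) : F) = 0 := by
      rw [← h4]; push_cast; exact h3
    rw [CharP.cast_eq_zero_iff F p] at h5
    have h6 : m 0 ≤ degreeOf 0 f := monomial_le_degreeOf 0 (mem_support_iff.2 hm)
    exact Nat.not_dvd_of_pos_of_lt (by omega) (by omega) h5
  rintro ⟨q, hq⟩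
  have hq0 : q ≠ 0 := by rintro rfl; simp at hq; exact hz hq
  have hf0 : f ≠ 0 := by rintro rfl; simp at hz
  have h1 := totalDegree_pderiv_le 0 f
  rw [hq, totalDegree_mul_of_isDomain hf0 hq0] at h1
  omega

lemma dichotomy {F : Type*} [Field F] (p : ℕ) [Fact p.Prime] [CharP F p]
    (f : MvPolynomial (Fin 3) F) (hf : Irreducible f) (hd : f.totalDegree < p) :
    (∀ R : Finset (F × F × F), Set.InjOn Prod.fst (R : Set (F × F × F)) → (∀ r ∈ R, onR f r) →
      R.card ≤ 12 * f.totalDegree ^ 2) ∨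
    (∀ r s, onR f r → onS f s → inc r s) := by
  classical
  by_cases h : (finSuccEquiv F 2 f).natDegree = 0 ∨ ¬ f ∣ GG f
  · left
    intro R hinj hR
    obtain ⟨H, hH0, hHd, hH⟩ := eliminate f (GG f) hf h (totalDegree_GG f)
    rw [← Finset.card_image_of_injOn hinj]
    refine (count_beta H hH0 _ ?_).trans hHd
    intro b hb
    obtain ⟨r, hr, rfl⟩ := Finset.mem_image.1 hb
    have h1 := hH _ (hR r hr) (onR_GG f r (hR r hr))
    rw [← h1]
    congr 2
  · right
    push Not at h
    intro r s hr hs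
    exact ruled_meet p f hf.prime (not_dvd_pderiv p f hd h.1) h.2 hd _ _ _ _ _ _ hr hs

lemma eval_onR {F : Type*} [Field F] (f : MvPolynomial (Fin 3) F) (r : F × F × F) (t : F) :
    Polynomial.eval t (aeval ![Polynomial.C r.2.1 * Polynomial.X + Polynomial.C r.2.2,
      Polynomial.C r.1, Polynomial.X] f) = eval ![r.2.1 * t + r.2.2, r.1, t] f := by
  have h := comp_aeval_apply (f := ![Polynomial.C r.2.1 * Polynomial.X + Polynomial.C r.2.2,
      Polynomial.C r.1, Polynomial.X]) (Polynomial.aeval t : Polynomial F →ₐ[F] F) f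
  rw [Polynomial.coe_aeval_eq_eval] at h
  rw [h]
  change aeval _ f = aeval _ f
  congr 2
  funext i
  fin_cases i <;> simp

lemma eval_onS {F : Type*} [Field F] (f : MvPolynomial (Fin 3) F) (s : F × F × F) (t : F) :
    Polynomial.eval t (aeval ![Polynomial.C s.2.1 * Polynomial.X + Polynomial.C s.2.2,
      Polynomial.X, Polynomial.C s.1] f) = eval ![s.2.1 * t + s.2.2, t, s.1] f := by
  have h := comp_aeval_apply (f := ![Polynomial.C s.2.1 * Polynomial.X + Polynomial.C s.2.2,
      Polynomial.X, Polynomial.C s.1]) (Polynomial.aeval t : Polynomial F →ₐ[F] F) f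
  rw [Polynomial.coe_aeval_eq_eval] at h
  rw [h]
  change aeval _ f = aeval _ f
  congr 2
  funext i
  fin_cases i <;> simp

lemma roots_bound {F : Type*} [Field F] (q : Polynomial F) (hq : q ≠ 0) (d : ℕ)
    (hd : q.natDegree ≤ d) (B : Finset F) (hB : ∀ b ∈ B, q.eval b = 0) : B.card ≤ d := by
  classical
  have h1 : B ⊆ q.roots.toFinset := by
    intro b hb
    rw [Multiset.mem_toFinset, Polynomial.mem_roots hq]
    exact hB b hb
  exact (Finset.card_le_card h1).trans ((Multiset.toFinset_card_le _).trans
    ((Polynomial.card_roots' _).trans hd))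

open Classical in
lemma count_r {F : Type*} [Field F] (f : MvPolynomial (Fin 3) F) (s : F × F × F) (hs : ¬ onS f s)
    (R : Finset (F × F × F)) (hinj : Set.InjOn Prod.fst (R : Set (F × F × F)))
    (hR : ∀ r ∈ R, onR f r) : (R.filter fun r => inc r s).card ≤ f.totalDegree := by
  rw [← Finset.card_image_of_injOn (f := Prod.fst)
    (hinj.mono (by intro r hr; exact (Finset.mem_filter.1 hr).1))]
  refine roots_bound _ hs _ ?_ _ ?_
  · have h := aeval_natDegree_le (m := f.totalDegree) (n := 1) f le_rfl
      ![Polynomial.C s.2.1 * Polynomial.X + Polynomial.C s.2.2, Polynomial.X, Polynomial.C s.1]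
      (by
        intro i
        fin_cases i
        · simp only [Fin.zero_eta, Matrix.cons_val_zero]; compute_degree
        · simp
        · simp)
    simpa using h
  · intro b hb
    obtain ⟨r, hr, rfl⟩ := Finset.mem_image.1 hb
    rw [Finset.mem_filter] at hr
    have h1 := congrArg (Polynomial.eval s.1) (hR r hr.1)
    rw [eval_onR, hr.2, Polynomial.eval_zero] at h1
    rw [eval_onS, h1]

open Classical in
lemma count_s {F : Type*} [Field F] (f : MvPolynomial (Fin 3) F) (r : F × F × F) (hr : ¬ onR f r)
    (S : Finset (F × F × F)) (hpar : ∀ s ∈ S, ∀ s' ∈ S, s.1 = s'.1 → s.2.1 = s'.2.1)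
    (hS : ∀ s ∈ S, onS f s) : (S.filter fun s => inc r s).card ≤ f.totalDegree := by
  have hinj : Set.InjOn Prod.fst ((S.filter fun s => inc r s : Finset _) : Set (F × F × F)) := by
    intro s hs s' hs' h
    rw [Finset.mem_coe, Finset.mem_filter] at hs hs'
    have h1 := hpar s hs.1 s' hs'.1 h
    have h2 := hs.2
    have h3 := hs'.2
    unfold inc at h2 h3
    rw [← h, ← h1] at h3
    rw [h3] at h2
    exact Prod.ext h (Prod.ext h1 (by linear_combination -h2))
  rw [← Finset.card_image_of_injOn (f := Prod.fst) hinj]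
  refine roots_bound _ hr _ ?_ _ ?_
  · have h := aeval_natDegree_le (m := f.totalDegree) (n := 1) f le_rfl
      ![Polynomial.C r.2.1 * Polynomial.X + Polynomial.C r.2.2, Polynomial.C r.1, Polynomial.X]
      (by
        intro i
        fin_cases i
        · simp only [Fin.zero_eta, Matrix.cons_val_zero]; compute_degree
        · simp
        · simp)
    simpa using h
  · intro b hb
    obtain ⟨s, hs, rfl⟩ := Finset.mem_image.1 hb
    rw [Finset.mem_filter] at hs
    have h1 := congrArg (Polynomial.eval r.1) (hS s hs.1)
    rw [eval_onS, ← hs.2, Polynomial.eval_zero] at h1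
    rw [eval_onR, h1]

open Classical in
/-- Number of incidences. -/
noncomputable def II {F : Type*} [Field F] (R S : Finset (F × F × F)) : ℕ :=
  ∑ s ∈ S, (R.filter fun r => inc r s).card

/-- Hypotheses on the configuration. -/
structure Cfg {F : Type*} [Field F] (k : ℕ) (R S : Finset (F × F × F)) : Prop where
  inj : Set.InjOn Prod.fst (R : Set (F × F × F))
  par : ∀ s ∈ S, ∀ s' ∈ S, s.1 = s'.1 → s.2.1 = s'.2.1
  two : ∀ s ∈ S, ∀ s' ∈ S, s ≠ s' → ∀ T ⊆ R, (∀ r ∈ T, inc r s) → (∀ r ∈ T, inc r s') → T.card ≤ k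

lemma Cfg.mono {F : Type*} [Field F] {k : ℕ} {R S R' S' : Finset (F × F × F)} (h : Cfg k R S)
    (hR : R' ⊆ R) (hS : S' ⊆ S) : Cfg k R' S' where
  inj := h.inj.mono (by exact_mod_cast hR)
  par := fun s hs s' hs' => h.par s (hS hs) s' (hS hs')
  two := fun s hs s' hs' hne T hT => h.two s (hS hs) s' (hS hs') hne T (hT.trans hR)

open Classical in
lemma II_swap {F : Type*} [Field F] (R S : Finset (F × F × F)) :
    II R S = ∑ r ∈ R, (S.filter fun s => inc r s).card := by
  unfold II
  exact (Finset.sum_card_bipartiteAbove_eq_sum_card_bipartiteBelow inc).symm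

lemma II_le_s {F : Type*} [Field F] (R S : Finset (F × F × F)) (d : ℕ)
    (h : ∀ s ∈ S, by classical exact (R.filter fun r => inc r s).card ≤ d) :
    II R S ≤ d * S.card := by
  classical
  unfold II
  rw [mul_comm, ← smul_eq_mul]
  exact Finset.sum_le_card_nsmul _ _ _ h

lemma II_le_r {F : Type*} [Field F] (R S : Finset (F × F × F)) (d : ℕ)
    (h : ∀ r ∈ R, by classical exact (S.filter fun s => inc r s).card ≤ d) :
    II R S ≤ d * R.card := by
  classical
  rw [II_swap, mul_comm, ← smul_eq_mul]
  exact Finset.sum_le_card_nsmul _ _ _ h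

open Classical in
lemma II_unionS {F : Type*} [Field F] (R S S' : Finset (F × F × F)) (h : Disjoint S S') :
    II R (S ∪ S') = II R S + II R S' := by
  unfold II
  exact Finset.sum_union h

open Classical in
lemma II_unionR {F : Type*} [Field F] (R R' S : Finset (F × F × F)) (h : Disjoint R R') :
    II (R ∪ R') S = II R S + II R' S := by
  rw [II_swap, II_swap, II_swap]
  exact Finset.sum_union h

lemma II_trivial {F : Type*} [Field F] (R S : Finset (F × F × F)) : II R S ≤ R.card * S.card := by
  classical
  apply II_le_s
  intro s _
  exact Finset.card_filter_le _ _

lemma lemC {F : Type*} [Field F] (p : ℕ) [Fact p.Prime] [CharP F p] (k : ℕ)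
    (f : MvPolynomial (Fin 3) F) : f ≠ 0 → f.totalDegree < p →
    ∀ R S : Finset (F × F × F), Cfg k R S → (∀ r ∈ R, onR f r) → (∀ s ∈ S, onS f s) →
    ∃ RB SB : Finset (F × F × F), RB ⊆ R ∧ SB ⊆ S ∧ RB.card ≤ 12 * f.totalDegree ^ 2 ∧
      II R S + k * SB.card ≤ II RB SB + f.totalDegree * (R.card + S.card) + R.card + k * S.card := by
  classical
  induction f using UniqueFactorizationMonoid.induction_on_prime with
  | h₁ => intro h; exact absurd rfl h
  | h₂ x hx =>
    intro _ _ R S _ hR hS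
    have hR0 : R = ∅ := by
      rw [Finset.eq_empty_iff_forall_notMem]
      intro r hr
      have h1 := hx.map (aeval (![Polynomial.C r.2.1 * Polynomial.X + Polynomial.C r.2.2,
        Polynomial.C r.1, Polynomial.X] : Fin 3 → Polynomial F))
      have h2 := hR r hr
      unfold onR at h2
      rw [h2] at h1
      exact not_isUnit_zero h1
    subst hR0
    refine ⟨∅, ∅, by simp, by simp, by simp, ?_⟩
    simp [II]
  | h₃ g q hg hq ih =>
    intro h0 hd R S hc hR hS
    have hdeg : (q * g).totalDegree = q.totalDegree + g.totalDegree :=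
      totalDegree_mul_of_isDomain hq.ne_zero hg
    rw [hdeg] at hd ⊢
    set d1 := q.totalDegree
    set d2 := g.totalDegree
    set R1 := R.filter (fun r => onR q r) with hR1
    set R2 := R.filter (fun r => ¬ onR q r) with hR2
    set S1 := S.filter (fun r => onS q r) with hS1
    set S2 := S.filter (fun r => ¬ onS q r) with hS2
    have dR : Disjoint R1 R2 := Finset.disjoint_filter_filter_not _ _ _
    have dS : Disjoint S1 S2 := Finset.disjoint_filter_filter_not _ _ _
    have uR : R1 ∪ R2 = R := Finset.filter_union_filter_not_eq _ _
    have uS : S1 ∪ S2 = S := Finset.filter_union_filter_not_eq _ _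
    have cR : R1.card + R2.card = R.card := by rw [← uR, Finset.card_union_of_disjoint dR]
    have cS : S1.card + S2.card = S.card := by rw [← uS, Finset.card_union_of_disjoint dS]
    have sR1 : R1 ⊆ R := Finset.filter_subset _ _
    have sR2 : R2 ⊆ R := Finset.filter_subset _ _
    have sS1 : S1 ⊆ S := Finset.filter_subset _ _
    have sS2 : S2 ⊆ S := Finset.filter_subset _ _
    have hI : II R S = II R1 S1 + II R1 S2 + II R2 S1 + II R2 S2 := by
      rw [← uR, ← uS, II_unionR _ _ _ dR, II_unionS _ _ _ dS, II_unionS _ _ _ dS]; ring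
    have h12 : II R1 S2 ≤ d1 * S2.card := by
      apply II_le_s
      intro s hs
      exact count_r q s (Finset.mem_filter.1 hs).2 R1 (hc.mono sR1 sS1).inj
        (fun r hr => (Finset.mem_filter.1 hr).2)
    have h21 : II R2 S1 ≤ d1 * R2.card := by
      apply II_le_r
      intro r hr
      exact count_s q r (Finset.mem_filter.1 hr).2 S1 (hc.mono sR1 sS1).par
        (fun r hr => (Finset.mem_filter.1 hr).2)
    obtain ⟨RB, SB, hRB, hSB, hcard, hle⟩ := ih hg (by omega) R2 S2 (hc.mono sR2 sS2)
      (by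
        intro r hr
        rw [Finset.mem_filter] at hr
        have := hR r hr.1
        unfold onR at this
        rw [map_mul] at this
        exact (mul_eq_zero.1 this).resolve_left hr.2)
      (by
        intro r hr
        rw [Finset.mem_filter] at hr
        have := hS r hr.1
        unfold onS at this
        rw [map_mul] at this
        exact (mul_eq_zero.1 this).resolve_left hr.2)
    rcases dichotomy p q hq.irreducible (by omega) with hbad | hgood
    · have hb := hbad R1 (hc.mono sR1 sS1).inj (fun r hr => (Finset.mem_filter.1 hr).2)
      have dRB : Disjoint R1 RB := dR.mono_right hRB
      have dSB : Disjoint S1 SB := dS.mono_right hSB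
      refine ⟨R1 ∪ RB, S1 ∪ SB, Finset.union_subset sR1 (hRB.trans sR2),
        Finset.union_subset sS1 (hSB.trans sS2), ?_, ?_⟩
      · rw [Finset.card_union_of_disjoint dRB]
        nlinarith
      · rw [Finset.card_union_of_disjoint dSB, II_unionR _ _ _ dRB, II_unionS _ _ _ dSB,
          II_unionS _ _ _ dSB, hI, ← cR, ← cS]
        nlinarith [Nat.zero_le (II R1 SB), Nat.zero_le (II RB S1)]
    · refine ⟨RB, SB, hRB.trans sR2, hSB.trans sS2, by nlinarith, ?_⟩
      have h11 : II R1 S1 ≤ R1.card + k * S1.card := by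
        have ht := II_trivial R1 S1
        by_cases h1 : S1.card ≤ 1
        · nlinarith
        · obtain ⟨s, hs, s', hs', hne⟩ := Finset.one_lt_card.1 (not_le.1 h1)
          have h2 := (hc.mono sR1 sS1).two s hs s' hs' hne R1 (Finset.Subset.refl _)
            (fun r hr => hgood r s (Finset.mem_filter.1 hr).2 (Finset.mem_filter.1 hs).2)
            (fun r hr => hgood r s' (Finset.mem_filter.1 hr).2 (Finset.mem_filter.1 hs').2)
          nlinarith
      rw [hI, ← cR, ← cS]
      clear_value d1 d2 R1 R2 S1 S2
      have z1 := Nat.zero_le (d1 * R1.card)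
      have z2 := Nat.zero_le (d1 * S1.card)
      have z3 := Nat.zero_le (d2 * R1.card)
      have z4 := Nat.zero_le (d2 * S1.card)
      linarith

lemma exists_poly {F : Type*} [Field F] (L : Finset (F × F × F)) (D : ℕ)
    (hD : 3 * L.card < D ^ 2) :
    ∃ f : MvPolynomial (Fin 3) F, f ≠ 0 ∧ f.totalDegree ≤ 3 * D ∧ ∀ r ∈ L, onR f r := by
  classical
  have hDpos : 0 < D := by
    rcases Nat.eq_zero_or_pos D with rfl | h
    · simp at hD
    · exact h
  let e : (Fin 3 → Fin D) → (Fin 3 →₀ ℕ) := fun t => Finsupp.equivFunOnFinite.symm fun i => (t i : ℕ)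
  have he : Function.Injective e := by
    intro t t' h
    have h1 := Finsupp.equivFunOnFinite.symm.injective h
    funext i
    exact Fin.ext (congrFun h1 i)
  let P : ((Fin 3 → Fin D) → F) →ₗ[F] MvPolynomial (Fin 3) F :=
    ∑ t, (monomial (e t)) ∘ₗ LinearMap.proj t
  have hP : ∀ c, P c = ∑ t, monomial (e t) (c t) := by
    intro c
    simp [P]
  let T : ((Fin 3 → Fin D) → F) →ₗ[F] (L → Fin (3 * D) → F) :=
    LinearMap.pi fun r => LinearMap.pi fun j => (Polynomial.lcoeff F (j : ℕ)) ∘ₗ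
      (aeval ![Polynomial.C r.1.2.1 * Polynomial.X + Polynomial.C r.1.2.2, Polynomial.C r.1.1,
        Polynomial.X]).toLinearMap ∘ₗ P
  have hlt : Module.finrank F (L → Fin (3 * D) → F) < Module.finrank F ((Fin 3 → Fin D) → F) := by
    rw [Module.finrank_pi_fintype]
    simp only [Module.finrank_fintype_fun_eq_card, Finset.sum_const, Finset.card_univ,
      Fintype.card_coe, Fintype.card_fin, Fintype.card_fun, smul_eq_mul]
    nlinarith
  obtain ⟨c, hc, hc0⟩ := Submodule.exists_mem_ne_zero_of_ne_bot
    (LinearMap.ker_ne_bot_of_finrank_lt (f := T) hlt)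
  have hdeg : (P c).totalDegree ≤ 3 * (D - 1) := by
    rw [hP]
    apply totalDegree_finsetSum_le
    intro t _
    refine (totalDegree_monomial_le _ _).trans ?_
    rw [Finsupp.sum_fintype _ _ (by simp)]
    refine (Finset.sum_le_card_nsmul _ _ (D - 1) ?_).trans ?_
    · intro i _
      have := (t i).2
      simp only [e, Finsupp.equivFunOnFinite_symm_apply_apply, id]
      omega
    · simp
  refine ⟨P c, ?_, by omega, ?_⟩
  · intro h0
    apply hc0
    funext t
    have h1 := congrArg (coeff (e t)) h0
    rw [hP, coeff_sum] at h1
    simp only [coeff_monomial, he.eq_iff] at h1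
    simpa using h1
  · intro r hr
    unfold onR
    ext j
    by_cases hj : j < 3 * D
    · have h1 : T c ⟨r, hr⟩ ⟨j, hj⟩ = 0 := by
        rw [LinearMap.mem_ker.1 hc]; rfl
      rw [Polynomial.coeff_zero]
      exact h1
    · rw [Polynomial.coeff_zero]
      apply Polynomial.coeff_eq_zero_of_natDegree_lt
      have h := aeval_natDegree_le (m := (P c).totalDegree) (n := 1) (P c) le_rfl
        ![Polynomial.C r.2.1 * Polynomial.X + Polynomial.C r.2.2, Polynomial.C r.1, Polynomial.X]
        (by
          intro i
          fin_cases i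
          · simp only [Fin.zero_eta, Matrix.cons_val_zero]; compute_degree
          · simp
          · simp)
      rw [mul_one] at h
      exact lt_of_le_of_lt h (by omega)

lemma step_t {F : Type*} [Field F] (p : ℕ) [Fact p.Prime] [CharP F p] (k d : ℕ) (hd : d < p)
    (f : MvPolynomial (Fin 3) F) (hf : f ≠ 0) (hfd : f.totalDegree ≤ d)
    (R S : Finset (F × F × F)) (hc : Cfg k R S) (hS : ∀ s ∈ S, onS f s) (B : ℝ) (hB : 0 ≤ B)
    (ih : ∀ RB SB : Finset (F × F × F), RB ⊆ R → SB ⊆ S → RB.card ≤ 12 * d ^ 2 →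
      (II RB SB : ℝ) ≤ B * (((12 * d ^ 2 : ℕ) : ℝ) + SB.card) + k * SB.card) :
    (II R S : ℝ) ≤ 2 * d * R.card + d * S.card + R.card +
      B * (((12 * d ^ 2 : ℕ) : ℝ) + S.card) + k * S.card := by
  classical
  set R1 := R.filter (fun r => onR f r) with hR1
  set R2 := R.filter (fun r => ¬ onR f r) with hR2
  have dR : Disjoint R1 R2 := Finset.disjoint_filter_filter_not _ _ _
  have uR : R1 ∪ R2 = R := Finset.filter_union_filter_not_eq _ _
  have sR1 : R1 ⊆ R := Finset.filter_subset _ _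
  have sR2 : R2 ⊆ R := Finset.filter_subset _ _
  have hI : II R S = II R1 S + II R2 S := by
    rw [← uR, II_unionR _ _ _ dR]
  have h2 : II R2 S ≤ d * R2.card := by
    apply II_le_r
    intro r hr
    exact (count_s f r (Finset.mem_filter.1 hr).2 S hc.par hS).trans hfd
  obtain ⟨RB, SB, hRB, hSB, hcard, hle⟩ := lemC p k f hf (by omega) R1 S
    (hc.mono sR1 (Finset.Subset.refl _)) (fun r hr => (Finset.mem_filter.1 hr).2) hS
  have h3 := ih RB SB (hRB.trans sR1) hSB (hcard.trans (by gcongr))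
  have c1 := Finset.card_le_card sR1
  have c2 := Finset.card_le_card sR2
  have c3 := Finset.card_le_card hSB
  have h4 : II R S + k * SB.card ≤ II RB SB + d * (R.card + S.card) + R.card + k * S.card
      + d * R.card := by
    have e1 : f.totalDegree * (R1.card + S.card) ≤ d * (R.card + S.card) :=
      Nat.mul_le_mul hfd (by omega)
    have e2 : d * R2.card ≤ d * R.card := Nat.mul_le_mul_left _ c2
    omega
  have h4' : (II R S : ℝ) + k * SB.card ≤ II RB SB + d * (R.card + S.card) + R.card + k * S.card
      + d * R.card := by exact_mod_cast h4
  have h5 : B * (((12 * d ^ 2 : ℕ) : ℝ) + SB.card) ≤ B * (((12 * d ^ 2 : ℕ) : ℝ) + S.card) := by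
    have : (SB.card : ℝ) ≤ S.card := by exact_mod_cast c3
    gcongr
  linarith

lemma step_all {F : Type*} [Field F] (p : ℕ) [Fact p.Prime] [CharP F p] (k d D q : ℕ) (hd : d < p)
    (hq : q ≠ 0) (R S : Finset (F × F × F)) (hqR : q ≤ R.card) (hdD : d = 3 * D)
    (hD : 3 * (R.card / q + 1) < D ^ 2) (hc : Cfg k R S)
    (B : ℝ) (hB : 0 ≤ B)
    (ih : ∀ RB SB : Finset (F × F × F), RB ⊆ R → SB ⊆ S → RB.card ≤ 12 * d ^ 2 →
      (II RB SB : ℝ) ≤ B * (((12 * d ^ 2 : ℕ) : ℝ) + SB.card) + k * SB.card) :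
    (II R S : ℝ) ≤ q * d * S.card + q * (2 * d * R.card + R.card + B * ((12 * d ^ 2 : ℕ) : ℝ)) +
      d * S.card + B * S.card + k * S.card := by
  classical
  obtain ⟨P, hP, hPc⟩ := Finpartition.exists_equipartition_card_eq R hq hqR
  have hex : ∀ t : Finset (F × F × F), ∃ f : MvPolynomial (Fin 3) F, t ∈ P.parts →
      f ≠ 0 ∧ f.totalDegree ≤ d ∧ ∀ r ∈ t, onR f r := by
    intro t
    by_cases ht : t ∈ P.parts
    · have h1 := hP.card_part_le_average_add_one ht
      rw [hPc] at h1
      obtain ⟨f, h2, h3, h4⟩ := exists_poly t D (by omega)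
      exact ⟨f, fun _ => ⟨h2, by omega, h4⟩⟩
    · exact ⟨0, fun h => absurd h ht⟩
  choose f hf using hex
  let rich : F × F × F → Prop := fun s => ∃ t ∈ P.parts, onS (f t) s
  let τ : F × F × F → Finset (F × F × F) := fun s =>
    if h : rich s then h.choose else ∅
  have hτ : ∀ s, rich s → τ s ∈ P.parts ∧ onS (f (τ s)) s := by
    intro s hs
    simp only [τ, dif_pos hs]
    exact hs.choose_spec
  have hpoor : ∀ s, ¬ rich s → (R.filter fun r => inc r s).card ≤ q * d := by
    intro s hs
    have h1 : R.filter (fun r => inc r s) = P.parts.biUnion (fun t => t.filter fun r => inc r s) := by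
      conv_lhs => rw [← P.biUnion_parts]
      rw [Finset.filter_biUnion]
      rfl
    rw [h1, ← hPc]
    apply Finset.card_biUnion_le_card_mul
    intro t ht
    have hns : ¬ onS (f t) s := fun h => hs ⟨t, ht, h⟩
    have htR : t ⊆ R := P.le ht
    exact (count_r (f t) s hns t (hc.mono htR (Finset.Subset.refl S)).inj (hf t ht).2.2).trans
      (hf t ht).2.1
  set Sp := S.filter (fun s => ¬ rich s) with hSp
  set Sr := S.filter (fun s => rich s) with hSr
  let St : Finset (F × F × F) → Finset (F × F × F) := fun t => Sr.filter (fun s => τ s = t)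
  have hSt : ∀ t, St t ⊆ S := fun t => (Finset.filter_subset _ _).trans (Finset.filter_subset _ _)
  have hI : II R S = II R Sr + II R Sp := by
    rw [← II_unionS _ _ _ (Finset.disjoint_filter_filter_not _ _ _),
      Finset.filter_union_filter_not_eq]
  have hIp : II R Sp ≤ q * d * S.card := by
    refine (II_le_s R Sp (q * d) ?_).trans
      (Nat.mul_le_mul_left _ (Finset.card_le_card (Finset.filter_subset _ _)))
    intro s hs
    exact hpoor s (Finset.mem_filter.1 hs).2
  have hmaps : ∀ s ∈ Sr, τ s ∈ P.parts := fun s hs => (hτ s (Finset.mem_filter.1 hs).2).1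
  have hIr : II R Sr = ∑ t ∈ P.parts, II R (St t) := by
    unfold II
    rw [Finset.sum_fiberwise_of_maps_to hmaps]
  have hcr : ∑ t ∈ P.parts, (St t).card ≤ S.card := by
    rw [← Finset.card_eq_sum_card_fiberwise hmaps]
    exact Finset.card_le_card (Finset.filter_subset _ _)
  have hcr' : (∑ t ∈ P.parts, ((St t).card : ℝ)) ≤ S.card := by exact_mod_cast hcr
  have hIr' : (II R Sr : ℝ) ≤ ∑ t ∈ P.parts, ((2 * d * R.card + R.card +
      B * ((12 * d ^ 2 : ℕ) : ℝ)) + (d + B + k) * (St t).card) := by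
    rw [hIr]
    push_cast
    apply Finset.sum_le_sum
    intro t ht
    have := step_t p k d hd (f t) (hf t ht).1 (hf t ht).2.1 R (St t)
      (hc.mono (Finset.Subset.refl _) (hSt t))
      (by
        intro s hs
        have h1 := Finset.mem_filter.1 hs
        have h2 := (hτ s (Finset.mem_filter.1 h1.1).2).2
        rw [h1.2] at h2
        exact h2)
      B hB (fun RB SB h1 h2 h3 => ih RB SB h1 (h2.trans (hSt t)) h3)
    push_cast at this ⊢
    linarith
  rw [Finset.sum_add_distrib, Finset.sum_const, hPc, nsmul_eq_mul, ← Finset.mul_sum] at hIr'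
  have h6 : ((d : ℝ) + B + k) * (∑ t ∈ P.parts, ((St t).card : ℝ)) ≤ (d + B + k) * S.card := by
    apply mul_le_mul_of_nonneg_left hcr'
    positivity
  have hIp' : (II R Sp : ℝ) ≤ q * d * S.card := by exact_mod_cast hIp
  rw [hI]
  push_cast at *
  linarith

lemma main_ind {F : Type*} [Field F] (p : ℕ) [Fact p.Prime] [CharP F p] (k : ℕ) (m : ℕ) :
    ∀ R S : Finset (F × F × F), Cfg k R S → R.card = m → m ≤ p ^ 2 →
    (II R S : ℝ) ≤ 10 ^ 8 * √m * (m + S.card) + k * S.card := by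
  induction m using Nat.strong_induction_on with
  | _ m IH =>
  intro R S hc hm hmp
  have hs0 := Real.sqrt_nonneg (m : ℝ)
  have hss : √(m : ℝ) * √(m : ℝ) = m := Real.mul_self_sqrt (Nat.cast_nonneg m)
  have hn0 : (0 : ℝ) ≤ S.card := Nat.cast_nonneg _
  have hm0 : (0 : ℝ) ≤ m := Nat.cast_nonneg _
  have hk0 : (0 : ℝ) ≤ k * S.card := by positivity
  by_cases hq : m < 10 ^ 12
  · have h1 : (II R S : ℝ) ≤ m * S.card := by
      rw [← hm]; exact_mod_cast II_trivial R S
    have h2 : √(m : ℝ) ≤ 10 ^ 6 := by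
      rw [Real.sqrt_le_left (by positivity)]
      have : (m : ℝ) < 10 ^ 12 := by exact_mod_cast hq
      linarith
    have h3 : (m : ℝ) ≤ 10 ^ 8 * √m := by nlinarith
    have h4 : (m : ℝ) * S.card ≤ 10 ^ 8 * √m * S.card := mul_le_mul_of_nonneg_right h3 hn0
    have h5 : 0 ≤ 10 ^ 8 * √(m : ℝ) * m := by positivity
    linarith
  push Not at hq
  obtain ⟨x, hx⟩ : ∃ x : ℝ, x = √m / 10 ^ 6 := ⟨_, rfl⟩
  have hmx : √(m : ℝ) = 10 ^ 6 * x := by rw [hx]; ring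
  have hmx2 : (m : ℝ) = 10 ^ 12 * x ^ 2 := by rw [← hss, hmx]; ring
  have hx1 : 1 ≤ x := by
    have h1 : (10 : ℝ) ^ 6 ≤ √m := by
      apply Real.le_sqrt_of_sq_le
      have : ((10 : ℝ) ^ 12) ≤ m := by exact_mod_cast hq
      linarith
    rw [hx, le_div_iff₀ (by positivity)]
    linarith
  obtain ⟨D, hDdef⟩ : ∃ D, D = Nat.sqrt (3 * (m / 10 ^ 12 + 1)) + 1 := ⟨_, rfl⟩
  have hD1 : 3 * (m / 10 ^ 12 + 1) < D ^ 2 := by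
    rw [hDdef, pow_two]; exact Nat.lt_succ_sqrt _
  have hD2 : (D : ℝ) ≤ 4 * x := by
    have h1 : Nat.sqrt (3 * (m / 10 ^ 12 + 1)) ^ 2 ≤ 3 * (m / 10 ^ 12 + 1) := Nat.sqrt_le' _
    have h2 : ((Nat.sqrt (3 * (m / 10 ^ 12 + 1)) : ℕ) : ℝ) ^ 2 ≤ 3 * (((m / 10 ^ 12 : ℕ) : ℝ) + 1) := by
      exact_mod_cast h1
    have h3 : ((m / 10 ^ 12 : ℕ) : ℝ) ≤ x ^ 2 := by
      have := Nat.cast_div_le (α := ℝ) (m := m) (n := 10 ^ 12)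
      rw [hmx2] at this
      push_cast at this
      linarith
    have h4 : ((Nat.sqrt (3 * (m / 10 ^ 12 + 1)) : ℕ) : ℝ) ≤ 3 * x := by
      apply le_of_sq_le_sq _ (by linarith)
      nlinarith
    rw [hDdef]
    push_cast
    linarith
  obtain ⟨d, hd⟩ : ∃ d, d = 3 * D := ⟨_, rfl⟩
  have hdx : (d : ℝ) ≤ 12 * x := by rw [hd]; push_cast; linarith
  have hd0 : (0 : ℝ) ≤ d := Nat.cast_nonneg _
  have hd2 : (d : ℝ) ^ 2 ≤ 144 * x ^ 2 := by nlinarith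
  have hdp : d < p := by
    have h1 : (d : ℝ) ^ 2 < (p : ℝ) ^ 2 := by
      have h2 : (m : ℝ) ≤ (p : ℝ) ^ 2 := by exact_mod_cast hmp
      have : 0 < x ^ 2 := by positivity
      linarith
    have h3 := lt_of_pow_lt_pow_left₀ 2 (Nat.cast_nonneg p) h1
    exact_mod_cast h3
  have hM : ((12 * d ^ 2 : ℕ) : ℝ) ≤ 1728 * x ^ 2 := by push_cast; linarith
  have hMm : 12 * d ^ 2 < m := by
    have : ((12 * d ^ 2 : ℕ) : ℝ) < m := by
      have : 0 < x ^ 2 := by positivity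
      linarith
    exact_mod_cast this
  have hsM : √((12 * d ^ 2 : ℕ) : ℝ) ≤ 42 * x := by
    rw [Real.sqrt_le_left (by linarith)]
    nlinarith
  have key := step_all p k d D (10 ^ 12) hdp (by norm_num) R S (by rw [hm]; exact hq) hd
    (by rw [hm]; exact hD1) hc (10 ^ 8 * (42 * x)) (by positivity)
    (by
      intro RB SB hRB hSB hcard
      have h1 := IH RB.card (by omega) RB SB (hc.mono hRB hSB) rfl (by omega)
      have h2 : (RB.card : ℝ) ≤ ((12 * d ^ 2 : ℕ) : ℝ) := by exact_mod_cast hcard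
      have h3 : √(RB.card : ℝ) ≤ 42 * x := (Real.sqrt_le_sqrt h2).trans hsM
      refine h1.trans ?_
      have h4 : (0 : ℝ) ≤ SB.card := Nat.cast_nonneg _
      have h5 : (0 : ℝ) ≤ RB.card := Nat.cast_nonneg _
      have h6 : 10 ^ 8 * √(RB.card : ℝ) ≤ 10 ^ 8 * (42 * x) := by linarith
      have h7 := mul_le_mul h6 (add_le_add_left h2 (SB.card : ℝ)) (by linarith) (by linarith)
      linarith)
  refine key.trans ?_
  rw [hm, hmx]
  push_cast at hM ⊢
  clear key hk0
  generalize (S.card : ℝ) = n at hn0 ⊢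
  have hx0 : 0 ≤ x := by linarith
  have e1 : (10 : ℝ) ^ 12 * d * n ≤ 10 ^ 12 * (12 * x) * n := by gcongr
  have e2 : (10 : ℝ) ^ 12 * (2 * d * m) ≤ 10 ^ 12 * (2 * (12 * x) * m) := by gcongr
  have e3 : (10 : ℝ) ^ 12 * m ≤ 10 ^ 12 * (x * m) := by
    have : (m : ℝ) ≤ x * m := by nlinarith
    linarith
  have e4 : (10 : ℝ) ^ 12 * (10 ^ 8 * (42 * x) * (12 * (d : ℝ) ^ 2)) ≤
      10 ^ 12 * (10 ^ 8 * (42 * x) * (1728 * x ^ 2)) := by gcongr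
  have e5 : (10 : ℝ) ^ 12 * (10 ^ 8 * (42 * x) * (1728 * x ^ 2)) =
      10 ^ 8 * (42 * x) * 1728 * m := by rw [hmx2]; ring
  have e6 : (d : ℝ) * n ≤ 12 * x * n := by gcongr
  have e7 : 0 ≤ x * (m : ℝ) := by positivity
  have e8 : 0 ≤ x * n := by positivity
  nlinarith


lemma par3 {K : Type*} [Field K] (u1 u2 u3 v1 v2 v3 : K) (h12 : u1 * v2 = u2 * v1)
    (h13 : u1 * v3 = u3 * v1) (h23 : u2 * v3 = u3 * v2) (hu : ¬ (u1 = 0 ∧ u2 = 0 ∧ u3 = 0)) :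
    ∃ t, v1 = t * u1 ∧ v2 = t * u2 ∧ v3 = t * u3 := by
  by_cases h1 : u1 = 0
  · by_cases h2 : u2 = 0
    · have h3 : u3 ≠ 0 := fun h3 => hu ⟨h1, h2, h3⟩
      refine ⟨v3 / u3, ?_, ?_, ?_⟩ <;> field_simp
      · linear_combination -h13
      · linear_combination -h23
    · refine ⟨v2 / u2, ?_, ?_, ?_⟩ <;> field_simp
      · linear_combination -h12
      · linear_combination h23
  · refine ⟨v1 / u1, ?_, ?_, ?_⟩ <;> field_simp
    · linear_combination h12
    · linear_combination h13

/-- Coordinates of the line attached to a point. -/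
def mapR {p : ℕ} {F : Type*} [Field F] (ι : ZMod p →+* F) (τ : F)
    (x : ZMod p × ZMod p × ZMod p) : F × F × F :=
  (ι x.1 + τ * ι x.2.1 + τ ^ 2 * ι x.2.2, ι x.2.1 - τ * ι x.2.2, ι x.2.2)

/-- The normalizing denominator of a plane. -/
def den {p : ℕ} {F : Type*} [Field F] (ι : ZMod p →+* F) (τ : F)
    (N : ZMod p × ZMod p × ZMod p) : F :=
  ι N.2.2 + τ * ι N.2.1 - 2 * τ ^ 2 * ι N.1

/-- Coordinates of the line attached to a plane. -/
def mapS {p : ℕ} {F : Type*} [Field F] (ι : ZMod p →+* F) (τ : F)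
    (s : (ZMod p × ZMod p × ZMod p) × ZMod p) : F × F × F :=
  ((ι s.1.2.1 - τ * ι s.1.1) / den ι τ s.1, - ι s.1.1 / den ι τ s.1, ι s.2 / den ι τ s.1)

lemma den_ne {p : ℕ} [Fact p.Prime] (hp : p ≠ 2) {F : Type*} [Field F] (ι : ZMod p →+* F) (τ : F)
    (hind : ∀ a b c : ZMod p, ι a + ι b * τ + ι c * τ ^ 2 = 0 → a = 0 ∧ b = 0 ∧ c = 0)
    (N : ZMod p × ZMod p × ZMod p) (hN : N ≠ (0, 0, 0)) : den ι τ N ≠ 0 := by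
  intro h
  have h1 := hind N.2.2 N.2.1 (-2 * N.1) (by
    have e2 : ι 2 = 2 := map_ofNat ι 2
    rw [← h, den]
    simp only [map_mul, map_neg, e2]
    ring)
  apply hN
  have h2 : (2 : ZMod p) ≠ 0 := by
    have h3 : ((2 : ℕ) : ZMod p) ≠ 0 := by
      rw [Ne, ZMod.natCast_eq_zero_iff]
      intro h4
      exact hp ((Nat.prime_dvd_prime_iff_eq Fact.out Nat.prime_two).1 h4)
    simpa using h3
  have h3 : N.1 = 0 := by
    have := h1.2.2
    rcases mul_eq_zero.1 this with h | h
    · exact absurd (neg_eq_zero.1 h) h2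
    · exact h
  exact Prod.ext h3 (Prod.ext h1.2.1 h1.1)

lemma inc_iff {p : ℕ} {F : Type*} [Field F] (ι : ZMod p →+* F) (hι : Function.Injective ι) (τ : F)
    (s : (ZMod p × ZMod p × ZMod p) × ZMod p) (hs : den ι τ s.1 ≠ 0)
    (x : ZMod p × ZMod p × ZMod p) :
    inc (mapR ι τ x) (mapS ι τ s) ↔
      s.1.1 * x.1 + s.1.2.1 * x.2.1 + s.1.2.2 * x.2.2 = s.2 := by
  rw [← hι.eq_iff]
  simp only [inc, mapR, mapS, map_add, map_mul]
  constructor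
  · intro h
    field_simp at h
    rw [den] at h
    linear_combination h
  · intro h
    field_simp
    rw [den]
    linear_combination h

lemma transfer {p : ℕ} [Fact p.Prime] (hp : p ≠ 2) {F : Type*} [Field F] [CharP F p]
    (ι : ZMod p →+* F) (τ : F)
    (hind : ∀ a b c : ZMod p, ι a + ι b * τ + ι c * τ ^ 2 = 0 → a = 0 ∧ b = 0 ∧ c = 0)
    (R : Finset (ZMod p × ZMod p × ZMod p))
    (S : Finset ((ZMod p × ZMod p × ZMod p) × ZMod p))
    (hS : ∀ s ∈ S, s.1 ≠ (0, 0, 0))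
    (hS2 : ∀ s₁ ∈ S, ∀ s₂ ∈ S, planeSet s₁ = planeSet s₂ → s₁ = s₂)
    (hRp : R.card ≤ p ^ 2) (k : ℕ)
    (hk : ∀ u v : ZMod p × ZMod p × ZMod p, v ≠ 0 →
        (R.filter fun r => ∃ t : ZMod p, r = u + t • v).card ≤ k) :
    (((R ×ˢ S).filter fun rs =>
          rs.2.1.1 * rs.1.1 + rs.2.1.2.1 * rs.1.2.1 + rs.2.1.2.2 * rs.1.2.2 = rs.2.2).card : ℝ) ≤
      10 ^ 8 * √R.card * (R.card + S.card) + k * S.card := by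
  classical
  have hι : Function.Injective ι := ι.injective
  have hden : ∀ s ∈ S, den ι τ s.1 ≠ 0 := fun s hs => den_ne hp ι τ hind _ (hS s hs)
  have hRinj' : ∀ x y, (mapR ι τ x).1 = (mapR ι τ y).1 → x = y := by
    intro x y h
    simp only [mapR] at h
    obtain ⟨h1, h2, h3⟩ := hind (x.1 - y.1) (x.2.1 - y.2.1) (x.2.2 - y.2.2) (by
      simp only [map_sub]; linear_combination h)
    exact Prod.ext (sub_eq_zero.1 h1) (Prod.ext (sub_eq_zero.1 h2) (sub_eq_zero.1 h3))
  have hRinj : Function.Injective (mapR ι τ) := fun x y h => hRinj' x y (by rw [h])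
  have hSinj : Set.InjOn (mapS ι τ) (S : Set _) := by
    intro s hs s' hs' h
    apply hS2 s hs s' hs'
    ext x
    have h1 := inc_iff ι hι τ s (hden s hs) x
    have h2 := inc_iff ι hι τ s' (hden s' hs') x
    rw [h] at h1
    exact h1.symm.trans h2
  have hcfg : Cfg k (R.image (mapR ι τ)) (S.image (mapS ι τ)) := by
    refine ⟨?_, ?_, ?_⟩
    · intro a ha b hb h
      rw [Finset.mem_coe, Finset.mem_image] at ha hb
      obtain ⟨x, _, rfl⟩ := ha
      obtain ⟨y, _, rfl⟩ := hb
      rw [hRinj' x y h]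
    · intro a ha b hb h
      rw [Finset.mem_image] at ha hb
      obtain ⟨s, hs, rfl⟩ := ha
      obtain ⟨s', hs', rfl⟩ := hb
      have d1 := hden s hs
      have d2 := hden s' hs'
      simp only [mapS] at h ⊢
      rw [div_eq_div_iff d1 d2] at h ⊢
      obtain ⟨h1, h2, h3⟩ := hind (s.1.2.1 * s'.1.2.2 - s'.1.2.1 * s.1.2.2)
        (s'.1.1 * s.1.2.2 - s.1.1 * s'.1.2.2) (s'.1.2.1 * s.1.1 - s.1.2.1 * s'.1.1) (by
          simp only [map_sub, map_mul]
          rw [den, den] at h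
          linear_combination h)
      have h2' := congrArg ι h2
      have h3' := congrArg ι h3
      simp only [map_sub, map_mul, map_zero] at h2' h3'
      rw [den, den]
      linear_combination h2' - τ * h3'
    · intro a ha b hb hne T hT hTa hTb
      rw [Finset.mem_image] at ha hb
      obtain ⟨s, hs, rfl⟩ := ha
      obtain ⟨s', hs', rfl⟩ := hb
      have hss : s ≠ s' := fun h => hne (by rw [h])
      rcases T.eq_empty_or_nonempty with rfl | ⟨y0, hy0⟩
      · simp
      obtain ⟨x0, hx0, rfl⟩ := Finset.mem_image.1 (hT hy0)
      have a0 := (inc_iff ι hι τ s (hden s hs) x0).1 (hTa _ hy0)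
      have b0 := (inc_iff ι hι τ s' (hden s' hs') x0).1 (hTb _ hy0)
      by_cases hv : s.1.2.1 * s'.1.2.2 - s.1.2.2 * s'.1.2.1 = 0 ∧
          s.1.2.2 * s'.1.1 - s.1.1 * s'.1.2.2 = 0 ∧ s.1.1 * s'.1.2.1 - s.1.2.1 * s'.1.1 = 0
      · exfalso
        apply hss
        apply hS2 s hs s' hs'
        have hN := hS s hs
        have hN' := hS s' hs'
        obtain ⟨t, t1, t2, t3⟩ := par3 s.1.1 s.1.2.1 s.1.2.2 s'.1.1 s'.1.2.1 s'.1.2.2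
          (by linear_combination hv.2.2) (by linear_combination -hv.2.1)
          (by linear_combination hv.1)
          (by rintro ⟨h1, h2, h3⟩; exact hN (Prod.ext h1 (Prod.ext h2 h3)))
        have ht : t ≠ 0 := by
          rintro rfl
          rw [zero_mul] at t1 t2 t3
          exact hN' (Prod.ext t1 (Prod.ext t2 t3))
        have hd : s'.2 = t * s.2 := by
          rw [← a0, ← b0, t1, t2, t3]; ring
        ext x
        simp only [planeSet, Set.mem_ofPred_eq]
        rw [t1, t2, t3, hd]
        constructor
        · intro h; rw [← h]; ring
        · intro h
          apply mul_left_cancel₀ ht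
          linear_combination h
      · have hle := hk x0 (s.1.2.1 * s'.1.2.2 - s.1.2.2 * s'.1.2.1,
          s.1.2.2 * s'.1.1 - s.1.1 * s'.1.2.2, s.1.1 * s'.1.2.1 - s.1.2.1 * s'.1.1) (by
            intro h
            apply hv
            have h1 := congrArg Prod.fst h
            have h2 := congrArg (fun z => z.2.1) h
            have h3 := congrArg (fun z => z.2.2) h
            exact ⟨h1, h2, h3⟩)
        refine le_trans ?_ hle
        rw [← Finset.card_image_of_injective _ hRinj]
        apply Finset.card_le_card
        intro y hy
        obtain ⟨x, hx, rfl⟩ := Finset.mem_image.1 (hT hy)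
        have a1 := (inc_iff ι hι τ s (hden s hs) x).1 (hTa _ hy)
        have b1 := (inc_iff ι hι τ s' (hden s' hs') x).1 (hTb _ hy)
        apply Finset.mem_image_of_mem
        rw [Finset.mem_filter]
        refine ⟨hx, ?_⟩
        have a2 : s.1.1 * (x.1 - x0.1) + s.1.2.1 * (x.2.1 - x0.2.1) + s.1.2.2 * (x.2.2 - x0.2.2)
          = 0 := by linear_combination a1 - a0
        have b2 : s'.1.1 * (x.1 - x0.1) + s'.1.2.1 * (x.2.1 - x0.2.1) +
          s'.1.2.2 * (x.2.2 - x0.2.2) = 0 := by linear_combination b1 - b0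
        obtain ⟨t, t1, t2, t3⟩ := par3 _ _ _ (x.1 - x0.1) (x.2.1 - x0.2.1) (x.2.2 - x0.2.2)
          (by linear_combination s'.1.2.2 * a2 - s.1.2.2 * b2)
          (by linear_combination (-s'.1.2.1) * a2 + s.1.2.1 * b2)
          (by linear_combination s'.1.1 * a2 - s.1.1 * b2) hv
        refine ⟨t, Prod.ext ?_ (Prod.ext ?_ ?_)⟩
        · simp only [Prod.fst_add, Prod.smul_fst, smul_eq_mul]
          rw [← t1]; ring
        · simp only [Prod.fst_add, Prod.snd_add, Prod.smul_snd, Prod.smul_fst, smul_eq_mul]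
          rw [← t2]; ring
        · simp only [Prod.snd_add, Prod.smul_snd, smul_eq_mul]
          rw [← t3]; ring
  have hmain := main_ind p k R.card (R.image (mapR ι τ)) (S.image (mapS ι τ)) hcfg
    (Finset.card_image_of_injective _ hRinj) hRp
  rw [Finset.card_image_of_injOn hSinj] at hmain
  refine le_trans (le_of_eq ?_) hmain
  congr 1
  unfold II
  rw [Finset.sum_image hSinj, Finset.card_filter, Finset.sum_product_right]
  apply Finset.sum_congr rfl
  intro s hs
  rw [← Finset.card_filter, Finset.filter_image, Finset.card_image_of_injective _ hRinj]
  congr 1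
  apply Finset.filter_congr
  intro x _
  exact (inc_iff ι hι τ s (hden s hs) x).symm

end Rud


theorem rudnev_point_plane_incidences :
    ∃ C > (0:ℝ),
      ∀ (p : ℕ) [Fact p.Prime], p ≠ 2 →
      ∀ (R : Finset (ZMod p × ZMod p × ZMod p))
        (S : Finset ((ZMod p × ZMod p × ZMod p) × ZMod p)),
      -- every element of S is a genuine plane (nonzero coefficient vector)
      (∀ s ∈ S, s.1 ≠ (0, 0, 0)) →
      -- distinct elements of S describe distinct planes
      (∀ s₁ ∈ S, ∀ s₂ ∈ S, planeSet s₁ = planeSet s₂ → s₁ = s₂) →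
      R.card ≤ S.card → R.card ≤ p ^ 2 →
      ∀ k : ℕ, 0 < k →
      -- no line contains more than k points of R
      (∀ u v : ZMod p × ZMod p × ZMod p, v ≠ 0 →
        (R.filter fun r => ∃ t : ZMod p, r = u + t • v).card ≤ k) →
      (((R ×ˢ S).filter fun rs =>
          rs.2.1.1 * rs.1.1 + rs.2.1.2.1 * rs.1.2.1 + rs.2.1.2.2 * rs.1.2.2 = rs.2.2).card : ℝ) ≤
        C * (Real.sqrt (R.card) * S.card + (k : ℝ) * S.card) := by
  refine ⟨2 * 10 ^ 8, by norm_num, ?_⟩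
  intro p _ hp R S hS hS2 hRS hRp k hk0 hk
  let F := FractionRing (Polynomial (ZMod p))
  have hinj : Function.Injective (algebraMap (Polynomial (ZMod p)) F) :=
    IsFractionRing.injective _ _
  have hch : CharP F p := charP_of_injective_algebraMap hinj p
  let ι : ZMod p →+* F := (algebraMap (Polynomial (ZMod p)) F).comp Polynomial.C
  have key := Rud.transfer hp ι (algebraMap (Polynomial (ZMod p)) F Polynomial.X) (by
    intro a b c h
    have h1 : algebraMap (Polynomial (ZMod p)) F (Polynomial.C a + Polynomial.C b * Polynomial.X +
        Polynomial.C c * Polynomial.X ^ 2) = 0 := by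
      simpa [ι] using h
    have h2 := (map_eq_zero_iff _ hinj).1 h1
    have c0 := congrArg (fun q => Polynomial.coeff q 0) h2
    have c1 := congrArg (fun q => Polynomial.coeff q 1) h2
    have c2 := congrArg (fun q => Polynomial.coeff q 2) h2
    simp [Polynomial.coeff_X, Polynomial.coeff_C] at c0 c1 c2
    exact ⟨c0, c1, c2⟩) R S hS hS2 hRp k hk
  refine key.trans ?_
  have h1 : (R.card : ℝ) ≤ S.card := by exact_mod_cast hRS
  have h2 := Real.sqrt_nonneg (R.card : ℝ)
  have h3 : √(R.card : ℝ) * R.card ≤ √(R.card : ℝ) * S.card := mul_le_mul_of_nonneg_left h1 h2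
  have h4 : (0 : ℝ) ≤ (k : ℝ) * S.card := mul_nonneg (Nat.cast_nonneg _) (Nat.cast_nonneg _)
  linarith
end

section
/- There exists an absolute constant C > 0 such that the following holds. Let p be an odd prime, let g, h : 𝔽_p* → 𝔽_p* be arbitrary functions, define f(x,y) = g(x)(h(x)+y) on 𝔽_p* × 𝔽_p*, and set m = μ(g·h), where (g·h)(x) := g(x)h(x). Then for all nonempty finite subsets A, B, C ⊆ 𝔽_p* with |A|, |B|, |C| ≤ p^{5/8}, one has max{|f(A,B)|, |B·C|} ≥ C · min{ |A|^{1/5}|B|^{4/5}|C|^{1/5} / m^{4/5} , |B||C|^{1/2} / m , |B||A|^{1/2} / m , |B|^{2/3}|C|^{1/3}|A|^{1/3} / m^{2/3} }. -/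
open Finset Pointwise

/-- `mu g` is `max_{t ∈ 𝔽_p*} |{x ∈ 𝔽_p* : g x = t}|`. -/
def mu {p : ℕ} [NeZero p] (g : ZMod p → ZMod p) : ℕ :=
  Finset.sup (Finset.univ.filter fun t : ZMod p => t ≠ 0)
    (fun t => (Finset.univ.filter fun x : ZMod p => x ≠ 0 ∧ g x = t).card)


namespace PM
open Polynomial

/-- Chain rule for substituting univariate polynomials. -/
lemma derivative_aeval {K : Type*} [Field K] (v : Fin 3 → K[X]) (P : MvPolynomial (Fin 3) K) :
    derivative (MvPolynomial.aeval v P) =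
      ∑ i, MvPolynomial.aeval v (MvPolynomial.pderiv i P) * derivative (v i) := by
  induction P using MvPolynomial.induction_on with
  | C a => simp
  | add p q hp hq => simp [hp, hq, add_mul, Finset.sum_add_distrib]
  | mul_X p i hp =>
    have e : ∀ j, MvPolynomial.aeval v (MvPolynomial.pderiv j (p * MvPolynomial.X i)) =
        MvPolynomial.aeval v (MvPolynomial.pderiv j p) * v i
          + MvPolynomial.aeval v p * (if j = i then 1 else 0) := by
      intro j
      rw [MvPolynomial.pderiv_mul, map_add, map_mul, map_mul, MvPolynomial.aeval_X]
      by_cases hj : j = i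
      · subst hj; rw [MvPolynomial.pderiv_X_self, map_one, if_pos rfl]
      · rw [MvPolynomial.pderiv_X_of_ne (Ne.symm hj), map_zero, if_neg hj]
    rw [map_mul, MvPolynomial.aeval_X, derivative_mul, hp]
    simp only [e]
    rw [Finset.sum_mul]
    rw [show (MvPolynomial.aeval v p) * derivative (v i) =
      ∑ j, (if j = i then MvPolynomial.aeval v p * derivative (v j) else 0) by
        rw [Finset.sum_ite_eq' Finset.univ i]; simp]
    rw [← Finset.sum_add_distrib]
    apply Finset.sum_congr rfl
    intro j _
    split_ifs <;> ring

lemma pderiv_comm {K : Type*} [Field K] (i j : Fin 3) (P : MvPolynomial (Fin 3) K) :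
    MvPolynomial.pderiv i (MvPolynomial.pderiv j P) =
      MvPolynomial.pderiv j (MvPolynomial.pderiv i P) := by
  have h : ⁅(MvPolynomial.pderiv i : Derivation K (MvPolynomial (Fin 3) K) _),
      (MvPolynomial.pderiv j : Derivation K (MvPolynomial (Fin 3) K) _)⁆ = 0 := by
    apply MvPolynomial.derivation_ext
    intro k
    rw [Derivation.commutator_apply]
    simp only [MvPolynomial.pderiv_X]
    simp [Pi.single_apply]
    split_ifs <;> simp
  have := congrArg (fun D => D P) h
  simp only [Derivation.commutator_apply] at this
  simpa [sub_eq_zero] using this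

lemma natDegree_aeval_le {K : Type*} [Field K] {n : ℕ} (v : Fin n → K[X])
    (hv : ∀ i, (v i).natDegree ≤ 1) (P : MvPolynomial (Fin n) K) :
    (MvPolynomial.aeval v P).natDegree ≤ P.totalDegree := by
  have := MvPolynomial.aeval_natDegree_le P (m := P.totalDegree) le_rfl v (n := 1) hv
  simpa using this

lemma totalDegree_pderiv_le {K : Type*} [Field K] (i : Fin 3) (P : MvPolynomial (Fin 3) K) :
    (MvPolynomial.pderiv i P).totalDegree ≤ P.totalDegree - 1 := by
  unfold MvPolynomial.totalDegree
  refine Finset.sup_le ?_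
  intro m hm
  rw [MvPolynomial.mem_support_iff, MvPolynomial.coeff_pderiv] at hm
  have h1 : m + Finsupp.single i 1 ∈ P.support := by
    rw [MvPolynomial.mem_support_iff]
    intro h0; rw [h0] at hm; simp at hm
  have h2 := MvPolynomial.le_totalDegree h1
  rw [Finsupp.sum_add_index' (by simp) (by simp)] at h2
  simp at h2
  unfold MvPolynomial.totalDegree at h2
  omega

/-- Vanishing Wronskian in degree `< p`. -/
lemma wronskian_lemma {K : Type*} [Field K] (p : ℕ) [CharP K p] (U V : K[X]) (hV : V ≠ 0)
    (hU : U.natDegree < p) (hVp : V.natDegree < p)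
    (h : derivative U * V = U * derivative V) : ∃ c : K, U = C c * V := by
  have key : ∀ W : K[X], W ≠ 0 → W.natDegree < p → derivative W * V = W * derivative V →
      W.natDegree = V.natDegree := by
    intro W hW hWp hWV
    by_cases h0 : W.natDegree + V.natDegree = 0
    · omega
    have h1 := congrArg (fun F => F.coeff (W.natDegree + V.natDegree - 1)) hWV
    have e1 : (derivative W * V).coeff (W.natDegree + V.natDegree - 1)
        = W.natDegree * (W.leadingCoeff * V.leadingCoeff) := by
      by_cases hw : W.natDegree = 0
      · rw [Polynomial.eq_C_of_natDegree_eq_zero hw]; simp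
      · rw [show W.natDegree + V.natDegree - 1 = (W.natDegree - 1) + V.natDegree by omega]
        rw [Polynomial.coeff_mul_add_eq_of_natDegree_le (natDegree_derivative_le _) le_rfl,
          coeff_derivative]
        rw [show W.natDegree - 1 + 1 = W.natDegree by omega]
        have : ((W.natDegree - 1 : ℕ) : K) + 1 = W.natDegree := by
          rw [← Nat.cast_succ]; congr 1; omega
        rw [this]; simp only [leadingCoeff]; ring
    have e2 : (W * derivative V).coeff (W.natDegree + V.natDegree - 1)
        = V.natDegree * (W.leadingCoeff * V.leadingCoeff) := by
      by_cases hw : V.natDegree = 0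
      · rw [Polynomial.eq_C_of_natDegree_eq_zero hw]; simp
      · rw [show W.natDegree + V.natDegree - 1 = W.natDegree + (V.natDegree - 1) by omega]
        rw [Polynomial.coeff_mul_add_eq_of_natDegree_le le_rfl (natDegree_derivative_le _),
          coeff_derivative]
        rw [show V.natDegree - 1 + 1 = V.natDegree by omega]
        have : ((V.natDegree - 1 : ℕ) : K) + 1 = V.natDegree := by
          rw [← Nat.cast_succ]; congr 1; omega
        rw [this]; simp only [leadingCoeff]; ring
    simp only [e1, e2] at h1
    have h2 : (W.natDegree : K) = V.natDegree :=
      mul_right_cancel₀ (mul_ne_zero (leadingCoeff_ne_zero.2 hW) (leadingCoeff_ne_zero.2 hV)) h1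
    have h3 := (CharP.natCast_eq_natCast K p).1 h2 
    exact Nat.ModEq.eq_of_lt_of_lt h3 hWp hVp
  by_cases hU0 : U = 0
  · exact ⟨0, by simp [hU0]⟩
  have hd := key U hU0 hU h
  refine ⟨U.leadingCoeff / V.leadingCoeff, ?_⟩
  by_contra hne
  set c := U.leadingCoeff / V.leadingCoeff with hc
  have hlv := leadingCoeff_ne_zero.2 hV
  have hlu := leadingCoeff_ne_zero.2 hU0
  have hcne : c ≠ 0 := div_ne_zero hlu hlv
  set W := U - C c * V with hW
  have hW0 : W ≠ 0 := sub_ne_zero.2 hne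
  have hdeg : W.degree < U.degree := by
    apply degree_sub_lt_left
    · rw [degree_C_mul hcne, degree_eq_natDegree hU0, degree_eq_natDegree hV, hd]
    · exact hU0
    · simp [hc, hlv]
  have hnd : W.natDegree < U.natDegree := natDegree_lt_natDegree hW0 hdeg
  have := key W hW0 (by omega) (by
    simp only [hW, derivative_sub, derivative_mul, derivative_C, zero_mul, zero_add]
    linear_combination h)
  omega

/-- flecnode-type polynomial for family 1. Variables: 0 = τ, 1 = x, 2 = y. -/
noncomputable def flec {K : Type*} [Field K] (P : MvPolynomial (Fin 3) K) :
    MvPolynomial (Fin 3) K :=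
  MvPolynomial.pderiv 1 (MvPolynomial.pderiv 1 P) * (MvPolynomial.pderiv 0 P) ^ 2
  - 2 * MvPolynomial.pderiv 0 (MvPolynomial.pderiv 1 P) *
      (MvPolynomial.pderiv 1 P * MvPolynomial.pderiv 0 P)
  + MvPolynomial.pderiv 0 (MvPolynomial.pderiv 0 P) * (MvPolynomial.pderiv 1 P) ^ 2

noncomputable def lineY {K : Type*} [Field K] (a b y : K) : MvPolynomial (Fin 3) K →ₐ[K] K[X] :=
  MvPolynomial.aeval ![C a + C b * X, X, C y]

noncomputable def lineX {K : Type*} [Field K] (c d x : K) : MvPolynomial (Fin 3) K →ₐ[K] K[X] :=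
  MvPolynomial.aeval ![C c + C d * X, C x, X]

lemma derivative_lineY {K : Type*} [Field K] (a b y : K) (P : MvPolynomial (Fin 3) K) :
    derivative (lineY a b y P) = lineY a b y (MvPolynomial.pderiv 1 P)
      + C b * lineY a b y (MvPolynomial.pderiv 0 P) := by
  unfold lineY
  rw [derivative_aeval]
  simp [Fin.sum_univ_three]; ring

lemma derivative_lineX {K : Type*} [Field K] (c d x : K) (P : MvPolynomial (Fin 3) K) :
    derivative (lineX c d x P) = lineX c d x (MvPolynomial.pderiv 2 P)
      + C d * lineX c d x (MvPolynomial.pderiv 0 P) := by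
  unfold lineX
  rw [derivative_aeval]
  simp [Fin.sum_univ_three]; ring

lemma natDegree_lineY {K : Type*} [Field K] (a b y : K) (P : MvPolynomial (Fin 3) K) :
    (lineY a b y P).natDegree ≤ P.totalDegree := by
  apply natDegree_aeval_le
  intro i; fin_cases i
  · simp; compute_degree
  · simp
  · simp

lemma natDegree_lineX {K : Type*} [Field K] (a b y : K) (P : MvPolynomial (Fin 3) K) :
    (lineX a b y P).natDegree ≤ P.totalDegree := by
  apply natDegree_aeval_le
  intro i; fin_cases i
  · simp; compute_degree
  · simp
  · simp

lemma lineY_flec {K : Type*} [Field K] (a b y : K) (P : MvPolynomial (Fin 3) K)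
    (h : lineY a b y P = 0) : lineY a b y (flec P) = 0 := by
  have h1 := derivative_lineY a b y P
  have h2 := derivative_lineY a b y (MvPolynomial.pderiv 1 P)
  have h3 := derivative_lineY a b y (MvPolynomial.pderiv 0 P)
  rw [h] at h1
  simp only [derivative_zero] at h1
  have h4 := congrArg derivative h1
  simp only [derivative_zero, derivative_add, derivative_mul, derivative_C, zero_mul, zero_add,
    h2, h3] at h4
  rw [pderiv_comm 1 0] at h4
  unfold flec
  simp only [map_add, map_sub, map_mul, map_pow, map_ofNat]
  generalize lineY a b y (MvPolynomial.pderiv 1 (MvPolynomial.pderiv 1 P)) = P11 at *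
  generalize lineY a b y (MvPolynomial.pderiv 0 (MvPolynomial.pderiv 1 P)) = P01 at *
  generalize lineY a b y (MvPolynomial.pderiv 0 (MvPolynomial.pderiv 0 P)) = P00 at *
  generalize lineY a b y (MvPolynomial.pderiv 0 P) = P0 at *
  generalize lineY a b y (MvPolynomial.pderiv 1 P) = P1 at *
  have : P1 = - C b * P0 := by linear_combination -h1
  subst this
  linear_combination -P0^2 * h4

lemma affine_slope {K : Type*} [Field K] (p : ℕ) [CharP K p] (a b y : K)
    (P : MvPolynomial (Fin 3) K) (hp : 2 * P.totalDegree < p)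
    (h : lineY a b y P = 0) (hm : lineY a b y (MvPolynomial.pderiv 0 P) ≠ 0)
    (hH : P ∣ flec P) : ∃ e₀ e₁ : K, lineY a b y (MvPolynomial.pderiv 2 P) =
      (C e₀ + C e₁ * X) * lineY a b y (MvPolynomial.pderiv 0 P) := by
  obtain ⟨G, hG⟩ := hH
  have hH2 := congrArg (fun F => lineY a b y (MvPolynomial.pderiv 2 F)) hG
  have hH0 := congrArg (fun F => lineY a b y (MvPolynomial.pderiv 0 F)) hG
  simp only [MvPolynomial.pderiv_mul, map_add, map_mul, h, zero_mul, add_zero] at hH2 hH0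
  have h1 := derivative_lineY a b y P
  have h2 := derivative_lineY a b y (MvPolynomial.pderiv 1 P)
  have h3 := derivative_lineY a b y (MvPolynomial.pderiv 0 P)
  have n1 := derivative_lineY a b y (MvPolynomial.pderiv 2 P)
  have n2 := derivative_lineY a b y (MvPolynomial.pderiv 1 (MvPolynomial.pderiv 2 P))
  have n3 := derivative_lineY a b y (MvPolynomial.pderiv 0 (MvPolynomial.pderiv 2 P))
  have m2 := derivative_lineY a b y (MvPolynomial.pderiv 0 (MvPolynomial.pderiv 1 P))
  have m3 := derivative_lineY a b y (MvPolynomial.pderiv 0 (MvPolynomial.pderiv 0 P))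
  rw [h] at h1
  simp only [derivative_zero] at h1
  have h4 := congrArg derivative h1
  simp only [derivative_zero, derivative_add, derivative_mul, derivative_C, zero_mul, zero_add,
    h2, h3] at h4
  have n4 := congrArg derivative n1
  have m4 := congrArg derivative h3
  rw [pderiv_comm 1 0 P] at m4
  simp only [derivative_add, derivative_mul, derivative_C, zero_mul, zero_add, n2, n3, m2, m3]
    at n4 m4
  have d0 := natDegree_lineY a b y (MvPolynomial.pderiv 0 P)
  have d2 := natDegree_lineY a b y (MvPolynomial.pderiv 2 P)
  have t0 := totalDegree_pderiv_le 0 P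
  have t2 := totalDegree_pderiv_le 2 P
  unfold flec at hH2 hH0
  simp only [MvPolynomial.pderiv_mul, MvPolynomial.pderiv_pow, map_add, map_sub, map_mul, map_pow,
    map_ofNat, map_natCast, Derivation.map_natCast] at hH2 hH0
  have two2 : ∀ i, MvPolynomial.pderiv i (2 : MvPolynomial (Fin 3) K) = 0 := fun i => by
    rw [show (2 : MvPolynomial (Fin 3) K) = ((2:ℕ) : MvPolynomial (Fin 3) K) by norm_num]
    exact Derivation.map_natCast _ _
  simp only [two2, map_zero] at hH2 hH0
  simp only [pderiv_comm 2 1, pderiv_comm 2 0, pderiv_comm 1 0] at hH2 hH0 n1 n2 n3 m2 m3 h4 n4 m4 h3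
  set m := lineY a b y (MvPolynomial.pderiv 0 P) with hmdef
  set n := lineY a b y (MvPolynomial.pderiv 2 P) with hndef
  have hW : m * ((derivative (derivative n) * m - n * derivative (derivative m)) * m
      - 2 * derivative m * (derivative n * m - n * derivative m)) = 0 := by
    rw [n4, m4, n1, h3]
    have e := show m * (lineY a b y (MvPolynomial.pderiv 2 P) * lineY a b y G)
      - n * (m * lineY a b y G) = 0 by rw [← hndef]; ring
    rw [← hH2, ← hH0] at e
    have e1 : lineY a b y (MvPolynomial.pderiv 1 P) = - C b * m := by linear_combination -h1
    have e2 : lineY a b y (MvPolynomial.pderiv 1 (MvPolynomial.pderiv 1 P)) =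
      - (2 * C b * lineY a b y (MvPolynomial.pderiv 0 (MvPolynomial.pderiv 1 P))
        + C b ^ 2 * lineY a b y (MvPolynomial.pderiv 0 (MvPolynomial.pderiv 0 P))) := by
      linear_combination -h4
    simp only [e1, e2] at e
    norm_num at e
    linear_combination e
  have hW' : (derivative (derivative n) * m - n * derivative (derivative m)) * m
      - 2 * derivative m * (derivative n * m - n * derivative m) = 0 := by
    rcases mul_eq_zero.1 hW with h | h
    · exact absurd h hm
    · exact h
  obtain ⟨c, hc⟩ := wronskian_lemma p (derivative n * m - n * derivative m) (m^2)
    (pow_ne_zero _ hm) (by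
      refine lt_of_le_of_lt (natDegree_sub_le _ _) (max_lt ?_ ?_)
      · refine lt_of_le_of_lt (natDegree_mul_le) ?_
        have := natDegree_derivative_le n
        omega
      · refine lt_of_le_of_lt (natDegree_mul_le) ?_
        have := natDegree_derivative_le m
        omega) (by rw [natDegree_pow]; omega) (by
      simp only [derivative_sub, derivative_mul, pow_two]
      linear_combination m * hW')
  by_cases hd : m.natDegree + 1 < p
  · obtain ⟨c0, hc0⟩ := wronskian_lemma p (n - C c * X * m) m hm (by
      refine lt_of_le_of_lt (natDegree_sub_le _ _) (max_lt (by omega) ?_)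
      refine lt_of_le_of_lt (natDegree_mul_le) ?_
      have : (C c * X : K[X]).natDegree ≤ 1 := by compute_degree
      omega) (by omega) (by
      simp only [derivative_sub, derivative_mul, derivative_C, derivative_X]
      linear_combination hc)
    exact ⟨c0, c, by linear_combination hc0⟩
  · have : P.totalDegree = 0 := by omega
    have hz : n.natDegree = 0 := by omega
    have hz' : m.natDegree = 0 := by omega
    rw [eq_C_of_natDegree_eq_zero hz'] at hm ⊢
    rw [eq_C_of_natDegree_eq_zero hz]
    have : m.coeff 0 ≠ 0 := by simpa using hm
    refine ⟨n.coeff 0 / m.coeff 0, 0, ?_⟩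
    simp only [map_zero, zero_mul, add_zero]
    rw [← C_mul, div_mul_cancel₀ _ this]

end PM


namespace PM
open Polynomial

lemma totalDegree_resultant_le {K : Type*} [Field K] (P H : MvPolynomial (Fin 3) K) :
    (resultant (MvPolynomial.finSuccEquiv K 2 P) (MvPolynomial.finSuccEquiv K 2 H)).totalDegree
      ≤ 2 * P.totalDegree * H.totalDegree := by
  set f := MvPolynomial.finSuccEquiv K 2 P with hf
  set g := MvPolynomial.finSuccEquiv K 2 H with hg
  have key : ∀ Q : MvPolynomial (Fin 3) K, ∀ i,
      ((MvPolynomial.finSuccEquiv K 2 Q).coeff i).totalDegree ≤ Q.totalDegree := by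
    intro Q i
    by_cases h : (MvPolynomial.finSuccEquiv K 2 Q).coeff i = 0
    · rw [h]; simp
    · have := MvPolynomial.totalDegree_coeff_finSuccEquiv_add_le Q i h
      omega
  have ndeg : ∀ Q : MvPolynomial (Fin 3) K,
      (MvPolynomial.finSuccEquiv K 2 Q).natDegree ≤ Q.totalDegree := by
    intro Q
    rw [MvPolynomial.natDegree_finSuccEquiv]
    exact MvPolynomial.degreeOf_le_totalDegree _ _
  unfold resultant
  rw [Matrix.det_apply]
  apply MvPolynomial.totalDegree_finsetSum_le
  intro σ _
  refine le_trans (MvPolynomial.totalDegree_smul_le _ _) ?_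
  refine le_trans (MvPolynomial.totalDegree_finsetProd _ _) ?_
  rw [Fin.sum_univ_add]
  have b1 : ∀ i : Fin f.natDegree, (sylvester f g f.natDegree g.natDegree
      (σ (Fin.castAdd _ i)) (Fin.castAdd _ i)).totalDegree ≤ H.totalDegree := by
    intro i
    simp only [sylvester, Matrix.of_apply, Fin.addCases_left]
    split_ifs
    · exact key H _
    · simp
  have b2 : ∀ i : Fin g.natDegree, (sylvester f g f.natDegree g.natDegree
      (σ (Fin.natAdd _ i)) (Fin.natAdd _ i)).totalDegree ≤ P.totalDegree := by
    intro i
    simp only [sylvester, Matrix.of_apply, Fin.addCases_right]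
    split_ifs
    · exact key P _
    · simp
  refine le_trans (add_le_add (Finset.sum_le_sum fun i _ => b1 i)
    (Finset.sum_le_sum fun i _ => b2 i)) ?_
  simp only [Finset.sum_const, Finset.card_univ, Fintype.card_fin, smul_eq_mul]
  have h1 := Nat.mul_le_mul_right H.totalDegree (ndeg P)
  have h2 := Nat.mul_le_mul_right P.totalDegree (ndeg H)
  nlinarith

lemma finSucc_symm_C {K : Type*} [Field K] (R : MvPolynomial (Fin 2) K) :
    (MvPolynomial.finSuccEquiv K 2).symm (C R) = MvPolynomial.rename Fin.succ R := by
  rw [AlgEquiv.symm_apply_eq]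
  induction R using MvPolynomial.induction_on with
  | C a => simp [MvPolynomial.finSuccEquiv_apply]
  | add p q hp hq => simp [hp, hq]
  | mul_X p i hp =>
    rw [map_mul, map_mul, map_mul, hp, MvPolynomial.rename_X, MvPolynomial.finSuccEquiv_X_succ]

/-- Elimination. -/
lemma exists_resultant {K : Type*} [Field K] (P H : MvPolynomial (Fin 3) K) (hP : Irreducible P)
    (hd : (MvPolynomial.finSuccEquiv K 2 P).natDegree ≠ 0) (hPH : ¬ P ∣ H) :
    ∃ R : MvPolynomial (Fin 2) K, R ≠ 0 ∧ R.totalDegree ≤ 2 * P.totalDegree * H.totalDegree ∧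
      ∃ u v, MvPolynomial.rename Fin.succ R = P * u + H * v := by
  set f := MvPolynomial.finSuccEquiv K 2 P with hf
  set g := MvPolynomial.finSuccEquiv K 2 H with hg
  have hfi : Irreducible f := (MulEquiv.irreducible_iff (MvPolynomial.finSuccEquiv K 2)).2 hP
  have hprim : f.IsPrimitive := hfi.isPrimitive hd
  have hnd : ¬ f ∣ g := by
    rwa [hf, hg, map_dvd_iff]
  refine ⟨resultant f g, ?_, totalDegree_resultant_le P H, ?_⟩
  · let F := FractionRing (MvPolynomial (Fin 2) K)
    let φ := algebraMap (MvPolynomial (Fin 2) K) F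
    have hφ : Function.Injective φ := IsFractionRing.injective _ _
    let _ : GCDMonoid (MvPolynomial (Fin 2) K) := 
      UniqueFactorizationMonoid.toGCDMonoid _
    let _ : NormalizedGCDMonoid (MvPolynomial (Fin 2) K) := Nonempty.some inferInstance
    have h1 : Irreducible (f.map φ) := 
      (hprim.irreducible_iff_irreducible_map_fraction_map (K := F)).1 hfi
    have h2 : ¬ f.map φ ∣ g.map φ := by
      rw [← hprim.dvd_iff_fraction_map_dvd_fraction_map F]; exact hnd
    have h3 : IsCoprime (f.map φ) (g.map φ) := h1.coprime_iff_not_dvd.2 h2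
    intro h0
    have h4 : resultant (f.map φ) (g.map φ) ≠ 0 := by
      intro h; rw [resultant_eq_zero_iff] at h; exact h.2 h3
    apply h4
    rw [natDegree_map_eq_of_injective hφ, natDegree_map_eq_of_injective hφ, resultant_map_map, h0,
      map_zero]
  · obtain ⟨u, v, -, -, h⟩ := exists_mul_add_mul_eq_C_resultant f g le_rfl le_rfl (Or.inl hd)
    refine ⟨(MvPolynomial.finSuccEquiv K 2).symm u, (MvPolynomial.finSuccEquiv K 2).symm v, ?_⟩
    have := congrArg (MvPolynomial.finSuccEquiv K 2).symm h
    rw [finSucc_symm_C, map_add, map_mul, map_mul] at this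
    rw [← this, hf, hg]; simp

lemma lineY_rename {K : Type*} [Field K] (a b y : K) (R : MvPolynomial (Fin 2) K) :
    lineY a b y (MvPolynomial.rename Fin.succ R) = MvPolynomial.aeval ![X, C y] R := by
  unfold lineY
  rw [MvPolynomial.aeval_rename]
  congr 2

lemma card_vertical {K : Type*} [Field K] [DecidableEq K] (R : MvPolynomial (Fin 2) K)
    (hR : R ≠ 0) (Y : Finset K) (hY : ∀ y ∈ Y, MvPolynomial.aeval ![X, C y] R = (0 : K[X])) :
    Y.card ≤ R.totalDegree := by
  have h0 : MvPolynomial.finSuccEquiv K 1 R ≠ 0 := by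
    simpa using hR
  obtain ⟨i, hi⟩ : ∃ i, (MvPolynomial.finSuccEquiv K 1 R).coeff i ≠ 0 := by
    by_contra! h
    exact h0 (Polynomial.ext (by simpa using h))
  set r := (MvPolynomial.finSuccEquiv K 1 R).coeff i with hr
  set ρ : K[X] := MvPolynomial.aeval ![X] r with hρ
  have hinv : ∀ r : MvPolynomial (Fin 1) K,
      Polynomial.aeval (MvPolynomial.X 0 : MvPolynomial (Fin 1) K) 
        (MvPolynomial.aeval ![(X : K[X])] r) = r := by
    intro r
    induction r using MvPolynomial.induction_on with
    | C a => simp [MvPolynomial.algebraMap_eq]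
    | add p q hp hq => simp [hp, hq]
    | mul_X p i hp => fin_cases i; simp [hp]
  have hρ0 : ρ ≠ 0 := by
    intro h
    apply hi
    rw [← hinv r, ← hρ, h, map_zero]
  have hdeg : ρ.natDegree ≤ R.totalDegree := by
    refine le_trans (natDegree_aeval_le _ ?_ _) ?_
    · intro i; fin_cases i; simp
    · have := MvPolynomial.totalDegree_coeff_finSuccEquiv_add_le R i hi
      rw [← hr] at this
      omega
  have hmap : ∀ y (R : MvPolynomial (Fin 2) K), (MvPolynomial.aeval ![X, C y] R : K[X]) =
      (MvPolynomial.finSuccEquiv K 1 R).map (MvPolynomial.eval ![y]) := by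
    intro y R
    induction R using MvPolynomial.induction_on with
    | C a => simp [MvPolynomial.finSuccEquiv_apply]
    | add p q hp hq => simp [hp, hq]
    | mul_X p i hp => 
      rw [map_mul, map_mul, Polynomial.map_mul, hp, MvPolynomial.aeval_X]
      congr 1
      fin_cases i
      · simp [MvPolynomial.finSuccEquiv_apply]
      · have := MvPolynomial.finSuccEquiv_X_succ (R := K) (n := 1) (j := 0)
        simp only [Fin.succ_zero_eq_one] at this
        simp [this]
  refine le_trans ?_ hdeg
  apply Polynomial.card_le_degree_of_subset_roots
  intro y hy
  rw [Polynomial.mem_roots hρ0]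
  have h1 := hY y hy
  rw [hmap] at h1
  have h2 := congrArg (fun F => F.coeff i) h1
  simp only [coeff_map, coeff_zero] at h2
  rw [← hr] at h2
  have : ∀ r : MvPolynomial (Fin 1) K, eval y (MvPolynomial.aeval ![(X : K[X])] r) 
      = MvPolynomial.eval ![y] r := by
    intro r
    induction r using MvPolynomial.induction_on with
    | C a => simp
    | add p q hp hq => simp [hp, hq]
    | mul_X p i hp => fin_cases i; simp [hp]
  rw [IsRoot, hρ, this, h2]

/-- Number of lines of the first family in both `P` and `H`. -/
lemma card_common_lines {K : Type*} [Field K] [DecidableEq K] (P H : MvPolynomial (Fin 3) K)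
    (hP : Irreducible P)
    (hd : (MvPolynomial.finSuccEquiv K 2 P).natDegree ≠ 0) (hPH : ¬ P ∣ H) (Y : Finset K)
    (a b : K → K)
    (hY : ∀ y ∈ Y, lineY (a y) (b y) y P = 0 ∧ lineY (a y) (b y) y H = 0) :
    Y.card ≤ 2 * P.totalDegree * H.totalDegree := by
  obtain ⟨R, hR0, hRd, u, v, huv⟩ := exists_resultant P H hP hd hPH
  refine le_trans (card_vertical R hR0 Y ?_) hRd
  intro y hy
  rw [← lineY_rename (a y) (b y), huv, map_add, map_mul, map_mul, (hY y hy).1, (hY y hy).2]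
  simp

lemma card_lines_cyl {K : Type*} [Field K] [DecidableEq K] (P : MvPolynomial (Fin 3) K)
    (hP : P ≠ 0)
    (hd : (MvPolynomial.finSuccEquiv K 2 P).natDegree = 0) (Y : Finset K)
    (a b : K → K)
    (hY : ∀ y ∈ Y, lineY (a y) (b y) y P = 0) :
    Y.card ≤ P.totalDegree := by
  have h1 := eq_C_of_natDegree_eq_zero hd
  set R := (MvPolynomial.finSuccEquiv K 2 P).coeff 0 with hR
  have h2 : P = MvPolynomial.rename Fin.succ R := by
    rw [← finSucc_symm_C, ← h1]; simp
  have hR0 : R ≠ 0 := by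
    intro h; rw [h] at h2; simp at h2; exact hP h2
  refine le_trans (card_vertical R hR0 Y ?_) ?_
  · intro y hy
    rw [← lineY_rename (a y) (b y), ← h2]; exact hY y hy
  · have := MvPolynomial.totalDegree_coeff_finSuccEquiv_add_le P 0 hR0
    simpa using this

end PM


namespace PM
open Polynomial
open scoped Classical

lemma eval_lineY {K : Type*} [Field K] (a b y x : K) (P : MvPolynomial (Fin 3) K) :
    eval x (lineY a b y P) = MvPolynomial.eval ![a + b * x, x, y] P := by
  unfold lineY
  induction P using MvPolynomial.induction_on with
  | C a => simp
  | add p q hp hq => simp [hp, hq]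
  | mul_X p i hp =>
    rw [map_mul, map_mul, eval_mul, hp, MvPolynomial.aeval_X, MvPolynomial.eval_X]
    congr 1
    fin_cases i <;> simp

lemma eval_lineX {K : Type*} [Field K] (c d x y : K) (P : MvPolynomial (Fin 3) K) :
    eval y (lineX c d x P) = MvPolynomial.eval ![c + d * y, x, y] P := by
  unfold lineX
  induction P using MvPolynomial.induction_on with
  | C a => simp
  | add p q hp hq => simp [hp, hq]
  | mul_X p i hp =>
    rw [map_mul, map_mul, eval_mul, hp, MvPolynomial.aeval_X, MvPolynomial.eval_X]
    congr 1
    fin_cases i <;> simp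

lemma card_le_of_roots {K : Type*} [Field K] (F : K[X]) (hF : F ≠ 0) (S : Finset K)
    (h : ∀ x ∈ S, eval x F = 0) : S.card ≤ F.natDegree := by
  apply Polynomial.card_le_degree_of_subset_roots
  intro x hx
  rw [Polynomial.mem_roots hF]
  exact h x hx

/-- incidence counting for fixed `y` restricted to lines in `Q`. -/
noncomputable def cnt {K : Type*} [Field K] (X : Finset K) (a b c d : K → K)
    (Q : MvPolynomial (Fin 3) K) (y : K) : Finset K :=
  X.filter (fun x => lineX (c x) (d x) x Q = 0 ∧ a y + b y * x = c x + d x * y)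

lemma card_cnt_of_not {K : Type*} [Field K] (X : Finset K) (a b c d : K → K)
    (Q : MvPolynomial (Fin 3) K) (y : K) (h : lineY (a y) (b y) y Q ≠ 0) :
    (cnt X a b c d Q y).card ≤ Q.totalDegree := by
  refine le_trans (card_le_of_roots _ h _ ?_) (natDegree_lineY _ _ _ _)
  intro x hx
  unfold cnt at hx
  simp only [Finset.mem_filter] at hx
  rw [eval_lineY, hx.2.2, ← eval_lineX, hx.2.1, eval_zero]

lemma totalDegree_flec_le {K : Type*} [Field K] (P : MvPolynomial (Fin 3) K) :
    (flec P).totalDegree ≤ 3 * P.totalDegree := by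
  have t : ∀ i (Q : MvPolynomial (Fin 3) K), (MvPolynomial.pderiv i Q).totalDegree ≤ Q.totalDegree :=
    fun i Q => (totalDegree_pderiv_le i Q).trans (Nat.sub_le _ _)
  have t2 : ∀ i j, (MvPolynomial.pderiv i (MvPolynomial.pderiv j P)).totalDegree ≤ P.totalDegree :=
    fun i j => (t _ _).trans (t _ _)
  unfold flec
  refine (MvPolynomial.totalDegree_add _ _).trans (max_le ?_ ?_)
  · refine (MvPolynomial.totalDegree_sub _ _).trans (max_le ?_ ?_)
    · refine (MvPolynomial.totalDegree_mul _ _).trans ?_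
      have := MvPolynomial.totalDegree_pow (MvPolynomial.pderiv 0 P) 2
      have := t2 1 1; have := t 0 P
      omega
    · refine (MvPolynomial.totalDegree_mul _ _).trans ?_
      have h1 := MvPolynomial.totalDegree_mul (2 : MvPolynomial (Fin 3) K)
        (MvPolynomial.pderiv 0 (MvPolynomial.pderiv 1 P))
      have h2 := MvPolynomial.totalDegree_mul (MvPolynomial.pderiv 1 P) (MvPolynomial.pderiv 0 P)
      have h3 : (2 : MvPolynomial (Fin 3) K).totalDegree = 0 := by
        rw [show (2 : MvPolynomial (Fin 3) K) = MvPolynomial.C 2 from (map_ofNat _ 2).symm]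
        exact MvPolynomial.totalDegree_C _
      have := t2 0 1; have := t 0 P; have := t 1 P
      omega
  · refine (MvPolynomial.totalDegree_mul _ _).trans ?_
    have := MvPolynomial.totalDegree_pow (MvPolynomial.pderiv 1 P) 2
    have := t2 0 0; have := t 1 P
    omega

lemma pderiv_ne_zero {K : Type*} [Field K] (p : ℕ) [CharP K p] (P : MvPolynomial (Fin 3) K)
    (hp : P.totalDegree < p) (hd : (MvPolynomial.finSuccEquiv K 2 P).natDegree ≠ 0) :
    MvPolynomial.pderiv 0 P ≠ 0 := by
  rw [MvPolynomial.natDegree_finSuccEquiv] at hd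
  have : ∃ m ∈ P.support, m 0 ≠ 0 := by
    by_contra! h
    apply hd
    have := (MvPolynomial.degreeOf_le_iff (d := 0) (n := (0 : Fin 3)) (f := P)).2
      (fun m hm => by simp [h m hm])
    omega
  obtain ⟨m, hm, hm0⟩ := this
  intro h0
  have h1 := MvPolynomial.coeff_pderiv (i := 0) P (m - Finsupp.single 0 1)
  have h2 : m - Finsupp.single 0 1 + Finsupp.single 0 1 = m := by
    apply tsub_add_cancel_of_le
    rw [Finsupp.single_le_iff]; omega
  rw [h0, h2, MvPolynomial.coeff_zero] at h1
  have h3 : MvPolynomial.coeff m P ≠ 0 := MvPolynomial.mem_support_iff.1 hm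
  have h4 : m 0 ≤ P.totalDegree := by
    refine le_trans ?_ (MvPolynomial.degreeOf_le_totalDegree P 0)
    exact MvPolynomial.monomial_le_degreeOf 0 hm
  have h5 := (mul_eq_zero.1 h1.symm).resolve_left h3
  have h6 : ((m 0 : ℕ) : K) = 0 := by
    rw [← h5]
    simp only [Finsupp.coe_tsub, Pi.sub_apply, Finsupp.single_eq_same]
    rw [← Nat.cast_succ]; congr 1; omega
  rw [CharP.cast_eq_zero_iff K p] at h6
  have := Nat.le_of_dvd (by omega) h6
  omega

lemma card_cnt_good {K : Type*} [Field K] (p : ℕ) [CharP K p] (X : Finset K) (a b c d : K → K)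
    (k : ℕ) (hk : ∀ A0 B0 C0 E0 : K,
      (X.filter (fun x => c x = A0 + B0 * x ∧ d x = C0 + E0 * x)).card ≤ k)
    (P : MvPolynomial (Fin 3) K) (hp : 2 * P.totalDegree < p) (y : K)
    (h : lineY (a y) (b y) y P = 0)
    (hm : lineY (a y) (b y) y (MvPolynomial.pderiv 0 P) ≠ 0)
    (hH : P ∣ flec P) :
    (cnt X a b c d P y).card ≤ P.totalDegree + k := by
  obtain ⟨e₀, e₁, he⟩ := affine_slope p (a y) (b y) y P hp h hm hH
  set S1 := X.filter (fun x => eval x (lineY (a y) (b y) y (MvPolynomial.pderiv 0 P)) = 0) with hS1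
  set S2 := X.filter (fun x => c x = (a y + e₀ * y) + (b y + e₁ * y) * x ∧
    d x = (-e₀) + (-e₁) * x) with hS2
  have hsub : cnt X a b c d P y ⊆ S1 ∪ S2 := by
    intro x hx
    unfold cnt at hx
    simp only [Finset.mem_filter] at hx
    obtain ⟨hxX, hl, hinc⟩ := hx
    rw [Finset.mem_union]
    by_cases h0 : eval x (lineY (a y) (b y) y (MvPolynomial.pderiv 0 P)) = 0
    · left; simp [hS1, hxX, h0]
    · right
      have h1 := derivative_lineX (c x) (d x) x P
      rw [hl, derivative_zero] at h1
      have h2 := congrArg (eval y) h1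
      simp only [eval_zero, eval_add, eval_mul, eval_C, eval_lineX, ← hinc] at h2
      have h3 := congrArg (eval x) he
      simp only [eval_add, eval_mul, eval_C, eval_X, eval_lineY] at h3
      rw [eval_lineY] at h0
      rw [h3] at h2
      have h4 : (e₀ + e₁ * x + d x) * 
        (MvPolynomial.eval ![a y + b y * x, x, y]) ((MvPolynomial.pderiv 0) P) = 0 := by
        linear_combination -h2
      have h5 := (mul_eq_zero.1 h4).resolve_right h0
      simp only [hS2, Finset.mem_filter]
      refine ⟨hxX, ?_, by linear_combination h5⟩
      linear_combination -hinc - y * h5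
  refine (Finset.card_le_card hsub).trans ((Finset.card_union_le _ _).trans ?_)
  refine add_le_add ?_ (hk _ _ _ _)
  refine le_trans (card_le_of_roots _ hm _ ?_) ((natDegree_lineY _ _ _ _).trans
    ((totalDegree_pderiv_le 0 P).trans (Nat.sub_le _ _)))
  intro x hx
  simp only [hS1, Finset.mem_filter] at hx
  exact hx.2

lemma bad_irreducible {K : Type*} [Field K] (p : ℕ) [CharP K p] (X Y : Finset K) (a b c d : K → K)
    (k : ℕ) (hk : ∀ A0 B0 C0 E0 : K,
      (X.filter (fun x => c x = A0 + B0 * x ∧ d x = C0 + E0 * x)).card ≤ k)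
    (P : MvPolynomial (Fin 3) K) (hP : Irreducible P) (hp : 2 * P.totalDegree < p) :
    ∃ Bad ⊆ Y, Bad.card ≤ 8 * P.totalDegree ^ 2 ∧ ∀ y ∈ Y, y ∉ Bad →
      (cnt X a b c d P y).card ≤ P.totalDegree + k := by
  set S := Y.filter (fun y => lineY (a y) (b y) y P = 0) with hS
  have hSS : ∀ y ∈ Y, y ∉ S → (cnt X a b c d P y).card ≤ P.totalDegree + k := by
    intro y hy hyS
    have : lineY (a y) (b y) y P ≠ 0 := fun h => hyS (by simp [hS, hy, h])
    exact (card_cnt_of_not X a b c d P y this).trans (Nat.le_add_right _ _)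
  by_cases hd : (MvPolynomial.finSuccEquiv K 2 P).natDegree = 0
  · refine ⟨S, Finset.filter_subset _ _, ?_, hSS⟩
    have := card_lines_cyl P hP.ne_zero hd S a b (fun y hy => (Finset.mem_filter.1 hy).2)
    nlinarith
  by_cases hfl : P ∣ flec P
  · refine ⟨S.filter (fun y => lineY (a y) (b y) y (MvPolynomial.pderiv 0 P) = 0),
      (Finset.filter_subset _ _).trans (Finset.filter_subset _ _), ?_, ?_⟩
    · have h0 := pderiv_ne_zero p P (by omega) hd
      have hle := totalDegree_pderiv_le 0 P
      have hn : ¬ P ∣ MvPolynomial.pderiv 0 P := by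
        rintro ⟨G, hG⟩
        have hG0 : G ≠ 0 := by rintro rfl; rw [mul_zero] at hG; exact h0 hG
        rw [hG, MvPolynomial.totalDegree_mul_of_isDomain hP.ne_zero hG0] at hle
        have : (MvPolynomial.finSuccEquiv K 2 P).natDegree ≤ P.totalDegree := by
          rw [MvPolynomial.natDegree_finSuccEquiv]
          exact MvPolynomial.degreeOf_le_totalDegree _ _
        omega
      have := card_common_lines P _ hP hd hn
        (S.filter (fun y => lineY (a y) (b y) y (MvPolynomial.pderiv 0 P) = 0)) a b (by
          intro y hy
          simp only [hS, Finset.mem_filter] at hy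
          exact ⟨hy.1.2, hy.2⟩)
      have h3 : (MvPolynomial.pderiv 0 P).totalDegree ≤ P.totalDegree := by omega
      nlinarith
    · intro y hy hyB
      by_cases hyS : y ∈ S
      · refine card_cnt_good p X a b c d k hk P hp y (Finset.mem_filter.1 hyS).2 ?_ hfl
        intro h; exact hyB (Finset.mem_filter.2 ⟨hyS, h⟩)
      · exact hSS y hy hyS
  · refine ⟨S, Finset.filter_subset _ _, ?_, hSS⟩
    have := card_common_lines P _ hP hd hfl S a b (by
          intro y hy
          have := (Finset.mem_filter.1 hy).2
          exact ⟨this, lineY_flec _ _ _ _ this⟩)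
    have h3 := totalDegree_flec_le P
    nlinarith

lemma card_common_lines' {K : Type*} [Field K] (P H : MvPolynomial (Fin 3) K)
    (hP : Irreducible P) (hPd : P.totalDegree ≠ 0)
    (hPH : ¬ P ∣ H) (hHd : H.totalDegree ≠ 0) (Y : Finset K)
    (a b : K → K)
    (hY : ∀ y ∈ Y, lineY (a y) (b y) y P = 0 ∧ lineY (a y) (b y) y H = 0) :
    Y.card ≤ 2 * P.totalDegree * H.totalDegree := by
  by_cases hd : (MvPolynomial.finSuccEquiv K 2 P).natDegree = 0
  · have := card_lines_cyl P hP.ne_zero hd Y a b (fun y hy => (hY y hy).1)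
    have := Nat.pos_of_ne_zero hHd
    nlinarith
  · exact card_common_lines P H hP hd hPH Y a b hY

lemma bad_general {K : Type*} [Field K] (p : ℕ) [CharP K p] (X Y : Finset K) (a b c d : K → K)
    (k : ℕ) (hk : ∀ A0 B0 C0 E0 : K,
      (X.filter (fun x => c x = A0 + B0 * x ∧ d x = C0 + E0 * x)).card ≤ k)
    (Q : MvPolynomial (Fin 3) K) : Q ≠ 0 → 2 * Q.totalDegree < p →
    ∃ Bad ⊆ Y, Bad.card ≤ 8 * Q.totalDegree ^ 2 ∧ ∀ y ∈ Y, y ∉ Bad →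
      (cnt X a b c d Q y).card ≤ Q.totalDegree + k := by
  induction Q using UniqueFactorizationMonoid.induction_on_prime with
  | h₁ => intro h; exact absurd rfl h
  | h₂ Q hQ =>
    intro _ _
    refine ⟨∅, by simp, by simp, ?_⟩
    intro y _ _
    have : lineY (a y) (b y) y Q ≠ 0 := (hQ.map (lineY (a y) (b y) y)).ne_zero
    exact (card_cnt_of_not X a b c d Q y this).trans (Nat.le_add_right _ _)
  | h₃ Q P hQ hP ih =>
    intro h0 hdeg
    have hPi := hP.irreducible
    rw [MvPolynomial.totalDegree_mul_of_isDomain hP.ne_zero hQ] at hdeg ⊢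
    obtain ⟨B1, hB1Y, hB1, hB1'⟩ := ih hQ (by omega)
    have hcntmul : ∀ y, cnt X a b c d (P * Q) y ⊆ cnt X a b c d P y ∪ cnt X a b c d Q y := by
      intro y x hx
      unfold cnt at *
      simp only [Finset.mem_filter, Finset.mem_union, map_mul, mul_eq_zero] at hx ⊢
      tauto
    by_cases hPQ : P ∣ Q
    · refine ⟨B1, hB1Y, hB1.trans (by gcongr; omega), ?_⟩
      intro y hy hyB
      have : cnt X a b c d (P * Q) y ⊆ cnt X a b c d Q y := by
        intro x hx
        unfold cnt at *
        simp only [Finset.mem_filter, map_mul, mul_eq_zero] at hx ⊢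
        refine ⟨hx.1, ?_, hx.2.2⟩
        rcases hx.2.1 with h | h
        · obtain ⟨G, rfl⟩ := hPQ
          rw [map_mul, h, zero_mul]
        · exact h
      have := Finset.card_le_card this
      have := hB1' y hy hyB
      omega
    obtain ⟨B2, hB2Y, hB2, hB2'⟩ := bad_irreducible p X Y a b c d k hk P hPi (by omega)
    set B3 := Y.filter (fun y => lineY (a y) (b y) y P = 0 ∧ lineY (a y) (b y) y Q = 0) with hB3
    have hPd : P.totalDegree ≠ 0 := by
      intro h
      rw [MvPolynomial.totalDegree_eq_zero_iff_eq_C] at h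
      apply hPi.not_isUnit
      rw [h]
      apply IsUnit.map
      rw [isUnit_iff_ne_zero]
      intro h1
      rw [h1, map_zero] at h
      exact hP.ne_zero h
    have hB3c : B3.card ≤ 2 * P.totalDegree * Q.totalDegree := by
      by_cases hQd : Q.totalDegree = 0
      · have : B3 = ∅ := by
          rw [Finset.eq_empty_iff_forall_notMem]
          intro y hy
          have h1 := (Finset.mem_filter.1 hy).2.2
          rw [MvPolynomial.totalDegree_eq_zero_iff_eq_C] at hQd
          rw [hQd] at h1
          unfold lineY at h1
          rw [MvPolynomial.aeval_C] at h1
          simp at h1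
          rw [h1, map_zero] at hQd
          exact hQ hQd
        rw [this]; simp
      · exact card_common_lines' P Q hPi hPd hPQ hQd B3 a b (fun y hy => (Finset.mem_filter.1 hy).2)
    refine ⟨B1 ∪ B2 ∪ B3, ?_, ?_, ?_⟩
    · exact Finset.union_subset (Finset.union_subset hB1Y hB2Y) (Finset.filter_subset _ _)
    · have h1 := Finset.card_union_le (B1 ∪ B2) B3
      have h2 := Finset.card_union_le B1 B2
      nlinarith
    · intro y hy hyB
      simp only [Finset.mem_union, not_or] at hyB
      have h1 := (Finset.card_le_card (hcntmul y)).trans (Finset.card_union_le _ _)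
      have h2 := hB1' y hy hyB.1.1
      have h3 := hB2' y hy hyB.1.2
      by_cases hl : lineY (a y) (b y) y P = 0
      · have : lineY (a y) (b y) y Q ≠ 0 := fun h => hyB.2 (Finset.mem_filter.2 ⟨hy, hl, h⟩)
        have := card_cnt_of_not X a b c d Q y this
        omega
      · have := card_cnt_of_not X a b c d P y hl
        omega

end PM


namespace PM
open Polynomial
open scoped Classical

lemma exists_Q {K : Type*} [Field K] (X1 : Finset K) (c d : K → K) (q e : ℕ) (hq : X1.card ≤ q)
    (he : 2 * q ≤ (e + 1) ^ 2) :
    ∃ Q : MvPolynomial (Fin 3) K, Q ≠ 0 ∧ Q.totalDegree ≤ 3 * e ∧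
      ∀ x ∈ X1, lineX (c x) (d x) x Q = 0 := by
  let ι := Fin 3 → Fin (e + 1)
  let ex : ι → (Fin 3 →₀ ℕ) := fun i => Finsupp.equivFunOnFinite.symm (fun t => (i t : ℕ))
  have hex : Function.Injective ex := by
    intro i j hij
    ext t
    have := DFunLike.congr_fun hij t
    simpa [ex] using this
  let mon : ι → MvPolynomial (Fin 3) K := fun i => MvPolynomial.monomial (ex i) 1
  let LQ : (ι → K) →ₗ[K] MvPolynomial (Fin 3) K := Fintype.linearCombination K mon
  have hLQ : ∀ v, LQ v = ∑ i, v i • mon i := fun v => Fintype.linearCombination_apply K mon v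
  let L : (ι → K) →ₗ[K] ((X1 × Fin (2 * e + 1)) → K) := LinearMap.pi fun xj =>
    (Polynomial.lcoeff K (xj.2 : ℕ)) ∘ₗ (lineX (c xj.1) (d xj.1) xj.1).toLinearMap ∘ₗ LQ
  have hker : LinearMap.ker L ≠ ⊥ := by
    apply LinearMap.ker_ne_bot_of_finrank_lt
    rw [Module.finrank_fintype_fun_eq_card, Module.finrank_fintype_fun_eq_card]
    simp only [Fintype.card_prod, Fintype.card_coe, Fintype.card_fin, ι, Fintype.card_fun]
    rcases Nat.eq_zero_or_pos q with h0 | h0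
    · have : X1.card = 0 := by omega
      rw [this]; simp
    · calc X1.card * (2 * e + 1) ≤ q * (2 * e + 1) := by gcongr
        _ < 2 * q * (e + 1) := by nlinarith
        _ ≤ (e + 1) ^ 2 * (e + 1) := by gcongr
        _ = (e + 1) ^ 3 := by ring
  obtain ⟨v, hv, hv0⟩ := (Submodule.ne_bot_iff _).1 hker
  refine ⟨LQ v, ?_, ?_, ?_⟩
  · obtain ⟨i, hi⟩ := Function.ne_iff.1 hv0
    intro h
    apply hi
    have := congrArg (MvPolynomial.coeff (ex i)) h
    rw [hLQ, MvPolynomial.coeff_sum] at this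
    simp only [mon, MvPolynomial.coeff_smul, MvPolynomial.coeff_monomial, hex.eq_iff,
      MvPolynomial.coeff_zero] at this
    rw [Finset.sum_eq_single i (fun j _ hj => by simp [hj]) (by simp)] at this
    simpa using this
  · rw [hLQ]
    apply MvPolynomial.totalDegree_finsetSum_le
    intro i _
    refine (MvPolynomial.totalDegree_smul_le _ _).trans ?_
    refine (MvPolynomial.totalDegree_monomial_le _ _).trans ?_
    rw [Finsupp.sum_fintype _ _ (by simp), Fin.sum_univ_three]
    have h0 := (i 0).2; have h1 := (i 1).2; have h2 := (i 2).2
    simp only [ex, Finsupp.equivFunOnFinite_symm_apply_apply, id]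
    omega
  · intro x hx
    have hdeg : (lineX (c x) (d x) x (LQ v)).natDegree ≤ 2 * e := by
      rw [hLQ, map_sum]
      apply natDegree_sum_le_of_forall_le
      intro i _
      rw [map_smul]
      refine (natDegree_smul_le _ _).trans ?_
      have h0 := (i 0).2; have h1 := (i 1).2; have h2 := (i 2).2
      simp only [lineX, mon, MvPolynomial.aeval_monomial]
      rw [Finsupp.prod_fintype _ _ (by simp), Fin.prod_univ_three]
      simp only [ex, Finsupp.equivFunOnFinite_symm_apply_apply, map_one, one_mul,
        Matrix.cons_val_zero, Matrix.cons_val_one, Matrix.cons_val]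
      have d1 : ((C (c x) + C (d x) * Polynomial.X) ^ (i 0 : ℕ)).natDegree ≤ e := by
        refine natDegree_pow_le.trans ?_
        have : (C (c x) + C (d x) * Polynomial.X).natDegree ≤ 1 := by compute_degree
        nlinarith
      have d2 : ((C x : K[X]) ^ (i 1 : ℕ)).natDegree = 0 := by
        rw [← C_pow]; exact natDegree_C _
      have d3 : ((Polynomial.X : K[X]) ^ (i 2 : ℕ)).natDegree ≤ e := by
        rw [natDegree_X_pow]; omega
      refine natDegree_mul_le.trans ?_
      have := natDegree_mul_le (p := (C (c x) + C (d x) * Polynomial.X) ^ (i 0 : ℕ))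
        (q := (C x : K[X]) ^ (i 1 : ℕ))
      omega
    ext j
    rw [coeff_zero]
    by_cases hj : j < 2 * e + 1
    · have := congrFun (LinearMap.mem_ker.1 hv) (⟨x, hx⟩, ⟨j, hj⟩)
      simpa [L] using this
    · apply coeff_eq_zero_of_natDegree_lt
      omega

lemma greedy {α β : Type*} (X : Finset α) (Y : Finset β) (w : β → ℝ) (hw : ∀ y, 0 ≤ w y)
    (S : β → Finset α) (hS : ∀ y ∈ Y, S y ⊆ X) (T : ℝ) (D : ℕ) (hD : 2 * (D : ℝ) ≤ T)
    (hT : ∀ y ∈ Y, T ≤ (S y).card) (hX : X.Nonempty) (q : ℕ) :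
    ∃ X1 ⊆ X, X1.card ≤ q ∧
      ∑ y ∈ Y, (if (S y ∩ X1).card ≤ D then w y * (1/2) ^ (S y ∩ X1).card else 0)
        ≤ (∑ y ∈ Y, w y) * (1 - T / (4 * X.card)) ^ q := by
  have hn : (0:ℝ) < X.card := by exact_mod_cast hX.card_pos
  induction q with
  | zero =>
    refine ⟨∅, by simp, by simp, ?_⟩
    simp
  | succ q ih =>
    obtain ⟨X1, hX1, hq, hsum⟩ := ih
    set Φ := ∑ y ∈ Y, (if (S y ∩ X1).card ≤ D then w y * (1/2) ^ (S y ∩ X1).card else 0) with hΦ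
    rcases Y.eq_empty_or_nonempty with rfl | ⟨y0, hy0⟩
    · exact ⟨∅, by simp, by simp, by simp⟩
    have hTn : T ≤ X.card := (hT y0 hy0).trans (by exact_mod_cast Finset.card_le_card (hS y0 hy0))
    have hT0 : 0 ≤ T := le_trans (by positivity) hD
    have hfac : 0 ≤ 1 - T / (4 * X.card) := by
      rw [sub_nonneg, div_le_one (by positivity)]; linarith
    have key : ∑ x ∈ X, ∑ y ∈ Y, (if (S y ∩ insert x X1).card ≤ D then
        w y * (1/2 : ℝ) ^ (S y ∩ insert x X1).card else 0) ≤
        ∑ x ∈ X, Φ * (1 - T / (4 * X.card)) := by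
      rw [Finset.sum_comm, Finset.sum_const, nsmul_eq_mul]
      have e1 : (X.card : ℝ) * (Φ * (1 - T / (4 * X.card))) = Φ * (X.card - T / 4) := by
        field_simp
      rw [e1, hΦ, Finset.sum_mul]
      apply Finset.sum_le_sum
      intro y hy
      by_cases hal : (S y ∩ X1).card ≤ D
      · rw [if_pos hal]
        set h := (S y ∩ X1).card with hh
        have hsplit : ∀ x ∈ X, (if (S y ∩ insert x X1).card ≤ D then
            w y * (1/2 : ℝ) ^ (S y ∩ insert x X1).card else 0) ≤
            w y * (1/2) ^ h * (1 - if x ∈ S y \ X1 then 1/2 else 0) := by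
          intro x _
          by_cases hx : x ∈ S y \ X1
          · rw [if_pos hx]
            rw [Finset.mem_sdiff] at hx
            have hc : (S y ∩ insert x X1).card = h + 1 := by
              rw [Finset.inter_insert_of_mem hx.1, Finset.card_insert_of_notMem]
              simp [hx.2]
            rw [hc]
            have : 0 ≤ w y * (1/2 : ℝ) ^ h := mul_nonneg (hw y) (by positivity)
            split_ifs
            · rw [pow_succ]; linarith
            · linarith
          · rw [if_neg hx]
            have hc : S y ∩ insert x X1 = S y ∩ X1 := by
              ext z
              simp only [Finset.mem_sdiff, not_and, not_not] at hx
              simp only [Finset.mem_inter, Finset.mem_insert]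
              constructor
              · rintro ⟨h1, rfl | h2⟩
                · exact ⟨h1, hx h1⟩
                · exact ⟨h1, h2⟩
              · rintro ⟨h1, h2⟩; exact ⟨h1, Or.inr h2⟩
            rw [hc, if_pos hal]; simp [hh]
        refine (Finset.sum_le_sum hsplit).trans ?_
        rw [← Finset.mul_sum]
        have hnn : 0 ≤ w y * (1/2 : ℝ) ^ h := mul_nonneg (hw y) (by positivity)
        refine mul_le_mul_of_nonneg_left ?_ hnn
        rw [Finset.sum_sub_distrib, Finset.sum_ite_mem]
        simp only [Finset.sum_const, nsmul_eq_mul, mul_one]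
        have hi : X ∩ (S y \ X1) = S y \ X1 := by
          apply Finset.inter_eq_right.2
          exact Finset.sdiff_subset.trans (hS y hy)
        rw [hi]
        have hc : (S y).card ≤ (S y \ X1).card + h := by
          rw [hh, Finset.card_sdiff_add_card_inter]
        have hc' : ((S y).card : ℝ) ≤ (S y \ X1).card + h := by exact_mod_cast hc
        have hal' : (h : ℝ) ≤ D := by exact_mod_cast hal
        have := hT y hy
        linarith
      · rw [if_neg hal, zero_mul]
        apply le_of_eq
        apply Finset.sum_eq_zero
        intro x _
        rw [if_neg]
        intro h
        apply hal
        refine le_trans (Finset.card_le_card ?_) h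
        exact Finset.inter_subset_inter_left (Finset.subset_insert _ _)
    obtain ⟨x, hx, hle⟩ := Finset.exists_le_of_sum_le hX key
    refine ⟨insert x X1, Finset.insert_subset hx hX1, (Finset.card_insert_le _ _).trans (by omega),
      ?_⟩
    refine hle.trans ?_
    rw [pow_succ, ← mul_assoc]
    exact mul_le_mul_of_nonneg_right hsum hfac

lemma greedy' {α β : Type*} (X : Finset α) (Y : Finset β) (w : β → ℝ) (hw : ∀ y, 0 ≤ w y)
    (S : β → Finset α) (hS : ∀ y ∈ Y, S y ⊆ X) (T : ℝ) (D : ℕ) (hD : 2 * (D : ℝ) ≤ T)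
    (hT : ∀ y ∈ Y, T ≤ (S y).card) (hX : X.Nonempty) (q : ℕ) :
    ∃ X1 ⊆ X, X1.card ≤ q ∧
      ∑ y ∈ Y.filter (fun y => (S y ∩ X1).card ≤ D), w y
        ≤ 2 ^ D * ((∑ y ∈ Y, w y) * (1 - T / (4 * X.card)) ^ q) := by
  obtain ⟨X1, h1, h2, h3⟩ := greedy X Y w hw S hS T D hD hT hX q
  refine ⟨X1, h1, h2, ?_⟩
  refine le_trans ?_ (mul_le_mul_of_nonneg_left h3 (by positivity))
  rw [Finset.sum_filter, Finset.mul_sum]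
  apply Finset.sum_le_sum
  intro y _
  split_ifs with h
  · have : (1:ℝ) ≤ 2 ^ D * (1/2) ^ (S y ∩ X1).card := by
      have e : (1:ℝ) = 2 ^ (S y ∩ X1).card * (1/2) ^ (S y ∩ X1).card := by
        rw [← mul_pow]; norm_num
      refine e.le.trans ?_
      gcongr
      norm_num
    nlinarith [hw y]
  · simp

end PM


namespace PM
open Polynomial
open scoped Classical

noncomputable def nbr {K : Type*} [Field K] (X : Finset K) (a b c d : K → K) (y : K) : Finset K :=
  X.filter (fun x => a y + b y * x = c x + d x * y)

noncomputable def inc {K : Type*} [Field K] (X Y : Finset K) (a b c d : K → K) : ℕ :=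
  ∑ y ∈ Y, (nbr X a b c d y).card

lemma inc_swap {K : Type*} [Field K] (X Y : Finset K) (a b c d : K → K) :
    inc X Y a b c d = inc Y X c d a b := by
  unfold inc nbr
  have := Finset.sum_card_bipartiteAbove_eq_sum_card_bipartiteBelow (s := X) (t := Y)
    (fun x y => a y + b y * x = c x + d x * y)
  unfold Finset.bipartiteAbove Finset.bipartiteBelow at this
  rw [← this]
  apply Finset.sum_congr rfl
  intro x _
  congr 1
  apply Finset.filter_congr
  intro y _
  exact eq_comm

lemma decay (j q : ℕ) (u : ℝ) (hu0 : u ≤ 1) (hj : 1 ≤ j) (hq : 10 * (j:ℝ) ≤ q * u) :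
    (2:ℝ) ^ (6 * j) * (1 - u) ^ q ≤ 1 / 16 := by
  have h1 : (1 - u) ^ q ≤ Real.exp (-(10 * j)) := by
    calc (1 - u) ^ q ≤ (Real.exp (-u)) ^ q := by
          apply pow_le_pow_left₀ (by linarith)
          have := Real.add_one_le_exp (-u); linarith
      _ = Real.exp (-(q * u)) := by rw [← Real.exp_nat_mul]; congr 1; ring
      _ ≤ _ := Real.exp_le_exp.2 (by linarith)
  have h2 : Real.exp (-(10 * j)) ≤ (1/2 : ℝ) ^ (10 * j) := by
    have : Real.exp (-(10 * j)) = (Real.exp (-1)) ^ (10 * j) := by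
      rw [← Real.exp_nat_mul]; congr 1; push_cast; ring
    rw [this]
    apply pow_le_pow_left₀ (Real.exp_pos _).le
    rw [Real.exp_neg]
    have := Real.add_one_le_exp (1:ℝ)
    rw [one_div]
    apply inv_anti₀ <;> linarith
  calc (2:ℝ) ^ (6 * j) * (1 - u) ^ q ≤ (2:ℝ) ^ (6 * j) * (1/2 : ℝ) ^ (10 * j) := by
        gcongr; linarith
    _ = (1/16)^j := by
        rw [pow_mul, pow_mul, ← mul_pow]; norm_num
    _ ≤ (1/16)^1 := pow_le_pow_of_le_one (by norm_num) (by norm_num) hj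
    _ = 1/16 := by norm_num

lemma split_count {K : Type*} [Field K] (p : ℕ) [CharP K p] (X Y : Finset K) (a b c d : K → K)
    (k D : ℕ) (hk : ∀ A0 B0 C0 E0 : K,
      (X.filter (fun x => c x = A0 + B0 * x ∧ d x = C0 + E0 * x)).card ≤ k)
    (Q : MvPolynomial (Fin 3) K) (hQ : Q ≠ 0) (hQD : Q.totalDegree ≤ D) (hD : 2 * D < p)
    (X1 : Finset K) (hX1 : X1 ⊆ X) (hQX : ∀ x ∈ X1, lineX (c x) (d x) x Q = 0) :
    ∃ Bad ⊆ Y, Bad.card ≤ 8 * D ^ 2 ∧ inc X Y a b c d ≤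
      ∑ y ∈ Y.filter (fun y => (nbr X a b c d y ∩ X1).card ≤ D), (nbr X a b c d y).card
      + D * X.card + (D + k) * Y.card + inc X Bad a b c d := by
  set Rich := Y.filter (fun y => ¬ (nbr X a b c d y ∩ X1).card ≤ D) with hRich
  have hline : ∀ y ∈ Rich, lineY (a y) (b y) y Q = 0 := by
    intro y hy
    by_contra h
    have h1 := card_cnt_of_not X a b c d Q y h
    have h2 := (Finset.mem_filter.1 hy).2
    apply h2
    refine le_trans (Finset.card_le_card ?_) (h1.trans hQD)
    intro x hx
    unfold nbr at hx
    simp only [Finset.mem_inter, Finset.mem_filter] at hx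
    unfold cnt
    simp only [Finset.mem_filter]
    exact ⟨hx.1.1, hQX x hx.2, hx.1.2⟩
  obtain ⟨Bad, hBR, hBc, hB⟩ := bad_general p X Rich a b c d k hk Q hQ (by omega)
  refine ⟨Bad, hBR.trans (Finset.filter_subset _ _), hBc.trans (by gcongr), ?_⟩
  have hs : inc X Y a b c d = ∑ y ∈ Y.filter (fun y => (nbr X a b c d y ∩ X1).card ≤ D),
      (nbr X a b c d y).card + ∑ y ∈ Rich, (nbr X a b c d y).card := by
    unfold inc
    rw [hRich, Finset.sum_filter_add_sum_filter_not]
  have hdeg : ∀ y ∈ Rich, (nbr X a b c d y).card ≤ (cnt X a b c d Q y).card +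
      (X.filter (fun x => lineX (c x) (d x) x Q ≠ 0 ∧ a y + b y * x = c x + d x * y)).card := by
    intro y _
    refine le_trans (Finset.card_le_card ?_) (Finset.card_union_le _ _)
    intro x hx
    unfold nbr at hx
    unfold cnt
    simp only [Finset.mem_union, Finset.mem_filter] at hx ⊢
    tauto
  have h2 : ∑ y ∈ Rich, 
      (X.filter (fun x => lineX (c x) (d x) x Q ≠ 0 ∧ a y + b y * x = c x + d x * y)).card
      ≤ D * X.card := by
    have := Finset.sum_card_bipartiteAbove_eq_sum_card_bipartiteBelow (s := X) (t := Rich)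
      (fun x y => lineX (c x) (d x) x Q ≠ 0 ∧ a y + b y * x = c x + d x * y)
    unfold Finset.bipartiteAbove Finset.bipartiteBelow at this
    rw [← this, mul_comm]
    rw [← smul_eq_mul]
    apply Finset.sum_le_card_nsmul
    intro x _
    by_cases h0 : lineX (c x) (d x) x Q = 0
    · simp [h0]
    · refine le_trans (card_le_of_roots _ h0 _ ?_) ((natDegree_lineX _ _ _ _).trans hQD)
      intro y hy
      simp only [Finset.mem_filter] at hy
      rw [eval_lineX, ← hy.2.2, ← eval_lineY, hline y hy.1, eval_zero]
  have h3 : ∑ y ∈ Rich, (cnt X a b c d Q y).card ≤ (D + k) * Y.card + inc X Bad a b c d := by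
    rw [← Finset.sum_sdiff hBR]
    apply add_le_add
    · calc ∑ y ∈ Rich \ Bad, (cnt X a b c d Q y).card ≤ (Rich \ Bad).card • (D + k) := by
            apply Finset.sum_le_card_nsmul
            intro y hy
            rw [Finset.mem_sdiff] at hy
            exact (hB y hy.1 hy.2).trans (by omega)
        _ ≤ Y.card * (D + k) := by
            rw [smul_eq_mul]
            gcongr
            exact Finset.sdiff_subset.trans (Finset.filter_subset _ _)
        _ = _ := by ring
    · unfold inc
      apply Finset.sum_le_sum
      intro y _
      apply Finset.card_le_card
      intro x hx
      unfold cnt at hx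
      unfold nbr
      simp only [Finset.mem_filter] at hx ⊢
      tauto
  have h1 := Finset.sum_le_sum hdeg
  rw [Finset.sum_add_distrib] at h1
  omega

set_option maxHeartbeats 2000000 in
lemma step {K : Type*} [Field K] (p : ℕ) [CharP K p] (X Y : Finset K) (a b c d : K → K)
    (k N : ℕ) (hk : ∀ A0 B0 C0 E0 : K,
      (X.filter (fun x => c x = A0 + B0 * x ∧ d x = C0 + E0 * x)).card ≤ k)
    (hXY : X.card ≤ Y.card) (hYN : Y.card ≤ N) (hN : N ≤ p ^ 2) (T : ℝ)
    (hT : 1500 * (√(N:ℝ) + k) ≤ T)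
    (ih : ∀ Y' ⊂ Y, (inc X Y' a b c d : ℝ) ≤ T * (X.card + Y'.card)) :
    (inc X Y a b c d : ℝ) ≤ T * (X.card + Y.card) := by
  by_contra! hI
  have hs0 := Real.sqrt_nonneg (N:ℝ)
  have hsq := Real.sq_sqrt (Nat.cast_nonneg (α := ℝ) N)
  have hk0 : (0:ℝ) ≤ k := Nat.cast_nonneg k
  have hT0 : 0 ≤ T := le_trans (by positivity) hT
  have hYne : Y.Nonempty := by
    rw [Finset.nonempty_iff_ne_empty]
    rintro rfl
    unfold inc at hI
    simp at hI
    have : 0 ≤ T * X.card := by positivity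
    linarith
  have hdeg : ∀ y ∈ Y, T ≤ (nbr X a b c d y).card := by
    intro y hy
    have h1 := ih (Y.erase y) (Finset.erase_ssubset hy)
    have h2 : inc X Y a b c d = (nbr X a b c d y).card + inc X (Y.erase y) a b c d := by
      unfold inc
      exact (Finset.add_sum_erase Y (fun y => (nbr X a b c d y).card) hy).symm
    rw [h2] at hI
    have h3 : ((Y.erase y).card : ℝ) = Y.card - 1 := by
      rw [Finset.card_erase_of_mem hy, Nat.cast_sub (Finset.card_pos.2 ⟨y, hy⟩)]; simp
    rw [h3] at h1
    push_cast at hI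
    nlinarith
  have hN1 : (1:ℝ) ≤ N := by
    have := hYne.card_pos
    exact_mod_cast (by omega : 1 ≤ N)
  have hXYr : (X.card : ℝ) ≤ Y.card := by exact_mod_cast hXY
  have hYNr : (Y.card : ℝ) ≤ N := by exact_mod_cast hYN
  have hs1 : 1 ≤ √(N:ℝ) := by rw [Real.one_le_sqrt]; exact hN1
  have hT1 : 1500 ≤ T := by linarith
  have hTs : 1500 * √(N:ℝ) ≤ T := by linarith
  have hT2 : 2250000 * (N:ℝ) ≤ T ^ 2 := by
    rw [← hsq]; nlinarith
  obtain ⟨y0, hy0⟩ := hYne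
  have hnT : T ≤ X.card := (hdeg y0 hy0).trans (by
    exact_mod_cast Finset.card_le_card (Finset.filter_subset _ _))
  set n : ℝ := (X.card : ℝ) with hn
  have hn0 : 0 < n := by linarith
  have hTpos : 0 < T := by linarith
  set r := n / T with hr
  have hr1 : 1 ≤ r := by rw [hr, le_div_iff₀ hTpos]; linarith
  have hrT : r * T = n := by rw [hr]; field_simp
  set j := ⌈20 * r⌉₊ with hj
  have hj1 : 20 * r ≤ j := Nat.le_ceil _
  have hj2 : (j:ℝ) ≤ 21 * r := by
    have := Nat.ceil_lt_add_one (show 0 ≤ 20 * r by linarith)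
    linarith
  have hj3 : 1 ≤ j := by
    have : (1:ℝ) ≤ j := by linarith
    exact_mod_cast this
  have hrb : 2250000 * r ≤ T := by
    have : 2250000 * (r * T) ≤ T * T := by rw [hrT]; nlinarith
    nlinarith
  have hDT : 1000 * ((6 * j : ℕ) : ℝ) ≤ T := by push_cast; linarith
  have hDp : 2 * (6 * j) < p := by
    have h1 : √(N:ℝ) ≤ p := by
      rw [Real.sqrt_le_left (by positivity)]
      exact_mod_cast hN
    have h2 : r * 1500 ≤ √(N:ℝ) := by
      have : r * (1500 * √(N:ℝ)) ≤ √(N:ℝ) * √(N:ℝ) := by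
        rw [Real.mul_self_sqrt (by positivity)]
        calc r * (1500 * √(N:ℝ)) ≤ r * T := by gcongr
          _ ≤ N := by rw [hrT]; linarith
      nlinarith
    have h3 : (2 * (6 * j) : ℝ) < p := by nlinarith
    exact_mod_cast h3
  have hXne : X.Nonempty := by
    rw [← Finset.card_pos]
    rw [hn] at hn0
    exact_mod_cast hn0
  obtain ⟨X1, hX1, hX1c, hfail⟩ := greedy' X Y (fun y => ((nbr X a b c d y).card : ℝ))
    (fun y => Nat.cast_nonneg _) (nbr X a b c d) (fun y _ => Finset.filter_subset _ _) T (6 * j)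
    (by linarith) hdeg hXne (2 * j ^ 2)
  obtain ⟨Q, hQ0, hQd, hQX⟩ := exists_Q X1 c d (2 * j ^ 2) (2 * j) hX1c (by nlinarith)
  obtain ⟨Bad, hBY, hBc, hcount⟩ := split_count p X Y a b c d k (6 * j) hk Q hQ0 (by omega) hDp X1
    hX1 hQX
  set I : ℝ := (inc X Y a b c d : ℝ) with hIdef
  have hI0 : 0 < I := lt_of_le_of_lt (by positivity) hI
  have hfail' : ∑ y ∈ Y.filter (fun y => (nbr X a b c d y ∩ X1).card ≤ 6 * j),
      ((nbr X a b c d y).card : ℝ) ≤ I / 16 := by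
    refine hfail.trans ?_
    have hsum : ∑ y ∈ Y, ((nbr X a b c d y).card : ℝ) = I := by
      rw [hIdef]; unfold inc; push_cast; rfl
    rw [hsum]
    have := decay j (2 * j ^ 2) (T / (4 * n)) (by
      rw [div_le_one (by positivity)]; linarith) hj3 (by
      have : T / (4 * n) = 1 / (4 * r) := by rw [← hrT]; field_simp
      rw [this]
      push_cast
      rw [mul_one_div, le_div_iff₀ (by positivity)]
      nlinarith)
    nlinarith
  have hBr : (Bad.card : ℝ) ≤ Y.card / 16 := by
    have h1 : (Bad.card : ℝ) ≤ 8 * (6 * j) ^ 2 := by exact_mod_cast hBc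
    have h2 : (j:ℝ) ^ 2 ≤ (21 * r) ^ 2 := by gcongr
    have h3 : 2250000 * r ^ 2 ≤ n := by rw [← hrT]; nlinarith
    nlinarith
  have hBss : Bad ⊂ Y := by
    refine Finset.ssubset_iff_subset_ne.2 ⟨hBY, ?_⟩
    rintro rfl
    linarith
  have hihB := ih Bad hBss
  have hc : I ≤ ∑ y ∈ Y.filter (fun y => (nbr X a b c d y ∩ X1).card ≤ 6 * j),
      ((nbr X a b c d y).card : ℝ) + ((6 * j : ℕ):ℝ) * n + (((6 * j : ℕ):ℝ) + k) * Y.card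
      + (inc X Bad a b c d : ℝ) := by
    rw [hIdef, hn]; exact_mod_cast hcount
  set D : ℝ := ((6 * j : ℕ) : ℝ) with hD
  have hkT : 1500 * (k:ℝ) ≤ T := by linarith
  have e1 : D * n ≤ T / 1000 * n := by gcongr; linarith
  have e2 : (D + k) * Y.card ≤ (T / 1000 + T / 1500) * Y.card := by gcongr <;> linarith
  have e3 : T * (n + Bad.card) ≤ T * (n + Y.card / 16) := by gcongr
  have e4 : T * n ≤ T * Y.card := by gcongr
  nlinarith

theorem thmA {K : Type*} [Field K] (p : ℕ) [CharP K p] (k N : ℕ) (hN : N ≤ p ^ 2) (T : ℝ)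
    (hT : 1500 * (√(N:ℝ) + k) ≤ T) (s : ℕ) : ∀ (X Y : Finset K) (a b c d : K → K),
    X.card + Y.card ≤ s →
    (∀ A0 B0 C0 E0 : K, (X.filter (fun x => c x = A0 + B0 * x ∧ d x = C0 + E0 * x)).card ≤ k) →
    (∀ A0 B0 C0 E0 : K, (Y.filter (fun y => a y = A0 + B0 * y ∧ b y = C0 + E0 * y)).card ≤ k) →
    X.card ≤ N → Y.card ≤ N →
    (inc X Y a b c d : ℝ) ≤ T * (X.card + Y.card) := by
  have mono : ∀ (Y Y' : Finset K) (a b : K → K), Y' ⊆ Y →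
    (∀ A0 B0 C0 E0 : K, (Y.filter (fun y => a y = A0 + B0 * y ∧ b y = C0 + E0 * y)).card ≤ k) →
    (∀ A0 B0 C0 E0 : K, (Y'.filter (fun y => a y = A0 + B0 * y ∧ b y = C0 + E0 * y)).card ≤ k) := by
    intro Y Y' a b hs h A0 B0 C0 E0
    exact (Finset.card_le_card (Finset.filter_subset_filter _ hs)).trans (h A0 B0 C0 E0)
  induction s with
  | zero =>
    intro X Y a b c d hs _ _ _ _
    have : Y = ∅ := by rw [← Finset.card_eq_zero]; omega
    have h2 : X = ∅ := by rw [← Finset.card_eq_zero]; omega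
    subst this; subst h2
    simp [inc]
  | succ s ih =>
    intro X Y a b c d hs hkX hkY hXN hYN
    rcases le_total X.card Y.card with hXY | hXY
    · apply step p X Y a b c d k N hkX hXY hYN hN T hT
      intro Y' hY'
      have := Finset.card_lt_card hY'
      exact ih X Y' a b c d (by omega) hkX (mono Y Y' a b hY'.subset hkY) hXN (by omega)
    · rw [inc_swap, add_comm]
      apply step p Y X c d a b k N hkY hXY hXN hN T hT
      intro X' hX'
      have := Finset.card_lt_card hX'
      exact ih Y X' c d a b (by omega) hkY (mono X X' c d hX'.subset hkX) hYN (by omega)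

end PM


namespace PM
open Polynomial
open scoped Classical

lemma exists_ext (k : Type) [Field k] : ∃ (K : Type) (_ : Field K) (i : k →+* K) (t : K),
    ∀ α β : k, i α + i β * t = 0 → α = 0 ∧ β = 0 := by
  refine ⟨RatFunc k, inferInstance, RatFunc.C, RatFunc.X, ?_⟩
  intro α β h
  have h1 : algebraMap k[X] (RatFunc k) (C α + C β * X) = 0 := by
    simpa using h
  rw [map_eq_zero_iff _ (RatFunc.algebraMap_injective k)] at h1
  have h0 := congrArg (fun F => F.coeff 0) h1
  have h2 := congrArg (fun F => F.coeff 1) h1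
  simp at h0 h2
  exact ⟨h0, h2⟩

lemma kbound {F K : Type} [Field F] [Field K] (i : F →+* K) (μ ν : K)
    (hμ : ∀ α β : F, i α + i β * μ = 0 → α = 0 ∧ β = 0)
    (L : Finset (F × F)) (S : Finset F) (k : ℕ)
    (hS : S.card ≤ k) (hW : (L.image Prod.snd).card ≤ k)
    (hfib : ∀ w, (L.filter (fun l => l.2 = w)).card ≤ k) (A0 B0 C0 E0 : K) :
    ((L ×ˢ S).filter (fun t => -1 = C0 * (i t.2 + ν) + E0 * (i t.1.2 - μ * i t.1.1) ∧
      i t.1.1 = A0 * (i t.2 + ν) + B0 * (i t.1.2 - μ * i t.1.1))).card ≤ k := by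
  have hi := i.injective
  have hinj : ∀ v w v' w' : F, i w - μ * i v = i w' - μ * i v' → v = v' ∧ w = w' := by
    intro v w v' w' h
    have := hμ (w - w') (v' - v) (by rw [map_sub, map_sub]; linear_combination h)
    exact ⟨(sub_eq_zero.1 this.2).symm, sub_eq_zero.1 this.1⟩
  by_cases hE : E0 = 0
  · subst hE
    by_cases hB : 1 + B0 * μ = 0
    · have hB0 : B0 ≠ 0 := by rintro rfl; simp at hB
      rcases Finset.eq_empty_or_nonempty ((L ×ˢ S).filter (fun t => -1 = C0 * (i t.2 + ν) +
        0 * (i t.1.2 - μ * i t.1.1) ∧ i t.1.1 = A0 * (i t.2 + ν) +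
        B0 * (i t.1.2 - μ * i t.1.1))) with h | ⟨t0, ht0⟩
      · rw [h]; simp
      · refine le_trans ?_ (hfib t0.1.2)
        simp only [Finset.mem_filter] at ht0
        have hX : ∀ t ∈ (L ×ˢ S).filter (fun t => -1 = C0 * (i t.2 + ν) +
          0 * (i t.1.2 - μ * i t.1.1) ∧ i t.1.1 = A0 * (i t.2 + ν) +
          B0 * (i t.1.2 - μ * i t.1.1)), t.2 = t0.2 := by
          intro t ht
          simp only [Finset.mem_filter] at ht
          have h1 := ht.2.1
          have h2 := ht0.2.1
          have hC : C0 ≠ 0 := by rintro rfl; simp at h1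
          apply hi
          apply mul_left_cancel₀ hC
          linear_combination h2 - h1
        apply Finset.card_le_card_of_injOn (fun t => t.1)
        · intro t ht
          have hXt := hX t ht
          simp only [Finset.coe_filter, Finset.mem_product, Set.mem_setOf_eq] at ht ⊢
          refine ⟨ht.1.1, ?_⟩
          apply hi
          apply mul_left_cancel₀ hB0
          have h1 := ht.2.2
          have h2 := ht0.2.2
          rw [hXt] at h1
          linear_combination h2 - h1 + (i t.1.1 - i t0.1.1) * hB
        · intro t ht t' ht' h
          exact Prod.ext h ((hX t ht).trans (hX t' ht').symm)
    · refine le_trans ?_ hW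
      apply Finset.card_le_card_of_injOn (fun t => t.1.2)
      · intro t ht
        simp only [Finset.coe_filter, Finset.mem_product, Set.mem_setOf_eq] at ht
        simp only [Finset.coe_image, Set.mem_image, Finset.mem_coe]
        exact ⟨t.1, ht.1.1, rfl⟩
      · intro t ht t' ht' h
        simp only [Finset.coe_filter, Finset.mem_product, Set.mem_setOf_eq] at ht ht'
        simp only at h
        obtain ⟨-, h1, h2⟩ := ht
        obtain ⟨-, h3, h4⟩ := ht'
        have hC : C0 ≠ 0 := by rintro rfl; simp at h1
        have hX : t.2 = t'.2 := by
          apply hi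
          apply mul_left_cancel₀ hC
          linear_combination h3 - h1
        have hv : t.1.1 = t'.1.1 := by
          apply hi
          apply mul_left_cancel₀ hB
          rw [hX, h] at h2
          linear_combination h2 - h4
        exact Prod.ext (Prod.ext hv h) hX
  · refine le_trans ?_ hS
    apply Finset.card_le_card_of_injOn (fun t => t.2)
    · intro t ht
      simp only [Finset.coe_filter, Finset.mem_product, Set.mem_setOf_eq] at ht
      exact ht.1.2
    · intro t ht t' ht' h
      simp only [Finset.coe_filter, Finset.mem_product, Set.mem_setOf_eq] at ht ht'
      simp only at h
      obtain ⟨-, h1, h2⟩ := ht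
      obtain ⟨-, h3, h4⟩ := ht'
      have := hinj t.1.1 t.1.2 t'.1.1 t'.1.2 (by
        apply mul_left_cancel₀ hE
        rw [h] at h1
        linear_combination h3 - h1)
      exact Prod.ext (Prod.ext this.1 this.2) h

lemma energy_bound {F : Type} [Field F] (p : ℕ) [CharP F p] (L : Finset (F × F)) (S : Finset F)
    (hu : ∀ l ∈ L, l.1 ≠ 0) (k : ℕ)
    (hS : S.card ≤ k) (hW : (L.image Prod.snd).card ≤ k)
    (hfib : ∀ w, (L.filter (fun l => l.2 = w)).card ≤ k) (hN : L.card * S.card ≤ p ^ 2) :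
    ((((L ×ˢ S) ×ˢ (L ×ˢ S)).filter (fun q => q.2.1.1 * q.1.2 + q.2.1.2 =
      q.1.1.1 * q.2.2 + q.1.1.2)).card : ℝ) ≤
      1500 * (√((L.card * S.card : ℕ) : ℝ) + k) * (2 * (L.card * S.card : ℕ)) := by
  obtain ⟨K1, _, i1, lam, hlam⟩ := exists_ext F
  obtain ⟨K, _, i2, kap, hkap⟩ := exists_ext K1
  set i : F →+* K := i2.comp i1 with hi
  have hinj := i.injective
  have hi1 := i1.injective
  have hi2 := i2.injective
  haveI : CharP K p := charP_of_injective_ringHom hinj p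
  set lm := i2 lam with hlm
  have hlm' : ∀ α β : F, i α + i β * lm = 0 → α = 0 ∧ β = 0 := by
    intro α β h
    apply hlam
    apply hi2
    rw [map_add, map_mul, map_zero]; exact h
  have hkp' : ∀ α β : F, i α + i β * kap = 0 → α = 0 ∧ β = 0 := by
    intro α β h
    have := hkap (i1 α) (i1 β) h
    simpa using this
  have hXl : ∀ X : F, i X + lm ≠ 0 := by
    intro X h
    have := (hlm' X 1 (by simpa using h)).2
    exact one_ne_zero this
  have hXk : ∀ X : F, i X + kap ≠ 0 := by
    intro X h
    have := (hkp' X 1 (by simpa using h)).2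
    exact one_ne_zero this
  -- index maps
  let fx : (F × F) × F → K := fun t => (i t.1.2 - kap * i t.1.1) / (i t.2 + lm)
  let fy : (F × F) × F → K := fun t => (i t.1.2 - lm * i t.1.1) / (i t.2 + kap)
  set M := L ×ˢ S with hM
  have hMu : ∀ t ∈ M, t.1.1 ≠ 0 := fun t ht => hu _ (Finset.mem_product.1 ht).1
  have hfx : Set.InjOn fx M := by
    intro t ht t' ht' h
    have htu := hMu t ht
    simp only [fx] at h
    rw [div_eq_div_iff (hXl _) (hXl _)] at h
    have h1 := hkap (i1 t.1.2 * (i1 t'.2 + lam) - i1 t'.1.2 * (i1 t.2 + lam))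
      (i1 t'.1.1 * (i1 t.2 + lam) - i1 t.1.1 * (i1 t'.2 + lam)) (by
        simp only [map_sub, map_mul, map_add]
        simp only [hi, RingHom.comp_apply, hlm] at h
        linear_combination h)
    have h2 := hlam (t'.1.1 * t.2 - t.1.1 * t'.2) (t'.1.1 - t.1.1) (by
      simp only [map_sub, map_mul]
      linear_combination h1.2)
    have hv : t.1.1 = t'.1.1 := (sub_eq_zero.1 h2.2).symm
    have hX : t.2 = t'.2 := by
      apply mul_left_cancel₀ htu
      rw [← hv] at h2
      linear_combination h2.1
    have hw : t.1.2 = t'.1.2 := by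
      apply hi1
      have h3 := h1.1
      rw [hX] at h3
      have hne : i1 t'.2 + lam ≠ 0 := by
        intro h
        have := (hlam t'.2 1 (by simpa using h)).2
        exact one_ne_zero this
      apply mul_right_cancel₀ hne
      linear_combination h3
    exact Prod.ext (Prod.ext hv hw) hX
  have hfy : Set.InjOn fy M := by
    intro t ht t' ht' h
    have htu := hMu t ht
    simp only [fy] at h
    rw [div_eq_div_iff (hXk _) (hXk _)] at h
    have h1 := hkap ((i1 t.1.2 - lam * i1 t.1.1) * i1 t'.2 - (i1 t'.1.2 - lam * i1 t'.1.1) * i1 t.2)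
      ((i1 t.1.2 - lam * i1 t.1.1) - (i1 t'.1.2 - lam * i1 t'.1.1)) (by
        simp only [map_sub, map_mul]
        simp only [hi, RingHom.comp_apply, hlm] at h
        linear_combination h)
    have h2 := hlam (t.1.2 - t'.1.2) (t'.1.1 - t.1.1) (by
      simp only [map_sub]
      linear_combination h1.2)
    have hv : t.1.1 = t'.1.1 := (sub_eq_zero.1 h2.2).symm
    have hw : t.1.2 = t'.1.2 := sub_eq_zero.1 h2.1
    have hX : t.2 = t'.2 := by
      apply hi1
      have hne : i1 t.1.2 - lam * i1 t.1.1 ≠ 0 := by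
        intro h
        have := (hlam t.1.2 (-t.1.1) (by rw [map_neg]; linear_combination h)).2
        exact htu (neg_eq_zero.1 this)
      apply mul_left_cancel₀ hne
      have h3 := h1.1
      rw [← hv, ← hw] at h3
      linear_combination -h3
    exact Prod.ext (Prod.ext hv hw) hX
  let gx := Function.invFunOn fx (M : Set ((F × F) × F))
  let gy := Function.invFunOn fy (M : Set ((F × F) × F))
  have hgx : ∀ t ∈ M, gx (fx t) = t := fun t ht => hfx.leftInvOn_invFunOn ht
  have hgy : ∀ t ∈ M, gy (fy t) = t := fun t ht => hfy.leftInvOn_invFunOn ht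
  let a : K → K := fun y => i (gy y).1.1 / (i (gy y).2 + kap)
  let b : K → K := fun y => -1 / (i (gy y).2 + kap)
  let c : K → K := fun x => i (gx x).1.1 / (i (gx x).2 + lm)
  let d : K → K := fun x => -1 / (i (gx x).2 + lm)
  have hcX : (M.image fx).card = L.card * S.card := by
    rw [Finset.card_image_of_injOn hfx, hM, Finset.card_product]
  have hcY : (M.image fy).card = L.card * S.card := by
    rw [Finset.card_image_of_injOn hfy, hM, Finset.card_product]
  have main := thmA (K := K) p k (L.card * S.card) hN
    (1500 * (√((L.card * S.card : ℕ) : ℝ) + k)) le_rfl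
    ((M.image fx).card + (M.image fy).card) (M.image fx) (M.image fy) a b c d le_rfl
    (by
      intro A0 B0 C0 E0
      refine le_trans ?_ (kbound i kap lm hkp' L S k hS hW hfib A0 B0 C0 E0)
      apply Finset.card_le_card_of_injOn gx
      · intro x hx
        simp only [Finset.coe_filter, Finset.mem_image, Set.mem_setOf_eq] at hx
        obtain ⟨⟨t, ht, rfl⟩, h1, h2⟩ := hx
        simp only [c, d, hgx t ht, fx] at h1 h2
        simp only [Finset.coe_filter, Set.mem_setOf_eq, hgx t ht]
        have := hXl t.2
        refine ⟨ht, ?_, ?_⟩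
        · field_simp at h2; linear_combination h2
        · field_simp at h1; linear_combination h1
      · intro x hx x' hx' h
        simp only [Finset.coe_filter, Finset.mem_image, Set.mem_setOf_eq] at hx hx'
        obtain ⟨⟨t, ht, rfl⟩, -⟩ := hx
        obtain ⟨⟨t', ht', rfl⟩, -⟩ := hx'
        rw [hgx t ht, hgx t' ht'] at h
        rw [h])
    (by
      intro A0 B0 C0 E0
      refine le_trans ?_ (kbound i lm kap hlm' L S k hS hW hfib A0 B0 C0 E0)
      apply Finset.card_le_card_of_injOn gy
      · intro x hx
        simp only [Finset.coe_filter, Finset.mem_image, Set.mem_setOf_eq] at hx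
        obtain ⟨⟨t, ht, rfl⟩, h1, h2⟩ := hx
        simp only [a, b, hgy t ht, fy] at h1 h2
        simp only [Finset.coe_filter, Set.mem_setOf_eq, hgy t ht]
        have := hXk t.2
        refine ⟨ht, ?_, ?_⟩
        · field_simp at h2; linear_combination h2
        · field_simp at h1; linear_combination h1
      · intro x hx x' hx' h
        simp only [Finset.coe_filter, Finset.mem_image, Set.mem_setOf_eq] at hx hx'
        obtain ⟨⟨t, ht, rfl⟩, -⟩ := hx
        obtain ⟨⟨t', ht', rfl⟩, -⟩ := hx'
        rw [hgy t ht, hgy t' ht'] at h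
        rw [h])
    hcX.le hcY.le
  rw [hcX, hcY, ← two_mul] at main
  refine le_trans ?_ main
  have hinc : inc (M.image fx) (M.image fy) a b c d = (((M.image fx) ×ˢ (M.image fy)).filter
      (fun z => a z.2 + b z.2 * z.1 = c z.1 + d z.1 * z.2)).card := by
    unfold inc nbr
    rw [Finset.card_filter, Finset.sum_product_right]
    apply Finset.sum_congr rfl
    intro y _
    rw [Finset.card_filter]
  rw [hinc]
  rw [Nat.cast_le]
  apply Finset.card_le_card_of_injOn (fun q => (fx q.1, fy q.2))
  · intro q hq
    simp only [Finset.coe_filter, Finset.mem_product, Set.mem_setOf_eq] at hq ⊢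
    obtain ⟨⟨hq1, hq2⟩, he⟩ := hq
    refine ⟨⟨Finset.mem_image_of_mem _ hq1, Finset.mem_image_of_mem _ hq2⟩, ?_⟩
    simp only [a, b, c, d, hgx _ hq1, hgy _ hq2, fx, fy]
    have h1 := hXk q.2.2
    have h2 := hXl q.1.2
    have he' := congrArg i he
    simp only [map_add, map_mul] at he'
    field_simp
    linear_combination he'
  · intro q hq q' hq' h
    simp only [Finset.coe_filter, Finset.mem_product, Set.mem_setOf_eq] at hq hq'
    simp only [Prod.mk.injEq] at h
    exact Prod.ext (hfx hq.1.1 hq'.1.1 h.1) (hfy hq.1.2 hq'.1.2 h.2)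

lemma lemmaB {F : Type} [Field F] (p : ℕ) [CharP F p] (L : Finset (F × F)) (S V : Finset F)
    (hu : ∀ l ∈ L, l.1 ≠ 0) (k β : ℕ)
    (hS : S.card ≤ k) (hW : (L.image Prod.snd).card ≤ k)
    (hfib : ∀ w, (L.filter (fun l => l.2 = w)).card ≤ k) (hN : L.card * S.card ≤ p ^ 2)
    (hβ : ∀ l ∈ L, β ≤ (S.filter (fun X => l.1 * X + l.2 ∈ V)).card) :
    ((L.card : ℝ) * β) ^ 2 ≤ V.card * (1500 * (√((L.card * S.card : ℕ) : ℝ) + k) *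
      (2 * (L.card * S.card : ℕ))) := by
  have hE := energy_bound p L S hu k hS hW hfib hN
  let R : F → Finset ((F × F) × F) := fun v => (L ×ˢ S).filter (fun t => t.1.1 * t.2 + t.1.2 = v)
  have h1 : L.card * β ≤ ∑ v ∈ V, (R v).card := by
    have e : ∑ v ∈ V, (R v).card = ((L ×ˢ S).filter (fun t => t.1.1 * t.2 + t.1.2 ∈ V)).card := by
      rw [Finset.card_eq_sum_card_fiberwise (f := fun t => t.1.1 * t.2 + t.1.2) (t := V)]
      · apply Finset.sum_congr rfl
        intro v hv
        congr 1
        ext t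
        simp only [R, Finset.mem_filter]
        constructor
        · rintro ⟨h1, rfl⟩; exact ⟨⟨h1, hv⟩, rfl⟩
        · rintro ⟨⟨h1, _⟩, h2⟩; exact ⟨h1, h2⟩
      · intro t ht
        simp only [Finset.coe_filter, Set.mem_setOf_eq] at ht
        exact ht.2
    rw [e, Finset.card_filter, Finset.sum_product]
    rw [← smul_eq_mul]
    apply Finset.card_nsmul_le_sum
    intro l hl
    rw [← Finset.card_filter]
    exact hβ l hl
  have h2 : ∑ v ∈ V, (R v).card ^ 2 ≤ (((L ×ˢ S) ×ˢ (L ×ˢ S)).filter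
      (fun q => q.2.1.1 * q.1.2 + q.2.1.2 = q.1.1.1 * q.2.2 + q.1.1.2)).card := by
    have e : ∑ v ∈ V, (R v).card ^ 2 = (V.sigma (fun v => R v ×ˢ R v)).card := by
      rw [Finset.card_sigma]
      apply Finset.sum_congr rfl
      intro v _
      rw [Finset.card_product, sq]
    rw [e]
    apply Finset.card_le_card_of_injOn
      (fun z => ((z.2.2.1, z.2.1.2), (z.2.1.1, z.2.2.2)))
    · rintro ⟨v, t, t'⟩ hz
      simp only [Finset.coe_sigma, Set.mem_sigma_iff, Finset.mem_coe, Finset.mem_product, R,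
        Finset.mem_filter] at hz
      simp only [Finset.coe_filter, Set.mem_setOf_eq, Finset.mem_product]
      refine ⟨⟨⟨hz.2.2.1.1, hz.2.1.1.2⟩, ⟨hz.2.1.1.1, hz.2.2.1.2⟩⟩, ?_⟩
      rw [hz.2.1.2, hz.2.2.2]
    · rintro ⟨v, ⟨l, x⟩, ⟨l', x'⟩⟩ hz ⟨v1, ⟨l1, x1⟩, ⟨l1', x1'⟩⟩ hz1 h
      simp only [Finset.coe_sigma, Set.mem_sigma_iff, Finset.mem_coe, Finset.mem_product, R,
        Finset.mem_filter] at hz hz1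
      simp only [Prod.mk.injEq] at h
      obtain ⟨⟨rfl, rfl⟩, rfl, rfl⟩ := h
      have : v = v1 := by rw [← hz.2.1.2, ← hz1.2.1.2]
      subst this
      rfl
  have h3 := sq_sum_le_card_mul_sum_sq (s := V) (f := fun v => ((R v).card : ℝ))
  have h1' : (L.card : ℝ) * β ≤ ∑ v ∈ V, ((R v).card : ℝ) := by exact_mod_cast h1
  have h2' : ∑ v ∈ V, ((R v).card : ℝ) ^ 2 ≤ ((((L ×ˢ S) ×ˢ (L ×ˢ S)).filter
      (fun q => q.2.1.1 * q.1.2 + q.2.1.2 = q.1.1.1 * q.2.2 + q.1.1.2)).card : ℝ) := by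
    exact_mod_cast h2
  calc ((L.card : ℝ) * β) ^ 2 ≤ (∑ v ∈ V, ((R v).card : ℝ)) ^ 2 := by gcongr
    _ ≤ V.card * ∑ v ∈ V, ((R v).card : ℝ) ^ 2 := h3
    _ ≤ _ := by
      apply mul_le_mul_of_nonneg_left (h2'.trans hE) (by positivity)

end PM


namespace PM
open scoped Classical

lemma comb {F : Type} [Field F] (p : ℕ) [CharP F p] (g h : F → F) (A B C S V : Finset F)
    (hg : ∀ a ∈ A, g a ≠ 0) (hinj : ∀ a ∈ A, ∀ b ∈ A, g a * h a = g b * h b → a = b)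
    (hC0 : ∀ c ∈ C, c ≠ 0) (hA : A.Nonempty) (hC : C.Nonempty)
    (hSm : ∀ b ∈ B, ∀ c ∈ C, b * c ∈ S) (hVm : ∀ a ∈ A, ∀ b ∈ B, g a * (h a + b) ∈ V)
    (hN : A.card * C.card * S.card ≤ p ^ 2) :
    (A.card : ℝ) * C.card * B.card ^ 2 ≤ 3000 * (V.card * S.card) *
      (√((A.card : ℝ) * C.card * S.card) + (S.card + A.card + C.card)) := by
  let φ : F × F → F × F := fun q => (g q.1 / q.2, g q.1 * h q.1)
  let L : Finset (F × F) := (A ×ˢ C).image φ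
  have hφ : ∀ x ∈ A ×ˢ C, ∀ y ∈ A ×ˢ C, φ x = φ y → x = y := by
    rintro ⟨a, c⟩ h1 ⟨a', c'⟩ h2 he
    simp only [Finset.mem_product] at h1 h2
    simp only [φ, Prod.mk.injEq] at he
    have e1 := hinj a h1.1 a' h2.1 he.2
    subst e1
    have hga := hg a h1.1
    have hc := hC0 c h1.2
    have hc' := hC0 c' h2.2
    have : c = c' := by
      have h3 := he.1
      rw [div_eq_div_iff hc hc'] at h3
      exact (mul_left_cancel₀ hga h3).symm
    rw [this]
  have hLc : L.card = A.card * C.card := by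
    rw [Finset.card_image_of_injOn (fun x hx y hy => hφ x hx y hy), Finset.card_product]
  have key := lemmaB p L S V (by
      intro l hl
      obtain ⟨⟨a, c⟩, hq, rfl⟩ := Finset.mem_image.1 hl
      simp only [Finset.mem_product] at hq
      exact div_ne_zero (hg a hq.1) (hC0 c hq.2)) (S.card + A.card + C.card) B.card
    (by omega)
    (by
      have : L.image Prod.snd ⊆ A.image (fun a => g a * h a) := by
        intro w hw
        obtain ⟨l, hl, rfl⟩ := Finset.mem_image.1 hw
        obtain ⟨⟨a, c⟩, hq, rfl⟩ := Finset.mem_image.1 hl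
        simp only [Finset.mem_product] at hq
        exact Finset.mem_image.2 ⟨a, hq.1, rfl⟩
      have h1 := Finset.card_le_card this
      have h2 : (A.image (fun a => g a * h a)).card ≤ A.card := Finset.card_image_le
      omega)
    (by
      intro w
      by_cases hw : ∃ a ∈ A, g a * h a = w
      · obtain ⟨a, ha, rfl⟩ := hw
        have : L.filter (fun l => l.2 = g a * h a) ⊆ C.image (fun c => φ (a, c)) := by
          intro l hl
          obtain ⟨hl, he⟩ := Finset.mem_filter.1 hl
          obtain ⟨⟨a', c⟩, hq, rfl⟩ := Finset.mem_image.1 hl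
          simp only [Finset.mem_product] at hq
          have := hinj a' hq.1 a ha he
          subst this
          exact Finset.mem_image.2 ⟨c, hq.2, rfl⟩
        have h1 := Finset.card_le_card this
        have h2 : (C.image (fun c => φ (a, c))).card ≤ C.card := Finset.card_image_le
        omega
      · have : L.filter (fun l => l.2 = w) = ∅ := by
          apply Finset.filter_eq_empty_iff.2
          intro l hl he
          obtain ⟨⟨a', c⟩, hq, rfl⟩ := Finset.mem_image.1 hl
          simp only [Finset.mem_product] at hq
          exact hw ⟨a', hq.1, he⟩
        rw [this]; simp)
    (by rw [hLc]; exact hN)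
    (by
      intro l hl
      obtain ⟨⟨a, c⟩, hq, rfl⟩ := Finset.mem_image.1 hl
      simp only [Finset.mem_product] at hq
      have hc := hC0 c hq.2
      apply Finset.card_le_card_of_injOn (fun b => b * c)
      · intro b hb
        simp only [Finset.coe_filter, Set.mem_ofPred_eq]
        refine ⟨hSm b hb c hq.2, ?_⟩
        have : (φ (a, c)).1 * (b * c) + (φ (a, c)).2 = g a * (h a + b) := by
          simp only [φ]; field_simp; ring
        rw [this]; exact hVm a hq.1 b hb
      · intro b _ b' _ he
        exact mul_right_cancel₀ hc he)
  rw [hLc] at key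
  push_cast at key
  have hpos : (0:ℝ) < (A.card : ℝ) * C.card := by
    have := hA.card_pos; have := hC.card_pos; positivity
  refine le_of_mul_le_mul_left ?_ hpos
  calc _ = ((A.card : ℝ) * C.card * B.card) ^ 2 := by ring
    _ ≤ _ := key
    _ = _ := by ring

lemma rpow_pow (x : ℝ) (hx : 0 ≤ x) (a : ℝ) (n k : ℕ) (h : a * n = k) : (x ^ a) ^ n = x ^ k := by
  rw [← Real.rpow_natCast, ← Real.rpow_mul hx, h, Real.rpow_natCast]

lemma analytic (a α β γ M m : ℝ) (ha : 0 < a) (hα : 0 < α) (hβ : 0 < β) (hγ : 0 < γ) (hM : 0 < M)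
    (hm : 1 ≤ m) (hαm : a ≤ α * m)
    (H : α * γ * β ^ 2 ≤ 3000 * (M * M) * (√(α * γ * M) + (M + α + γ))) :
    (1/12000) * min (a ^ ((1:ℝ)/5) * β ^ ((4:ℝ)/5) * γ ^ ((1:ℝ)/5) / m ^ ((4:ℝ)/5))
            (min (β * γ ^ ((1:ℝ)/2) / m)
              (min (β * a ^ ((1:ℝ)/2) / m)
                (β ^ ((2:ℝ)/3) * γ ^ ((1:ℝ)/3) * a ^ ((1:ℝ)/3) / m ^ ((2:ℝ)/3)))) ≤ M := by
  have hm0 : 0 < m := by linarith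
  have fin : ∀ t : ℝ, t ≤ 12000 * M → (1/12000) * t ≤ M := fun t ht => by linarith
  by_cases c1 : α * γ * β ^ 2 ≤ 12000 * (M * M) * √(α * γ * M)
  · refine le_trans (mul_le_mul_of_nonneg_left (min_le_left _ _) (by norm_num)) (fin _ ?_)
    refine le_of_pow_le_pow_left₀ (n := 5) (by norm_num) (by positivity) ?_
    rw [div_pow, mul_pow, mul_pow, rpow_pow a ha.le _ 5 1 (by norm_num),
      rpow_pow β hβ.le _ 5 4 (by norm_num), rpow_pow γ hγ.le _ 5 1 (by norm_num),
      rpow_pow m hm0.le _ 5 4 (by norm_num), div_le_iff₀ (by positivity)]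
    have h2 : (α * γ * β ^ 2) ^ 2 ≤ (12000 * (M * M) * √(α * γ * M)) ^ 2 :=
      pow_le_pow_left₀ (by positivity) c1 2
    rw [mul_pow _ (√_), Real.sq_sqrt (by positivity)] at h2
    have h3 : α * γ * β ^ 4 ≤ 12000 ^ 2 * M ^ 5 := by
      refine le_of_mul_le_mul_left ?_ (by positivity : 0 < α * γ)
      nlinarith [h2]
    calc a ^ 1 * β ^ 4 * γ ^ 1 ≤ (α * m) * β ^ 4 * γ := by rw [pow_one, pow_one]; gcongr
      _ = (α * γ * β ^ 4) * m := by ring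
      _ ≤ (12000 ^ 2 * M ^ 5) * m := by gcongr
      _ ≤ (12000 ^ 5 * M ^ 5) * m ^ 4 := by
        gcongr
        · norm_num
        · norm_num
        · exact le_self_pow₀ hm (by norm_num)
      _ = _ := by ring
  by_cases c2 : α * γ * β ^ 2 ≤ 12000 * (M * M) * M
  · refine le_trans (mul_le_mul_of_nonneg_left ((min_le_right _ _).trans ((min_le_right _ _).trans
      (min_le_right _ _))) (by norm_num)) (fin _ ?_)
    refine le_of_pow_le_pow_left₀ (n := 3) (by norm_num) (by positivity) ?_
    rw [div_pow, mul_pow, mul_pow, rpow_pow a ha.le _ 3 1 (by norm_num),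
      rpow_pow β hβ.le _ 3 2 (by norm_num), rpow_pow γ hγ.le _ 3 1 (by norm_num),
      rpow_pow m hm0.le _ 3 2 (by norm_num), div_le_iff₀ (by positivity)]
    calc β ^ 2 * γ ^ 1 * a ^ 1 ≤ β ^ 2 * γ * (α * m) := by rw [pow_one, pow_one]; gcongr
      _ = (α * γ * β ^ 2) * m := by ring
      _ ≤ (12000 * (M * M) * M) * m := by gcongr
      _ = (12000 * M ^ 3) * m := by ring
      _ ≤ (12000 ^ 3 * M ^ 3) * m ^ 2 := by
        gcongr
        · norm_num
        · exact le_self_pow₀ hm (by norm_num)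
      _ = _ := by ring
  by_cases c3 : α * γ * β ^ 2 ≤ 12000 * (M * M) * α
  · refine le_trans (mul_le_mul_of_nonneg_left ((min_le_right _ _).trans
      (min_le_left _ _)) (by norm_num)) (fin _ ?_)
    refine le_of_pow_le_pow_left₀ (n := 2) (by norm_num) (by positivity) ?_
    rw [div_pow, mul_pow, rpow_pow γ hγ.le _ 2 1 (by norm_num), div_le_iff₀ (by positivity)]
    have h3 : γ * β ^ 2 ≤ 12000 * M ^ 2 := by
      refine le_of_mul_le_mul_left ?_ hα
      linarith
    calc β ^ 2 * γ ^ 1 = (γ * β ^ 2) * 1 := by ring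
      _ ≤ (12000 ^ 2 * M ^ 2) * m ^ 2 := by
        refine mul_le_mul (h3.trans ?_) (one_le_pow₀ hm) (by positivity) (by positivity)
        nlinarith [sq_nonneg M]
      _ = _ := by ring
  have c4 : α * γ * β ^ 2 ≤ 12000 * (M * M) * γ := by
    push Not at c1 c2 c3
    nlinarith
  · refine le_trans (mul_le_mul_of_nonneg_left ((min_le_right _ _).trans ((min_le_right _ _).trans
      (min_le_left _ _))) (by norm_num)) (fin _ ?_)
    refine le_of_pow_le_pow_left₀ (n := 2) (by norm_num) (by positivity) ?_
    rw [div_pow, mul_pow, rpow_pow a ha.le _ 2 1 (by norm_num), div_le_iff₀ (by positivity)]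
    have h3 : α * β ^ 2 ≤ 12000 * M ^ 2 := by
      refine le_of_mul_le_mul_left ?_ hγ
      linarith
    calc β ^ 2 * a ^ 1 ≤ β ^ 2 * (α * m) := by rw [pow_one]; gcongr
      _ = (α * β ^ 2) * m := by ring
      _ ≤ (12000 ^ 2 * M ^ 2) * m ^ 2 := by
        refine mul_le_mul (h3.trans ?_) (le_self_pow₀ hm (by norm_num)) (by positivity) (by positivity)
        nlinarith [sq_nonneg M]
      _ = _ := by ring

end PM


theorem pham_mojarrad_product :
    ∃ C > (0:ℝ),
      ∀ (p : ℕ) [Fact p.Prime], p ≠ 2 →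
      ∀ g h : ZMod p → ZMod p,
      (∀ x : ZMod p, x ≠ 0 → g x ≠ 0) → (∀ x : ZMod p, x ≠ 0 → h x ≠ 0) →
      ∀ A B Cs : Finset (ZMod p),
      A.Nonempty → B.Nonempty → Cs.Nonempty →
      (0:ZMod p) ∉ A → (0:ZMod p) ∉ B → (0:ZMod p) ∉ Cs →
      (A.card : ℝ) ≤ (p:ℝ) ^ ((5:ℝ)/8) →
      (B.card : ℝ) ≤ (p:ℝ) ^ ((5:ℝ)/8) →
      (Cs.card : ℝ) ≤ (p:ℝ) ^ ((5:ℝ)/8) →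
      C * min ((A.card:ℝ) ^ ((1:ℝ)/5) * (B.card:ℝ) ^ ((4:ℝ)/5) * (Cs.card:ℝ) ^ ((1:ℝ)/5) /
                ((mu (fun x => g x * h x) : ℕ) : ℝ) ^ ((4:ℝ)/5))
            (min ((B.card:ℝ) * (Cs.card:ℝ) ^ ((1:ℝ)/2) / ((mu (fun x => g x * h x) : ℕ) : ℝ))
              (min ((B.card:ℝ) * (A.card:ℝ) ^ ((1:ℝ)/2) / ((mu (fun x => g x * h x) : ℕ) : ℝ))
                ((B.card:ℝ) ^ ((2:ℝ)/3) * (Cs.card:ℝ) ^ ((1:ℝ)/3) * (A.card:ℝ) ^ ((1:ℝ)/3) /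
                  ((mu (fun x => g x * h x) : ℕ) : ℝ) ^ ((2:ℝ)/3)))) ≤
        max ((Finset.image₂ (fun x y => g x * (h x + y)) A B).card : ℝ) (((B * Cs).card : ℝ)) := by
  refine ⟨1/12000, by norm_num, ?_⟩
  intro p hp hp2 g h hg hh A B Cs hA hB hC hA0 hB0 hC0 hAp hBp hCp
  set m := mu (fun x => g x * h x) with hm
  set V := Finset.image₂ (fun x y => g x * (h x + y)) A B with hV
  have hfib : ∀ t : ZMod p, t ≠ 0 → (A.filter (fun x => g x * h x = t)).card ≤ m := by
    intro t ht
    have h1 : (A.filter (fun x => g x * h x = t)).card ≤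
        (Finset.univ.filter fun x : ZMod p => x ≠ 0 ∧ g x * h x = t).card := by
      apply Finset.card_le_card
      intro x hx
      simp only [Finset.mem_filter, Finset.mem_univ, true_and] at hx ⊢
      exact ⟨fun h0 => hA0 (h0 ▸ hx.1), hx.2⟩
    refine h1.trans ?_
    exact Finset.le_sup (f := fun t => (Finset.univ.filter fun x : ZMod p =>
      x ≠ 0 ∧ g x * h x = t).card) (by simp [ht])
  have hne : ∀ a ∈ A, a ≠ 0 := fun a ha h0 => hA0 (h0 ▸ ha)
  have hneC : ∀ a ∈ Cs, a ≠ 0 := fun a ha h0 => hC0 (h0 ▸ ha)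
  have hgh : ∀ a ∈ A, g a * h a ≠ 0 := fun a ha => mul_ne_zero (hg a (hne a ha)) (hh a (hne a ha))
  have hcard := Finset.card_le_mul_card_image (f := fun x => g x * h x) A m (by
    intro t ht
    obtain ⟨a, ha, rfl⟩ := Finset.mem_image.1 ht
    exact hfib _ (hgh a ha))
  have hm1 : 1 ≤ m := by
    by_contra h0
    have : m = 0 := by omega
    rw [this] at hcard
    have := hA.card_pos
    omega
  obtain ⟨A', hA'A, hinj, himg⟩ := Finset.exists_subset_injOn_image_eq_of_surjOn
    (f := fun x => g x * h x) (A : Set (ZMod p)) (A.image (fun x => g x * h x))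
    (by intro t ht; simpa using ht)
  have hA'A : A' ⊆ A := by exact_mod_cast hA'A
  have hcA' : (A.image (fun x => g x * h x)).card = A'.card := by
    rw [← himg, Finset.card_image_of_injOn hinj]
  rw [hcA'] at hcard
  have hA' : A'.Nonempty := by
    rw [← Finset.card_pos]
    have := hA.card_pos
    by_contra h0
    have h1 : A'.card = 0 := by omega
    rw [h1] at hcard
    omega
  have hp0 : (0:ℝ) < p := by exact_mod_cast hp.out.pos
  have hmR : (1:ℝ) ≤ m := by exact_mod_cast hm1
  have hac : (0:ℝ) < A.card := by exact_mod_cast hA.card_pos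
  have hbc : (0:ℝ) < B.card := by exact_mod_cast hB.card_pos
  have hcc : (0:ℝ) < Cs.card := by exact_mod_cast hC.card_pos
  have hac' : (0:ℝ) < A'.card := by exact_mod_cast hA'.card_pos
  set M : ℝ := max (V.card : ℝ) ((B * Cs).card : ℝ) with hM
  have hVM : (V.card : ℝ) ≤ M := le_max_left _ _
  have hSM : ((B * Cs).card : ℝ) ≤ M := le_max_right _ _
  have hM0 : 0 < M := by
    refine lt_of_lt_of_le ?_ hSM
    exact_mod_cast (hB.mul hC).card_pos
  by_cases hbig : (p:ℝ) ^ ((3:ℝ)/4) ≤ M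
  · refine le_trans ?_ hbig
    have hpp : 0 ≤ (p:ℝ) ^ ((3:ℝ)/4) := by positivity
    have h1 : (A.card:ℝ) ^ ((1:ℝ)/5) * (B.card:ℝ) ^ ((4:ℝ)/5) * (Cs.card:ℝ) ^ ((1:ℝ)/5) /
        (m : ℝ) ^ ((4:ℝ)/5) ≤ (p:ℝ) ^ ((3:ℝ)/4) := by
      have e1 : (1:ℝ) ≤ (m:ℝ) ^ ((4:ℝ)/5) := Real.one_le_rpow hmR (by norm_num)
      refine (div_le_self (by positivity) e1).trans ?_
      have e2 : (p:ℝ) ^ ((3:ℝ)/4) = ((p:ℝ) ^ ((5:ℝ)/8)) ^ ((1:ℝ)/5) *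
          ((p:ℝ) ^ ((5:ℝ)/8)) ^ ((4:ℝ)/5) * ((p:ℝ) ^ ((5:ℝ)/8)) ^ ((1:ℝ)/5) := by
        rw [← Real.rpow_mul hp0.le, ← Real.rpow_mul hp0.le, ← Real.rpow_add hp0,
          ← Real.rpow_add hp0]
        norm_num
      rw [e2]
      gcongr
    refine le_trans (mul_le_mul_of_nonneg_left ((min_le_left _ _).trans h1)
      (by norm_num : (0:ℝ) ≤ 1/12000)) ?_
    linarith
  push Not at hbig
  have hAA : (A'.card : ℝ) ≤ A.card := by exact_mod_cast Finset.card_le_card hA'A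
  have hN : A'.card * Cs.card * (B * Cs).card ≤ p ^ 2 := by
    have : (A'.card : ℝ) * Cs.card * (B * Cs).card ≤ (p:ℝ) ^ 2 := by
      have e2 : (p:ℝ) ^ 2 = (p:ℝ) ^ ((5:ℝ)/8) * (p:ℝ) ^ ((5:ℝ)/8) * (p:ℝ) ^ ((3:ℝ)/4) := by
        rw [← Real.rpow_add hp0, ← Real.rpow_add hp0, ← Real.rpow_natCast]
        norm_num
      rw [e2]
      have := hAA.trans hAp
      have := hSM.trans hbig.le
      gcongr
    exact_mod_cast this
  have key := PM.comb p g h A' B Cs (B * Cs) V (fun a ha => hg a (hne a (hA'A ha)))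
    (fun a ha b hb he => hinj ha hb he) hneC hA' hC
    (fun b hb c hc => Finset.mul_mem_mul hb hc)
    (fun a ha b hb => Finset.mem_image₂_of_mem (hA'A ha) hb) hN
  refine PM.analytic _ A'.card _ _ M _ hac hac' hbc hcc hM0 hmR ?_ (key.trans ?_)
  · have : (A.card : ℝ) ≤ m * A'.card := by exact_mod_cast hcard
    linarith
  · gcongr
end
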